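/- arXiv:1508.05813 — 2 statements merged into one kernel-verified Lean document; each statement's English description precedes it below -/
import Mathlib

section
/- Let (R,m) be a commutative Noetherian local ring and let C be a semidualizing R-module. If there exists a nonzero Cohen-Macaulay R-module of type 1 and of finite G_C-dimension, then R is a Cohen-Macaulay local ring. -/
/-!
Let `k` be the residue field, `t` the depth of `C`, and `d` the depth of `M`.

**Duality.** The `G_C`-dimension of `M` is at most `n = t - d` (`GC.of_depth`). Composition of
extension classes gives a map `Ext^d(L, M) → Hom(Ext^n(M, C), Ext^t(L, C))`, which is bijective for
all modules `L` of finite length (`GC.good`). For powers of `C` this holds because `C` has only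
homotheties as endomorphisms; a totally reflexive module embeds into some `C^a` with totally
reflexive cokernel, which gives the totally reflexive case (`TR.kap_bijective`); the general case
follows by dimension shifting along a resolution (`kap_step`).

**Reduction to finite length.** Dimension shifting also shows that the duality survives passing
from `M` to `M / y M` with `y` regular on `M`, with `(n, d)` replaced by `(n + 1, d - 1)`. Since `M`
is Cohen-Macaulay, a maximal regular sequence leads to `d = 0` with `M` of finite length and
`Hom(k, M)` of length one (`Good.reduce`).

**Counting.** Write `T(L) = Ext^t(L, C)`, so that `Hom(L, M) = Hom(T(M), T(L))`. For `L = k` the left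
side has length one, which makes `T(k)` simple and `T(M)` cyclic. For `L = M` one sees that every
annihilator of `T(M)` annihilates `M`. Hence `Hom(T(M), M)` surjects onto `M`; its length is at most
that of `T(M)`, because `Hom(k, M)` has length one, so `T(M)` is at least as long as `M`. As `T(k)`
is simple, `T` never increases lengths, and the long exact sequence of `0 → J → M → k → 0` leaves no
room for `Ext^{t+1}(k, C)`, which must vanish (`Good.count`). It follows that `Ext^t(-, C)` is exact
and preserves lengths on modules of finite length (`length_ext_eq`).

**Conclusion.** A regular element `x` on `C` is regular on `R = Hom(C, C)`, and
`R / x R = Hom(C, C / x C)`. Iterating `t` times produces `A = Hom(C, D)`, a quotient of `R` by a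
regular sequence, such that `Hom(-, D)` preserves lengths of `A`-modules of finite length. The
submodules `Hom(A / m^j A, D)` of the Noetherian module `Hom(A, D)` stabilize, so the lengths of
`A / m^j A` are eventually constant and `A` has finite length. Therefore `R` has dimension and depth
`t` (`cohenMacaulay_of_length`).

The definition `extM` uses derived functors of `Hom`, whereas composition products are
available for `Abelian.Ext`; `nonempty_extM_equiv` identifies the two as modules.
-/

open CategoryTheory

universe u

noncomputable section

variable (R : Type u) [CommRing R]

/-- The Ext module `Ext^i_R(M, N)`, via the derived functor definition. -/
noncomputable def extM (M N : Type u) [AddCommGroup M] [Module R M]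
    [AddCommGroup N] [Module R N] (i : ℕ) : ModuleCat R :=
  ((Ext R (ModuleCat.{u} R) i).obj (Opposite.op (ModuleCat.of R M))).obj (ModuleCat.of R N)

/-- The Tor module `Tor_i^R(M, N)`, via the derived functor definition. -/
noncomputable def torM (M N : Type u) [AddCommGroup M] [Module R M]
    [AddCommGroup N] [Module R N] (i : ℕ) : ModuleCat R :=
  ((Tor (ModuleCat.{u} R) i).obj (ModuleCat.of R M)).obj (ModuleCat.of R N)

/-- `C` is a semidualizing `R`-module: it is finitely generated, the homothety map
`R → Hom_R(C,C)` is bijective, and `Ext^i_R(C,C) = 0` for all `i > 0`. -/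
def IsSemidualizing (C : Type u) [AddCommGroup C] [Module R C] : Prop :=
  Module.Finite R C ∧
  Function.Bijective (fun r : R => r • (LinearMap.id : C →ₗ[R] C)) ∧
  ∀ i : ℕ, 0 < i → Subsingleton (extM R C C i)

/-- Injective dimension of a module, characterized via vanishing of Ext. -/
noncomputable def injDim (M : Type u) [AddCommGroup M] [Module R M] : ℕ∞ :=
  sInf {n : ℕ∞ | ∀ (N : Type u) (_ : AddCommGroup N) (_ : Module R N) (i : ℕ),
    n < i → Subsingleton (extM R N M i)}

/-- Flat dimension of a module, characterized via vanishing of Tor. -/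
noncomputable def flatDim (M : Type u) [AddCommGroup M] [Module R M] : ℕ∞ :=
  sInf {n : ℕ∞ | ∀ (N : Type u) (_ : AddCommGroup N) (_ : Module R N) (i : ℕ),
    n < i → Subsingleton (torM R N M i)}

/-- The length of a module, as the height of `⊤` in its submodule lattice. -/
noncomputable def mLength (M : Type u) [AddCommGroup M] [Module R M] : ℕ∞ :=
  Order.height (⊤ : Submodule R M)

/-- Depth of a module over a local ring: the least `i` with `Ext^i(k, M) ≠ 0`. -/
noncomputable def depth [IsLocalRing R] (M : Type u) [AddCommGroup M] [Module R M] : ℕ∞ :=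
  sInf {n : ℕ∞ | ∃ i : ℕ, n = i ∧ Nontrivial (extM R (IsLocalRing.ResidueField R) M i)}

/-- Depth, as a natural number. -/
noncomputable def depthNat [IsLocalRing R] (M : Type u) [AddCommGroup M] [Module R M] : ℕ :=
  sInf {i : ℕ | Nontrivial (extM R (IsLocalRing.ResidueField R) M i)}

/-- The type of a module: `r_R(M) = dim_k Ext^t_R(k, M)` where `t = depth_R(M)`. -/
noncomputable def rtype [IsLocalRing R] (M : Type u) [AddCommGroup M] [Module R M] : ℕ∞ :=
  mLength R (extM R (IsLocalRing.ResidueField R) M (depthNat R M))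

/-- A dualizing module: a semidualizing module of finite injective dimension. -/
def IsDualizing (C : Type u) [AddCommGroup C] [Module R C] : Prop :=
  IsSemidualizing R C ∧ injDim R C < ⊤

/-- A pointwise dualizing module: the localization at every maximal ideal is dualizing. -/
def IsPointwiseDualizing (C : Type u) [AddCommGroup C] [Module R C] : Prop :=
  IsSemidualizing R C ∧ ∀ (p : Ideal R) [p.IsPrime], p.IsMaximal →
    IsDualizing (Localization.AtPrime p) (LocalizedModule p.primeCompl C)

/-- Height of a prime ideal. -/
noncomputable def primeHeight (p : Ideal R) [hp : p.IsPrime] : ℕ∞ :=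
  Order.height (⟨p, hp⟩ : PrimeSpectrum R)

/-- A totally `C`-reflexive module. -/
def IsTotallyCReflexive (C M : Type u) [AddCommGroup C] [Module R C]
    [AddCommGroup M] [Module R M] : Prop :=
  Module.Finite R M ∧
  Function.Bijective ((LinearMap.id : (M →ₗ[R] C) →ₗ[R] (M →ₗ[R] C)).flip) ∧
  ∀ i : ℕ, 0 < i →
    Subsingleton (extM R M C i) ∧ Subsingleton (extM R (M →ₗ[R] C) C i)

/-- `G_C`-dimension of `M` is at most `n`. -/
def gcDimLE (C : Type u) [AddCommGroup C] [Module R C] :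
    ℕ → (M : Type u) → [AddCommGroup M] → [Module R M] → Prop
  | 0, M, _, _ => IsTotallyCReflexive R C M
  | n+1, M, _, _ => ∃ (G K : Type u) (_ : AddCommGroup G) (_ : Module R G)
      (_ : AddCommGroup K) (_ : Module R K) (f : K →ₗ[R] G) (g : G →ₗ[R] M),
      IsTotallyCReflexive R C G ∧ Function.Injective f ∧ Function.Surjective g ∧
      LinearMap.range f = LinearMap.ker g ∧ gcDimLE C n K

/-- `M` has finite `G_C`-dimension. -/
def HasFiniteGCDim (C M : Type u) [AddCommGroup C] [Module R C]
    [AddCommGroup M] [Module R M] : Prop :=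
  ∃ n : ℕ, gcDimLE R C n M

/-- A finitely generated module over a local ring is Cohen-Macaulay if its depth
equals its Krull dimension. -/
def IsCohenMacaulayModule [IsLocalRing R] (M : Type u) [AddCommGroup M] [Module R M] : Prop :=
  Module.Finite R M ∧ (depth R M : WithBot ℕ∞) = Order.krullDim (Module.support R M)

/-- The `S`-module structure on `Hom_R(S, M)` through the domain, for an `R`-algebra `S`. -/
instance homDomModule (S : Type u) [CommRing S] [Algebra R S]
    (M : Type u) [AddCommGroup M] [Module R M] : Module S (S →ₗ[R] M) where
  smul s f := f.comp (LinearMap.mul R S s)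
  one_smul f := by ext x; show f (1 * x) = f x; rw [one_mul]
  mul_smul s t f := by ext x; show f (s * t * x) = f (t * (s * x)); ring_nf
  smul_zero s := by ext x; rfl
  smul_add s f g := by ext x; rfl
  add_smul s t f := by
    ext x; show f ((s + t) * x) = f (s * x) + f (t * x); rw [add_mul, map_add]
  zero_smul f := by ext x; show f (0 * x) = 0; rw [zero_mul, map_zero]

/-- The Bass number `μ^i(p, M) = dim_{k(p)} Ext^i_{R_p}(k(p), M_p)`. -/
noncomputable def bassNumber (p : Ideal R) [p.IsPrime] (i : ℕ)
    (M : Type u) [AddCommGroup M] [Module R M] : ℕ∞ :=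
  mLength (Localization.AtPrime p)
    (extM (Localization.AtPrime p) (IsLocalRing.ResidueField (Localization.AtPrime p))
      (LocalizedModule p.primeCompl M) i)

/-- The dual Bass number `π_i(p, M) = dim_{k(p)} Tor_i^{R_p}(k(p), Hom_R(R_p, M))`. -/
noncomputable def dualBassNumber (p : Ideal R) [p.IsPrime] (i : ℕ)
    (M : Type u) [AddCommGroup M] [Module R M] : ℕ∞ :=
  mLength (Localization.AtPrime p)
    (torM (Localization.AtPrime p) (IsLocalRing.ResidueField (Localization.AtPrime p))
      (Localization.AtPrime p →ₗ[R] M) i)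

/-- A cotorsion module: `Ext^1_R(F, M) = 0` for every flat module `F`. -/
def IsCotorsion (M : Type u) [AddCommGroup M] [Module R M] : Prop :=
  ∀ (F : Type u) (_ : AddCommGroup F) (_ : Module R F), Module.Flat R F →
    Subsingleton (extM R F M 1)

/-- A `C`-flat module: one isomorphic to `C ⊗_R F` with `F` flat. -/
def IsCFlat (C M : Type u) [AddCommGroup C] [Module R C] [AddCommGroup M] [Module R M] : Prop :=
  ∃ (F : Type u) (_ : AddCommGroup F) (_ : Module R F), Module.Flat R F ∧
    Nonempty (M ≃ₗ[R] TensorProduct R C F)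

/-- A `C`-injective module: one isomorphic to `Hom_R(C, I)` with `I` injective. -/
def IsCInjective (C M : Type u) [AddCommGroup C] [Module R C]
    [AddCommGroup M] [Module R M] : Prop :=
  ∃ (I : Type u) (_ : AddCommGroup I) (_ : Module R I), Module.Injective R I ∧
    Nonempty (M ≃ₗ[R] (C →ₗ[R] I))

/-- `φ : F → M` is a flat cover of `M`. -/
def IsFlatCover (M F : Type u) [AddCommGroup M] [Module R M] [AddCommGroup F] [Module R F]
    (φ : F →ₗ[R] M) : Prop :=
  Module.Flat R F ∧
  (∀ (G : Type u) (_ : AddCommGroup G) (_ : Module R G), Module.Flat R G →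
    ∀ ψ : G →ₗ[R] M, ∃ h : G →ₗ[R] F, φ.comp h = ψ) ∧
  (∀ ψ : F →ₗ[R] F, φ.comp ψ = φ → Function.Bijective ψ)

/-- `E` is an injective hull of `N`: `E` is injective and contains `N` as an
essential submodule. -/
def IsInjectiveHull (N E : Type u) [AddCommGroup N] [Module R N]
    [AddCommGroup E] [Module R E] : Prop :=
  Module.Injective R E ∧ ∃ ι : N →ₗ[R] E, Function.Injective ι ∧
    ∀ K : Submodule R E, K ≠ ⊥ → K ⊓ LinearMap.range ι ≠ ⊥

end

namespace TypeOneCM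

open IsLocalRing

/-! ### Short exact sequences and vanishing of Ext -/

section Basics

variable {R : Type u} [CommRing R]

lemma shortExact_of {A B D : Type u} [AddCommGroup A] [Module R A] [AddCommGroup B] [Module R B]
    [AddCommGroup D] [Module R D] (f : A →ₗ[R] B) (g : B →ₗ[R] D)
    (hf : Function.Injective f) (hg : Function.Surjective g)
    (hfg : LinearMap.range f = LinearMap.ker g) :
    ∃ w, (ShortComplex.mk (ModuleCat.ofHom f) (ModuleCat.ofHom g) w).ShortExact := by
  refine ⟨?_, ?_⟩
  · ext x
    have : f x ∈ LinearMap.ker g := hfg ▸ LinearMap.mem_range_self f x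
    simpa using this
  · refine { exact := ?_, mono_f := ?_, epi_g := ?_ }
    · rw [ShortComplex.ShortExact.moduleCat_exact_iff_function_exact]
      exact LinearMap.exact_iff.mpr hfg.symm
    · exact (ModuleCat.mono_iff_injective _).mpr hf
    · exact (ModuleCat.epi_iff_surjective _).mpr hg

variable {S : ShortComplex (ModuleCat.{u} R)} (hS : S.ShortExact) (X : ModuleCat.{u} R)

include hS

lemma cov2 {n : ℕ} (h1 : Subsingleton (Abelian.Ext X S.X₁ n))
    (h3 : Subsingleton (Abelian.Ext X S.X₃ n)) : Subsingleton (Abelian.Ext X S.X₂ n) := by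
  refine subsingleton_of_forall_eq 0 fun x => ?_
  obtain ⟨y, rfl⟩ := Abelian.Ext.covariant_sequence_exact₂ X hS x (Subsingleton.elim _ _)
  rw [Subsingleton.elim y 0, Abelian.Ext.zero_comp]

lemma cov1 {n : ℕ} (h3 : Subsingleton (Abelian.Ext X S.X₃ n))
    (h2 : Subsingleton (Abelian.Ext X S.X₂ (n + 1))) :
    Subsingleton (Abelian.Ext X S.X₁ (n + 1)) := by
  refine subsingleton_of_forall_eq 0 fun x => ?_
  obtain ⟨y, rfl⟩ := Abelian.Ext.covariant_sequence_exact₁ X hS x (Subsingleton.elim _ _) rfl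
  rw [Subsingleton.elim y 0, Abelian.Ext.zero_comp]

lemma cov3 {n : ℕ} (h2 : Subsingleton (Abelian.Ext X S.X₂ n))
    (h1 : Subsingleton (Abelian.Ext X S.X₁ (n + 1))) :
    Subsingleton (Abelian.Ext X S.X₃ n) := by
  refine subsingleton_of_forall_eq 0 fun x => ?_
  obtain ⟨y, rfl⟩ := Abelian.Ext.covariant_sequence_exact₃ X hS x rfl (Subsingleton.elim _ _)
  rw [Subsingleton.elim y 0, Abelian.Ext.zero_comp]

lemma cov_inj {n : ℕ} (h3 : Subsingleton (Abelian.Ext X S.X₃ n))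
    (x : Abelian.Ext X S.X₁ (n + 1))
    (hx : x.comp (Abelian.Ext.mk₀ S.f) (add_zero _) = 0) : x = 0 := by
  obtain ⟨y, rfl⟩ := Abelian.Ext.covariant_sequence_exact₁ X hS x hx rfl
  rw [Subsingleton.elim y 0, Abelian.Ext.zero_comp]

lemma cov_inj_zero (x : Abelian.Ext X S.X₁ 0)
    (hx : x.comp (Abelian.Ext.mk₀ S.f) (add_zero _) = 0) : x = 0 := by
  have := hS.mono_f
  have h := Abelian.Ext.postcomp_mk₀_injective_of_mono X S.f
  apply h
  simpa using hx

lemma cov1_zero (h2 : Subsingleton (Abelian.Ext X S.X₂ 0)) :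
    Subsingleton (Abelian.Ext X S.X₁ 0) :=
  subsingleton_of_forall_eq 0 fun x => cov_inj_zero hS X x (Subsingleton.elim _ _)

lemma con2 {n : ℕ} (h1 : Subsingleton (Abelian.Ext S.X₁ X n))
    (h3 : Subsingleton (Abelian.Ext S.X₃ X n)) : Subsingleton (Abelian.Ext S.X₂ X n) := by
  refine subsingleton_of_forall_eq 0 fun x => ?_
  obtain ⟨y, rfl⟩ := Abelian.Ext.contravariant_sequence_exact₂ hS X x (Subsingleton.elim _ _)
  rw [Subsingleton.elim y 0, Abelian.Ext.comp_zero]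

lemma con1 {n : ℕ} (h2 : Subsingleton (Abelian.Ext S.X₂ X n))
    (h3 : Subsingleton (Abelian.Ext S.X₃ X (n + 1))) :
    Subsingleton (Abelian.Ext S.X₁ X n) := by
  refine subsingleton_of_forall_eq 0 fun x => ?_
  obtain ⟨y, rfl⟩ := Abelian.Ext.contravariant_sequence_exact₁ hS X x (add_comm 1 n)
    (Subsingleton.elim _ _)
  rw [Subsingleton.elim y 0, Abelian.Ext.comp_zero]

lemma con3 {n : ℕ} (h1 : Subsingleton (Abelian.Ext S.X₁ X n))
    (h2 : Subsingleton (Abelian.Ext S.X₂ X (n + 1))) :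
    Subsingleton (Abelian.Ext S.X₃ X (n + 1)) := by
  refine subsingleton_of_forall_eq 0 fun x => ?_
  obtain ⟨y, rfl⟩ := Abelian.Ext.contravariant_sequence_exact₃ hS X x
    (Subsingleton.elim _ _) (add_comm 1 n)
  rw [Subsingleton.elim y 0, Abelian.Ext.comp_zero]

lemma con3_zero (h2 : Subsingleton (Abelian.Ext S.X₂ X 0)) :
    Subsingleton (Abelian.Ext S.X₃ X 0) := by
  have := hS.epi_g
  have h := Abelian.Ext.precomp_mk₀_injective_of_epi X S.g
  exact h.subsingleton

end Basics

/-! ### Comparison of the two definitions of Ext -/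

section Compare

variable {R : Type u} [CommRing R]

lemma smul_extMk {X Y : ModuleCat.{u} R} (P : ProjectiveResolution X) {n : ℕ}
    (f : P.complex.X n ⟶ Y) (m : ℕ) (hm : n + 1 = m) (hf : P.complex.d m n ≫ f = 0) (r : R) :
    P.extMk (r • f) m hm (by simp [hf]) = r • P.extMk f m hm hf := by
  rw [Abelian.Ext.smul_eq_comp_mk₀, P.extMk_comp_mk₀]
  congr 1

lemma extMk_zero_eq_zero {X Y : ModuleCat.{u} R} (P : ProjectiveResolution X)
    (f : P.complex.X 0 ⟶ Y) (m : ℕ) (hm : 0 + 1 = m) (hf : P.complex.d m 0 ≫ f = 0)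
    (h : P.extMk f m hm hf = 0) : f = 0 := by
  rw [← P.extEquivCohomologyClass.apply_eq_iff_eq,
    ProjectiveResolution.extEquivCohomologyClass_extMk,
    ProjectiveResolution.extEquivCohomologyClass_zero,
    CochainComplex.HomComplex.CohomologyClass.mk_eq_zero_iff,
    CochainComplex.HomComplex.Cocycle.toSingleMk_mem_coboundaries_iff _ _ _ _ _ 1 (by simp)] at h
  obtain ⟨g, hg⟩ := h
  have hz : Limits.IsZero (P.cochainComplex.X 1) := by
    exact CochainComplex.isZero_of_isStrictlyLE P.cochainComplex 0 1 (by simp)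
  rw [hz.eq_of_src g 0, Limits.comp_zero] at hg
  rw [← cancel_epi (P.cochainComplexXIso (-((0 : ℕ) : ℤ)) 0 rfl).hom, ← hg, Limits.comp_zero]

/-- The module of cocycles of degree `n` computing `Ext^n(X, Y)`. -/
def cocyc {X : ModuleCat.{u} R} (P : ProjectiveResolution X) (Y : ModuleCat.{u} R) (n : ℕ) :
    Submodule R (P.complex.X n ⟶ Y) where
  carrier := {f | P.complex.d (n + 1) n ≫ f = 0}
  add_mem' := by
    intro a b ha hb
    simp only [Set.mem_ofPred_eq] at *
    rw [Preadditive.comp_add, ha, hb, add_zero]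
  zero_mem' := by simp
  smul_mem' := by
    intro c a ha
    simp only [Set.mem_ofPred_eq] at *
    rw [Linear.comp_smul, ha, smul_zero]

/-- The class in the derived-category Ext of a cocycle. -/
noncomputable def cocycToExt {X : ModuleCat.{u} R} (P : ProjectiveResolution X) (Y : ModuleCat.{u} R) (n : ℕ) :
    cocyc P Y n →ₗ[R] Abelian.Ext X Y n where
  toFun f := P.extMk f.1 (n + 1) rfl f.2
  map_add' _ _ := (P.add_extMk _ _ _ _ _ _).symm
  map_smul' r _ := smul_extMk P _ _ _ _ r

lemma cocycToExt_surjective {X : ModuleCat.{u} R} (P : ProjectiveResolution X)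
    (Y : ModuleCat.{u} R) (n : ℕ) : Function.Surjective (cocycToExt P Y n) := by
  intro α
  obtain ⟨f, hf, rfl⟩ := P.extMk_surjective α (n + 1) rfl
  exact ⟨⟨f, hf⟩, rfl⟩

lemma nonempty_homology_equiv {X : ModuleCat.{u} R} (P : ProjectiveResolution X)
    (Y : ModuleCat.{u} R) (n : ℕ) :
    Nonempty ((P.complex.linearYonedaObj R Y).homology n ≃ₗ[R] Abelian.Ext X Y n) := by
  let K := P.complex.linearYonedaObj R Y
  obtain ⟨i, hi'⟩ : ∃ i, i = (ComplexShape.up ℕ).prev n := ⟨_, rfl⟩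
  let e₁ : K.homology n ≅ (K.sc' i n (n + 1)).homology :=
    ShortComplex.homologyMapIso (K.isoSc' i n (n + 1) hi'.symm (by simp))
  let e₂ := (K.sc' i n (n + 1)).moduleCatHomologyIso
  refine ⟨(e₁ ≪≫ e₂).toLinearEquiv ≪≫ₗ ?_⟩
  refine ?_ ≪≫ₗ (cocycToExt P Y n).quotKerEquivOfSurjective (cocycToExt_surjective P Y n)
  have hker : LinearMap.ker (K.sc' i n (n + 1)).g.hom = cocyc P Y n := by
    ext f
    rfl
  refine Submodule.Quotient.equiv _ _ (LinearEquiv.ofEq _ _ hker) ?_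
  cases n with
  | zero =>
    have hi : i = 0 := by simpa using hi'
    have h0 : (K.sc' i 0 1).moduleCatToCycles = 0 := by
      have : (K.sc' i 0 1).f = 0 := K.shape _ _ (by simp [hi])
      ext x
      exact congr($(this).hom x)
    ext f
    constructor
    · rintro ⟨_, ⟨g, rfl⟩, rfl⟩
      erw [h0]
      simp
    · intro hf
      refine ⟨0, Submodule.zero_mem _, ?_⟩
      have := extMk_zero_eq_zero P f.1 1 rfl f.2 hf
      ext1
      rw [this]; simp
  | succ p =>
    have hi : i = p := by simpa using hi'
    subst hi
    ext f
    constructor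
    · rintro ⟨_, ⟨g, rfl⟩, rfl⟩
      exact (P.extMk_eq_zero_iff _ (i + 1 + 1) rfl
        (LinearEquiv.ofEq _ _ hker ((K.sc' i (i + 1) (i + 1 + 1)).moduleCatToCycles g)).2
        i rfl).mpr ⟨g, rfl⟩
    · intro hf
      obtain ⟨g, hg⟩ := (P.extMk_eq_zero_iff _ (i + 1 + 1) rfl f.2 i rfl).mp hf
      exact ⟨_, ⟨g, rfl⟩, Subtype.ext hg⟩

lemma nonempty_extM_equiv (M N : Type u) [AddCommGroup M] [Module R M]
    [AddCommGroup N] [Module R N] (i : ℕ) :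
    Nonempty (extM R M N i ≃ₗ[R] Abelian.Ext (ModuleCat.of R M) (ModuleCat.of R N) i) := by
  let P := projectiveResolution (ModuleCat.of R M)
  obtain ⟨e⟩ := nonempty_homology_equiv P (ModuleCat.of R N) i
  exact ⟨(P.isoExt i (ModuleCat.of R N)).toLinearEquiv ≪≫ₗ e⟩

end Compare

end TypeOneCM

namespace TypeOneCM

open IsLocalRing

/-! ### Finite length modules over a local ring -/

section FiniteLength

variable {R : Type u} [CommRing R] [IsLocalRing R]

lemma nonempty_simple_equiv (Q : Type u) [AddCommGroup Q] [Module R Q] [IsSimpleModule R Q] :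
    Nonempty (Q ≃ₗ[R] ResidueField R) := by
  obtain ⟨I, hI, ⟨e⟩⟩ := isSimpleModule_iff_quot_maximal.mp ‹IsSimpleModule R Q›
  rw [eq_maximalIdeal hI] at e
  exact ⟨e⟩

instance : IsSimpleModule R (ResidueField R) :=
  isSimpleModule_iff_quot_maximal.mpr ⟨maximalIdeal R, inferInstance, ⟨LinearEquiv.refl R _⟩⟩

/-- Dévissage: over a local ring a module of finite length is built from `0` by finitely many
extensions by the residue field. -/
lemma finiteLength_induction {P : ModuleCat.{u} R → Prop}
    (h0 : ∀ L : ModuleCat.{u} R, Subsingleton L → P L)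
    (hs : ∀ (A B : ModuleCat.{u} R) (f : A ⟶ B) (g : B ⟶ ModuleCat.of R (ResidueField R))
      (w : f ≫ g = 0), (ShortComplex.mk f g w).ShortExact → IsFiniteLength R A →
        IsFiniteLength R B → P A → P B)
    (L : ModuleCat.{u} R) (hL : IsFiniteLength R L) : P L := by
  suffices H : ∀ (M : Type u) [AddCommGroup M] [Module R M], IsFiniteLength R M →
      P (ModuleCat.of R M) from H L hL
  intro M _ _ hM
  induction hM with
  | of_subsingleton => exact h0 _ ‹_›
  | @of_simple_quotient M _ _ N _ hN ih =>
    obtain ⟨e⟩ := nonempty_simple_equiv (R := R) (M ⧸ N)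
    obtain ⟨w, hw⟩ := shortExact_of N.subtype (e.toLinearMap ∘ₗ N.mkQ) N.injective_subtype
      (e.surjective.comp N.mkQ_surjective) (by
        rw [LinearMap.ker_comp, LinearEquiv.ker, Submodule.comap_bot, Submodule.ker_mkQ,
          Submodule.range_subtype])
    exact hs _ _ _ _ w hw hN (.of_simple_quotient hN) ih

lemma exists_surjective_residueField (N : Type u) [AddCommGroup N] [Module R N]
    [Module.Finite R N] [Nontrivial N] :
    ∃ f : N →ₗ[R] ResidueField R, Function.Surjective f := by
  obtain ⟨m, hm⟩ := IsCoatomic.exists_coatom (Submodule R N)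
  have : IsSimpleModule R (N ⧸ m) := isSimpleModule_iff_isCoatom.mpr hm
  obtain ⟨e⟩ := nonempty_simple_equiv (R := R) (N ⧸ m)
  exact ⟨e.toLinearMap ∘ₗ m.mkQ, e.surjective.comp m.mkQ_surjective⟩

end FiniteLength

/-! ### Totally reflexive modules -/

section TotallyReflexive

variable {R : Type u} [CommRing R]

/-- Semidualizing modules, phrased with the derived-category Ext. -/
structure SD (C : ModuleCat.{u} R) : Prop where
  fin : Module.Finite R C
  homothety : Function.Bijective (fun r : R => r • (LinearMap.id : C →ₗ[R] C))
  ext_zero : ∀ i, Subsingleton (Abelian.Ext C C (i + 1))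

/-- Totally `C`-reflexive modules, phrased with the derived-category Ext. -/
structure TR (C G : ModuleCat.{u} R) : Prop where
  fin : Module.Finite R G
  bidual : Function.Bijective ((LinearMap.id : (G →ₗ[R] C) →ₗ[R] (G →ₗ[R] C)).flip)
  ext_zero : ∀ i, Subsingleton (Abelian.Ext G C (i + 1))
  dual_ext_zero : ∀ i, Subsingleton (Abelian.Ext (ModuleCat.of R (G →ₗ[R] C)) C (i + 1))

lemma subsingleton_extM_iff (M N : Type u) [AddCommGroup M] [Module R M]
    [AddCommGroup N] [Module R N] (i : ℕ) :
    Subsingleton (extM R M N i) ↔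
      Subsingleton (Abelian.Ext (ModuleCat.of R M) (ModuleCat.of R N) i) := by
  obtain ⟨e⟩ := nonempty_extM_equiv (R := R) M N i
  exact e.toEquiv.subsingleton_congr

lemma SD.of_isSemidualizing {C : Type u} [AddCommGroup C] [Module R C]
    (h : IsSemidualizing R C) : SD (ModuleCat.of R C) :=
  ⟨h.1, h.2.1, fun i => (subsingleton_extM_iff _ _ _).mp (h.2.2 (i + 1) i.succ_pos)⟩

lemma TR.of_isTotallyCReflexive {C G : Type u} [AddCommGroup C] [Module R C]
    [AddCommGroup G] [Module R G]
    (h : IsTotallyCReflexive R C G) : TR (ModuleCat.of R C) (ModuleCat.of R G) :=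
  ⟨h.1, h.2.1, fun i => (subsingleton_extM_iff _ _ _).mp (h.2.2 (i + 1) i.succ_pos).1,
    fun i => (subsingleton_extM_iff _ _ _).mp (h.2.2 (i + 1) i.succ_pos).2⟩

lemma projective_ext_zero {X Y : ModuleCat.{u} R} [Module.Projective R X] (i : ℕ) :
    Subsingleton (Abelian.Ext X Y (i + 1)) := by
  have : Projective X := (IsProjective.iff_projective (R := R) X).mp inferInstance
  exact Abelian.Ext.subsingleton_of_projective X Y i

/-- The `i`-th projection `C^a → C`. -/
def pr (C : ModuleCat.{u} R) {a : ℕ} (i : Fin a) : ModuleCat.of R (Fin a → C) ⟶ C :=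
  ModuleCat.ofHom (LinearMap.proj i)

/-- The `i`-th inclusion `C → C^a`. -/
def inc (C : ModuleCat.{u} R) {a : ℕ} (i : Fin a) : C ⟶ ModuleCat.of R (Fin a → C) :=
  ModuleCat.ofHom (LinearMap.single R (fun _ => C) i)

lemma sum_pr_inc (C : ModuleCat.{u} R) (a : ℕ) :
    ∑ i : Fin a, pr C i ≫ inc C i = 𝟙 _ := by
  ext x j
  simp [pr, inc, ModuleCat.hom_sum, Pi.single_apply]

lemma ext_eq_sum_right {C L : ModuleCat.{u} R} {a n : ℕ}
    (α : Abelian.Ext L (ModuleCat.of R (Fin a → C)) n) :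
    α = ∑ i, (α.comp (Abelian.Ext.mk₀ (pr C i)) (add_zero n)).comp
      (Abelian.Ext.mk₀ (inc C i)) (add_zero n) := by
  conv_lhs => rw [← Abelian.Ext.comp_mk₀_id α, ← sum_pr_inc, Abelian.Ext.mk₀_sum,
    Abelian.Ext.comp_sum]
  simp

lemma ext_eq_sum_left {C L : ModuleCat.{u} R} {a n : ℕ}
    (α : Abelian.Ext (ModuleCat.of R (Fin a → C)) L n) :
    α = ∑ i, (Abelian.Ext.mk₀ (pr C i)).comp
      ((Abelian.Ext.mk₀ (inc C i)).comp α (zero_add n)) (zero_add n) := by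
  conv_lhs => rw [← Abelian.Ext.mk₀_id_comp α, ← sum_pr_inc, Abelian.Ext.mk₀_sum,
    Abelian.Ext.sum_comp]
  simp

lemma ext_pow_zero {C L : ModuleCat.{u} R} {a n : ℕ} (h : Subsingleton (Abelian.Ext L C n)) :
    Subsingleton (Abelian.Ext L (ModuleCat.of R (Fin a → C)) n) := by
  refine subsingleton_of_forall_eq 0 fun α => ?_
  rw [ext_eq_sum_right α]
  refine Finset.sum_eq_zero fun i _ => ?_
  rw [Subsingleton.elim (α.comp (Abelian.Ext.mk₀ (pr C i)) (add_zero n)) 0,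
    Abelian.Ext.zero_comp]

/-- The dual of `C^a` is free, because `C` has only homotheties as endomorphisms. -/
lemma nonempty_dual_pow_equiv {C : ModuleCat.{u} R}
    (h : Function.Bijective (fun r : R => r • (LinearMap.id : C →ₗ[R] C))) (a : ℕ) :
    Nonempty ((Fin a → R) ≃ₗ[R] ((Fin a → C) →ₗ[R] C)) := by
  let e : R ≃ₗ[R] (C →ₗ[R] C) :=
    LinearEquiv.ofBijective (LinearMap.toSpanSingleton R (C →ₗ[R] C) LinearMap.id) h
  exact ⟨(LinearEquiv.piCongrRight fun _ => e) ≪≫ₗ LinearMap.lsum R (fun _ : Fin a => C) R⟩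

lemma exists_coeff {C : ModuleCat.{u} R}
    (h : Function.Bijective (fun r : R => r • (LinearMap.id : C →ₗ[R] C))) {a : ℕ}
    (φ : (Fin a → C) →ₗ[R] C) :
    ∃ r : Fin a → R, (∀ i c, φ (Pi.single i c) = r i • c) ∧
      φ = ∑ i, r i • LinearMap.proj i := by
  choose r hr using fun i => h.2 (φ ∘ₗ LinearMap.single R (fun _ => C) i)
  have h1 : ∀ i c, φ (Pi.single i c) = r i • c := fun i c => by
    have := congr($(hr i) c)
    simpa using this.symm
  refine ⟨r, h1, ?_⟩
  ext i c
  have h2 : ∀ j, r j • (Pi.single i c : Fin a → C) j = if j = i then r i • c else 0 := by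
    intro j
    by_cases hj : j = i
    · subst hj; simp
    · simp [hj]
  simp [h1, h2]

lemma TR.pow {C : ModuleCat.{u} R} (hC : SD C) (a : ℕ) :
    TR C (ModuleCat.of R (Fin a → C)) where
  fin := by
    have := hC.fin
    exact (inferInstance : Module.Finite R (Fin a → C))
  bidual := by
    constructor
    · intro x y hxy
      funext i
      exact congr($hxy (LinearMap.proj i))
    · intro Φ
      refine ⟨fun i => Φ (LinearMap.proj i), ?_⟩
      ext φ
      obtain ⟨r, -, hr⟩ := exists_coeff hC.homothety φ
      rw [hr]
      simp [map_sum]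
  ext_zero i := by
    refine subsingleton_of_forall_eq 0 fun α => ?_
    rw [ext_eq_sum_left α]
    refine Finset.sum_eq_zero fun j _ => ?_
    have := hC.ext_zero i
    rw [Subsingleton.elim ((Abelian.Ext.mk₀ (inc C j)).comp α (zero_add _)) 0,
      Abelian.Ext.comp_zero]
  dual_ext_zero i := by
    obtain ⟨e⟩ := nonempty_dual_pow_equiv hC.homothety a
    have : Module.Projective R ((Fin a → C) →ₗ[R] C) := Module.Projective.of_equiv e
    exact projective_ext_zero (X := ModuleCat.of R ((Fin a → C) →ₗ[R] C)) i

end TotallyReflexive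

end TypeOneCM

namespace TypeOneCM

open IsLocalRing

/-! ### Totally reflexive modules in short exact sequences -/

section TotallyReflexive

variable {R : Type u} [CommRing R]

/-- The dual of a right exact sequence is left exact; if the dual map is also surjective the
dual sequence is short exact. -/
lemma dual_shortExact {C : ModuleCat.{u} R} {S : ShortComplex (ModuleCat.{u} R)}
    (hS : S.ShortExact) (hsurj : Function.Surjective (S.f.hom.lcomp R C)) :
    ∃ w, (ShortComplex.mk (ModuleCat.ofHom (S.g.hom.lcomp R C))
      (ModuleCat.ofHom (S.f.hom.lcomp R C)) w).ShortExact := by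
  have hg : Function.Surjective S.g := hS.moduleCat_surjective_g
  refine shortExact_of _ _ ?_ hsurj ?_
  · intro φ ψ h
    ext x
    obtain ⟨y, rfl⟩ := hg x
    exact congr($h y)
  · apply le_antisymm
    · rintro _ ⟨φ, rfl⟩
      ext x
      have : S.g (S.f x) = 0 := by
        simp
      simp [this]
    · intro ψ hψ
      have hker : LinearMap.ker S.g.hom ≤ LinearMap.ker ψ := by
        intro y hy
        obtain ⟨x, rfl⟩ := (ShortComplex.ShortExact.moduleCat_exact_iff_function_exact S).mp
          hS.exact y |>.mp hy
        exact congr($hψ x)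
      let e := S.g.hom.quotKerEquivOfSurjective hg
      refine ⟨(LinearMap.ker S.g.hom).liftQ ψ hker ∘ₗ e.symm.toLinearMap, ?_⟩
      ext x
      have : e.symm (S.g x) = Submodule.Quotient.mk x := by
        rw [LinearEquiv.symm_apply_eq]; rfl
      simp [this]

/-- The obstruction to extending a map `S.X₁ → C` to `S.X₂` lies in `Ext^1(S.X₃, C)`. -/
lemma exists_extension {C : ModuleCat.{u} R} {S : ShortComplex (ModuleCat.{u} R)}
    (hS : S.ShortExact) (h : Subsingleton (Abelian.Ext S.X₃ C 1)) :
    Function.Surjective (S.f.hom.lcomp R C) := by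
  intro φ
  obtain ⟨y, hy⟩ := Abelian.Ext.contravariant_sequence_exact₁ hS C
    (Abelian.Ext.mk₀ (ModuleCat.ofHom φ)) (add_zero 1) (Subsingleton.elim _ _)
  obtain ⟨ψ, rfl⟩ := (Abelian.Ext.mk₀_bijective _ _).2 y
  rw [Abelian.Ext.mk₀_comp_mk₀] at hy
  have := (Abelian.Ext.mk₀_bijective _ _).1 hy
  exact ⟨ψ.hom, congr($(this).hom)⟩

/-- The quotient in a short exact sequence of totally reflexive modules is totally reflexive
as soon as the dual sequence remains exact. -/
lemma TR.quotient {C : ModuleCat.{u} R} {S : ShortComplex (ModuleCat.{u} R)}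
    (hS : S.ShortExact) (h1 : TR C S.X₁) (h2 : TR C S.X₂)
    (hsurj : Function.Surjective (S.f.hom.lcomp R C)) : TR C S.X₃ := by
  have hg : Function.Surjective S.g := hS.moduleCat_surjective_g
  obtain ⟨w, hD⟩ := dual_shortExact hS hsurj
  have hfin := h2.fin
  refine ⟨Module.Finite.of_surjective S.g.hom hg, ⟨?_, ?_⟩, ?_, ?_⟩
  · refine (injective_iff_map_eq_zero _).mpr ?_
    intro x hx
    replace hx : ∀ φ : S.X₃ →ₗ[R] C, φ x = 0 := fun φ => congr($hx φ)
    obtain ⟨b, rfl⟩ := hg x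
    let ev : (S.X₂ →ₗ[R] C) →ₗ[R] C := LinearMap.id.flip b
    have hker : LinearMap.ker (S.f.hom.lcomp R C) ≤ LinearMap.ker ev := by
      intro ψ hψ
      obtain ⟨φ, rfl⟩ := (ShortComplex.ShortExact.moduleCat_exact_iff_function_exact _).mp
        hD.exact ψ |>.mp hψ
      exact hx φ
    let e := (S.f.hom.lcomp R C).quotKerEquivOfSurjective hsurj
    obtain ⟨a, ha⟩ := h1.bidual.2
      ((LinearMap.ker (S.f.hom.lcomp R C)).liftQ ev hker ∘ₗ e.symm.toLinearMap)
    have hb : S.f a = b := by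
      apply h2.bidual.1
      ext β
      have h3 : e.symm (S.f.hom.lcomp R C β) = Submodule.Quotient.mk β := by
        rw [LinearEquiv.symm_apply_eq]; rfl
      have h4 := congr($ha (S.f.hom.lcomp R C β))
      rw [LinearMap.comp_apply, LinearEquiv.coe_coe, h3] at h4
      exact h4
    rw [← hb]
    simp
  · intro Φ
    obtain ⟨Φ', hΦ⟩ := exists_extension (C := C) hD (h1.dual_ext_zero 0) Φ
    obtain ⟨b, hb⟩ := h2.bidual.2 Φ'
    refine ⟨S.g b, ?_⟩
    rw [← hΦ, ← hb]
    rfl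
  · rintro (_ | i)
    · refine subsingleton_of_forall_eq 0 fun x => ?_
      have := h2.ext_zero 0
      obtain ⟨y, rfl⟩ := Abelian.Ext.contravariant_sequence_exact₃ hS C x
        (Subsingleton.elim _ _) (add_zero 1)
      obtain ⟨φ, rfl⟩ := (Abelian.Ext.mk₀_bijective _ _).2 y
      obtain ⟨ψ, hψ⟩ := hsurj φ.hom
      have : φ = S.f ≫ ModuleCat.ofHom ψ := by
        ext1; exact hψ.symm
      rw [this, ← Abelian.Ext.mk₀_comp_mk₀, ← Abelian.Ext.comp_assoc_of_second_deg_zero,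
        hS.extClass_comp, Abelian.Ext.zero_comp]
    · exact con3 hS C (h1.ext_zero i) (h2.ext_zero (i + 1))
  · intro i
    exact con1 hD C (h2.dual_ext_zero i) (h1.dual_ext_zero (i + 1))

/-- A totally reflexive module embeds into some `C^a` with totally reflexive cokernel. -/
lemma TR.exists_copresentation [IsNoetherianRing R] {C G : ModuleCat.{u} R} (hC : SD C)
    (hG : TR C G) : ∃ (a : ℕ) (G' : ModuleCat.{u} R) (f : G ⟶ ModuleCat.of R (Fin a → C))
      (g : ModuleCat.of R (Fin a → C) ⟶ G') (w : f ≫ g = 0),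
      (ShortComplex.mk f g w).ShortExact ∧ Function.Surjective (f.hom.lcomp R C) ∧ TR C G' := by
  have := hG.fin
  have := hC.fin
  obtain ⟨a, s, hs⟩ := Module.Finite.exists_fin (R := R) (M := G →ₗ[R] C)
  let f : G →ₗ[R] (Fin a → C) := LinearMap.pi s
  have hsurj : Function.Surjective (f.lcomp R C) := by
    rw [← LinearMap.range_eq_top, ← top_le_iff, ← hs, Submodule.span_le]
    rintro _ ⟨i, rfl⟩
    exact ⟨LinearMap.proj i, rfl⟩
  have hf : Function.Injective f := by
    intro x y hxy
    apply hG.bidual.1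
    ext φ
    obtain ⟨ψ, rfl⟩ := hsurj φ
    exact congr(ψ $hxy)
  obtain ⟨w, hw⟩ := shortExact_of f (LinearMap.range f).mkQ hf (Submodule.mkQ_surjective _)
    (Submodule.ker_mkQ _).symm
  exact ⟨a, _, _, _, w, hw, hsurj, TR.quotient (C := C) hw hG (TR.pow hC a) hsurj⟩

/-- Depth does not drop when `C` is replaced by a totally reflexive module `G`: induction along
the coresolution of `G` by powers of `C`. -/
lemma TR.ext_zero_of_lt [IsNoetherianRing R] {C : ModuleCat.{u} R} (hC : SD C)
    {L : ModuleCat.{u} R} {t : ℕ} (hL : ∀ i < t, Subsingleton (Abelian.Ext L C i)) (i : ℕ)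
    (hi : i < t) {G : ModuleCat.{u} R} (hG : TR C G) : Subsingleton (Abelian.Ext L G i) := by
  induction i generalizing G with
  | zero =>
    obtain ⟨a, G', f, g, w, hw, -, -⟩ := hG.exists_copresentation hC
    exact cov1_zero hw L (ext_pow_zero (hL 0 hi))
  | succ i ih =>
    obtain ⟨a, G', f, g, w, hw, -, hG'⟩ := hG.exists_copresentation hC
    exact cov1 hw L (ih (by lia) hG') (ext_pow_zero (hL _ hi))

/-- The composition pairing `Ext^d(L, M) → Hom(Ext^n(M, C), Ext^t(L, C))`. -/
noncomputable def kap (C L M : ModuleCat.{u} R) {d n t : ℕ} (h : d + n = t) :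
    Abelian.Ext L M d →ₗ[R] Abelian.Ext M C n →ₗ[R] Abelian.Ext L C t :=
  Abelian.Ext.bilinearCompOfLinear R L M C d n t h

lemma kap_apply (C L M : ModuleCat.{u} R) {d n t : ℕ} (h : d + n = t) (α : Abelian.Ext L M d)
    (β : Abelian.Ext M C n) : kap C L M h α β = α.comp β h := rfl

/-- The base case of the duality: the dual of `C^a` is free on the coordinate projections. -/
lemma kap_pow {C : ModuleCat.{u} R} (hC : SD C) (L : ModuleCat.{u} R) (a t : ℕ) :
    Function.Bijective (kap C L (ModuleCat.of R (Fin a → C)) (add_zero t)) := by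
  constructor
  · refine (injective_iff_map_eq_zero _).mpr ?_
    intro α hα
    rw [ext_eq_sum_right α]
    refine Finset.sum_eq_zero fun i _ => ?_
    have : α.comp (Abelian.Ext.mk₀ (pr C i)) (add_zero t) = 0 :=
      congr($hα (Abelian.Ext.mk₀ (pr C i)))
    rw [this, Abelian.Ext.zero_comp]
  · intro h
    refine ⟨∑ i, (h (Abelian.Ext.mk₀ (pr C i))).comp (Abelian.Ext.mk₀ (inc C i)) (add_zero t), ?_⟩
    ext β
    obtain ⟨φ, rfl⟩ := (Abelian.Ext.mk₀_bijective _ _).2 β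
    obtain ⟨r, hr1, hr2⟩ := exists_coeff hC.homothety φ.hom
    have h1 : ∀ i, inc C i ≫ φ = r i • 𝟙 C := by
      intro i
      ext c
      exact hr1 i c
    have h2 : φ = ∑ i, r i • pr C i := by
      ext1
      rw [hr2]
      simp [ModuleCat.hom_sum, pr]
    rw [kap_apply, Abelian.Ext.sum_comp]
    conv_rhs => rw [h2, Abelian.Ext.mk₀_sum, map_sum]
    refine Finset.sum_congr rfl fun i _ => ?_
    rw [Abelian.Ext.comp_assoc_of_second_deg_zero, Abelian.Ext.mk₀_comp_mk₀, h1,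
      ← Abelian.Ext.smul_eq_comp_mk₀, Abelian.Ext.mk₀_smul, map_smul]

lemma cov_inj' {S : ShortComplex (ModuleCat.{u} R)} (hS : S.ShortExact) (X : ModuleCat.{u} R)
    {t : ℕ} (h3 : ∀ i < t, Subsingleton (Abelian.Ext X S.X₃ i)) (x : Abelian.Ext X S.X₁ t)
    (hx : x.comp (Abelian.Ext.mk₀ S.f) (add_zero _) = 0) : x = 0 := by
  cases t with
  | zero => exact cov_inj_zero hS X x hx
  | succ t => exact cov_inj hS X (h3 t t.lt_succ_self) x hx

/-- For a totally reflexive module `G` and `L` with `Ext^i(L, C) = 0` for `i < t`, the module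
`Ext^t(L, G)` is `Hom(Hom(G, C), Ext^t(L, C))`. This is known for powers of `C` and follows for
`G` from the copresentation `0 → G → C^a → G' → 0`. -/
lemma TR.kap_bijective [IsNoetherianRing R] {C : ModuleCat.{u} R} (hC : SD C)
    {L : ModuleCat.{u} R} {t : ℕ} (hL : ∀ i < t, Subsingleton (Abelian.Ext L C i))
    {G : ModuleCat.{u} R} (hG : TR C G) :
    Function.Bijective (kap C L G (add_zero t)) := by
  have hinj : ∀ {G : ModuleCat.{u} R}, TR C G →
      Function.Injective (kap C L G (add_zero t)) := by
    intro G hG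
    obtain ⟨a, G', f, g, w, hw, hsurj, hG'⟩ := hG.exists_copresentation hC
    refine (injective_iff_map_eq_zero _).mpr ?_
    intro α hα
    refine cov_inj' hw L (fun i hi => hG'.ext_zero_of_lt hC hL i hi) α ?_
    apply (kap_pow hC L a t).1
    rw [map_zero]
    ext β
    rw [kap_apply, Abelian.Ext.comp_assoc_of_second_deg_zero]
    exact congr($hα _)
  refine ⟨hinj hG, fun h => ?_⟩
  obtain ⟨a, G', f, g, w, hw, hsurj, hG'⟩ := hG.exists_copresentation hC
  obtain ⟨α', hα'⟩ := (kap_pow hC L a t).2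
    (h ∘ₗ Abelian.Ext.precompOfLinear (Abelian.Ext.mk₀ f) R C (zero_add 0))
  have hα : ∀ β, α'.comp β (add_zero t) = h ((Abelian.Ext.mk₀ f).comp β (zero_add 0)) :=
    fun β => congr($hα' β)
  have h0 : α'.comp (Abelian.Ext.mk₀ g) (add_zero t) = 0 := by
    apply hinj hG'
    rw [map_zero]
    ext γ
    rw [kap_apply, Abelian.Ext.comp_assoc_of_second_deg_zero, hα,
      ← Abelian.Ext.comp_assoc_of_second_deg_zero, Abelian.Ext.mk₀_comp_mk₀, w]
    simp
  obtain ⟨α, rfl⟩ := Abelian.Ext.covariant_sequence_exact₂ L hw α' h0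
  refine ⟨α, ?_⟩
  ext β
  obtain ⟨φ, rfl⟩ := (Abelian.Ext.mk₀_bijective _ _).2 β
  obtain ⟨ψ, hψ⟩ := hsurj φ.hom
  have : φ = f ≫ ModuleCat.ofHom ψ := by
    ext1; exact hψ.symm
  rw [kap_apply, this, ← Abelian.Ext.mk₀_comp_mk₀, ← hα,
    Abelian.Ext.comp_assoc_of_second_deg_zero]

end TotallyReflexive

end TypeOneCM

namespace TypeOneCM

open IsLocalRing

/-! ### The composition pairing along a short exact sequence -/

section Pairing

variable {R : Type u} [CommRing R]

/-- Dimension shifting for the composition pairing: both sides are shifted by the class of the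
short exact sequence, and associativity of the composition makes the shifts compatible. -/
lemma kap_step {C L : ModuleCat.{u} R} {S : ShortComplex (ModuleCat.{u} R)} (hS : S.ShortExact)
    {d n t : ℕ} (h : d + (n + 1) = t) (h' : d + 1 + n = t)
    (h1 : Function.Bijective (kap C L S.X₁ h')) (h2 : Function.Injective (kap C L S.X₂ h'))
    (hGC : Subsingleton (Abelian.Ext S.X₂ C (n + 1)))
    (hLG : Subsingleton (Abelian.Ext L S.X₂ d)) :
    Function.Bijective (kap C L S.X₃ h) := by
  constructor
  · refine (injective_iff_map_eq_zero _).mpr fun α hα => ?_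
    have h0 : α.comp hS.extClass rfl = 0 := by
      apply h1.1
      rw [map_zero]
      ext γ
      rw [kap_apply, Abelian.Ext.comp_assoc (h₂₃ := add_comm 1 n) (h := by lia)]
      exact congr($hα _)
    obtain ⟨x, rfl⟩ := Abelian.Ext.covariant_sequence_exact₃ L hS α rfl h0
    rw [Subsingleton.elim x 0, Abelian.Ext.zero_comp]
  · intro u
    obtain ⟨α', hα'⟩ := h1.2
      (u ∘ₗ Abelian.Ext.precompOfLinear hS.extClass R C (add_comm 1 n))
    have hα : ∀ γ, α'.comp γ h' = u (hS.extClass.comp γ (add_comm 1 n)) :=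
      fun γ => congr($hα' γ)
    have h0 : α'.comp (Abelian.Ext.mk₀ S.f) (add_zero _) = 0 := by
      apply h2
      rw [map_zero]
      ext γ
      rw [kap_apply, Abelian.Ext.comp_assoc_of_second_deg_zero, hα,
        ← Abelian.Ext.comp_assoc_of_second_deg_zero, hS.extClass_comp]
      simp
    obtain ⟨α, rfl⟩ := Abelian.Ext.covariant_sequence_exact₁ L hS α' h0 rfl
    refine ⟨α, ?_⟩
    ext β
    obtain ⟨γ, rfl⟩ := Abelian.Ext.contravariant_sequence_exact₃ hS C β
      (Subsingleton.elim _ _) (add_comm 1 n)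
    rw [kap_apply, ← hα, Abelian.Ext.comp_assoc (h₂₃ := add_comm 1 n) (h := by lia)]

lemma ext_smul_eq_zero {L D : ModuleCat.{u} R} {n : ℕ} {r : R} (hr : ∀ x : L, r • x = 0)
    (α : Abelian.Ext L D n) : r • α = 0 := by
  have h : r • 𝟙 L = 0 := by
    ext x
    exact hr x
  rw [← Abelian.Ext.mk₀_id_comp α, ← Abelian.Ext.smul_comp, ← Abelian.Ext.mk₀_smul, h,
    Abelian.Ext.mk₀_zero, Abelian.Ext.zero_comp]

/-- If `x` is regular on `D` and kills `L`, then `Ext^s(L, D / x D)` is `Ext^{s+1}(L, D)`. -/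
lemma nonempty_reg_shift {L D : ModuleCat.{u} R} {s : ℕ} {x : R} (hx : IsSMulRegular D x)
    (hL : ∀ l : L, x • l = 0) (h0 : Subsingleton (Abelian.Ext L D s)) :
    Nonempty (Abelian.Ext L (ModuleCat.of R (QuotSMulTop x D)) s ≃ₗ[R]
      Abelian.Ext L D (s + 1)) := by
  have hS := hx.smulShortComplex_shortExact
  refine ⟨LinearEquiv.ofBijective
    (Abelian.Ext.postcompOfLinear hS.extClass R L (rfl : s + 1 = s + 1)) ⟨?_, ?_⟩⟩
  · refine (injective_iff_map_eq_zero _).mpr fun α hα => ?_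
    obtain ⟨y, rfl⟩ := Abelian.Ext.covariant_sequence_exact₃ L hS α rfl hα
    obtain rfl : y = 0 := Subsingleton.elim (α := Abelian.Ext L D s) y 0
    exact Abelian.Ext.zero_comp ..
  · intro β
    obtain ⟨α, hα⟩ := Abelian.Ext.covariant_sequence_exact₁ L hS β (by
      exact ((Abelian.Ext.smul_eq_comp_mk₀ (X := L) (Y := D) β x).symm.trans
        (ext_smul_eq_zero (D := D) hL β))) rfl
    exact ⟨α, hα⟩

end Pairing

section Local

variable {R : Type u} [CommRing R] [IsLocalRing R]

variable (R) in
/-- The residue field as an object of the category of modules. -/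
noncomputable abbrev kk : ModuleCat.{u} R := ModuleCat.of R (ResidueField R)

lemma maximalIdeal_smul_kk {r : R} (hr : r ∈ maximalIdeal R) (x : kk R) : r • x = 0 := by
  obtain ⟨y, rfl⟩ := residue_surjective x
  change residue R (r * y) = 0
  rw [residue_eq_zero_iff]
  exact Ideal.mul_mem_right _ _ hr

lemma isFiniteLength_kk : IsFiniteLength R (kk R) := by
  have : IsSimpleModule R (ResidueField R ⧸ (⊥ : Submodule R (ResidueField R))) :=
    IsSimpleModule.congr (Submodule.quotEquivOfEqBot ⊥ rfl)
  exact .of_simple_quotient (N := ⊥) .of_subsingleton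

lemma ext_zero_of_finiteLength {D : ModuleCat.{u} R} {i : ℕ}
    (h : Subsingleton (Abelian.Ext (kk R) D i)) (L : ModuleCat.{u} R) (hL : IsFiniteLength R L) :
    Subsingleton (Abelian.Ext L D i) := by
  refine finiteLength_induction (P := fun L => Subsingleton (Abelian.Ext L D i)) ?_ ?_ L hL
  · intro L hL
    refine subsingleton_of_forall_eq 0 fun α => ?_
    have : 𝟙 L = 0 := by ext x; exact Subsingleton.elim _ _
    rw [← Abelian.Ext.mk₀_id_comp α, this, Abelian.Ext.mk₀_zero, Abelian.Ext.zero_comp]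
  · intro A B f g w hw _ _ hA
    exact con2 hw D hA h

lemma exists_hom_ne_zero (N E : Type u) [AddCommGroup N] [Module R N] [AddCommGroup E]
    [Module R E] [Module.Finite R N] [Nontrivial N] [Nontrivial E]
    (hE : ∀ r ∈ maximalIdeal R, ∀ e : E, r • e = 0) : ∃ h : N →ₗ[R] E, h ≠ 0 := by
  obtain ⟨p, hp⟩ := exists_surjective_residueField (R := R) N
  obtain ⟨e, he⟩ := exists_ne (0 : E)
  let q : (R ⧸ maximalIdeal R) →ₗ[R] E :=
    (maximalIdeal R).liftQ (LinearMap.toSpanSingleton R E e) fun r hr => hE r hr e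
  have hq : q 1 = e := by
    change (1 : R) • e = e
    exact one_smul R e
  obtain ⟨n, hn⟩ := hp 1
  refine ⟨q ∘ₗ (p : N →ₗ[R] (R ⧸ maximalIdeal R)), fun h => he ?_⟩
  rw [← hq]
  rw [show (1 : R ⧸ maximalIdeal R) = p n from hn.symm]
  exact congr($h n)

lemma exists_regular [IsNoetherianRing R] (D : ModuleCat.{u} R) [Module.Finite R D]
    (h : Subsingleton (Abelian.Ext (kk R) D 0)) :
    ∃ x ∈ maximalIdeal R, IsSMulRegular D x := by
  have h' : Subsingleton (ResidueField R →ₗ[R] D) := by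
    refine ⟨fun a b => ?_⟩
    have := Subsingleton.elim (α := Abelian.Ext (kk R) D 0) (Abelian.Ext.mk₀ (ModuleCat.ofHom a))
      (Abelian.Ext.mk₀ (ModuleCat.ofHom b))
    exact congr(($((Abelian.Ext.mk₀_bijective _ _).1 this)).hom)
  obtain ⟨x, hx, hreg⟩ := IsSMulRegular.subsingleton_linearMap_iff.mp h'
  refine ⟨x, ?_, hreg⟩
  rw [Module.mem_annihilator] at hx
  have := hx 1
  rw [Algebra.smul_def, mul_one] at this
  exact (residue_eq_zero_iff x).mp this

end Local

end TypeOneCM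

namespace TypeOneCM

open IsLocalRing

/-! ### Modules of finite G-dimension -/

section GDim

lemma withBot_succ_inj {a : WithBot ℕ∞} {d : ℕ} (h : a + 1 = ((d + 1 : ℕ) : WithBot ℕ∞)) :
    a = d := by
  induction a with
  | bot => exact absurd h (by simp; exact (WithBot.coe_ne_bot (a := ((d + 1 : ℕ) : ℕ∞))).symm)
  | coe a =>
    induction a with
    | top =>
      have h' : ((⊤ + 1 : ℕ∞) : WithBot ℕ∞) = ((d + 1 : ℕ) : ℕ∞) := h
      have := WithBot.coe_injective h'
      rw [top_add] at this
      exact absurd this (ENat.top_ne_natCast _)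
    | coe a =>
      norm_cast at h ⊢
      lia

variable {R : Type u} [CommRing R]

/-- `GC C n M`: there is a resolution of `M` of length `n` by totally `C`-reflexive modules. -/
inductive GC (C : ModuleCat.{u} R) : ℕ → ModuleCat.{u} R → Prop
  | base {M : ModuleCat.{u} R} : TR C M → GC C 0 M
  | step {n : ℕ} {S : ShortComplex (ModuleCat.{u} R)} :
      S.ShortExact → TR C S.X₂ → GC C n S.X₁ → GC C (n + 1) S.X₃

lemma GC.of_gcDimLE {C : Type u} [AddCommGroup C] [Module R C] (n : ℕ) :
    ∀ (M : Type u) [AddCommGroup M] [Module R M], gcDimLE R C n M →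
      GC (ModuleCat.of R C) n (ModuleCat.of R M) := by
  induction n with
  | zero => exact fun M _ _ h => .base (.of_isTotallyCReflexive h)
  | succ n ih =>
    rintro M _ _ ⟨G, K, _, _, _, _, f, g, hG, hf, hg, hfg, hK⟩
    obtain ⟨w, hw⟩ := shortExact_of f g hf hg hfg
    exact .step hw (.of_isTotallyCReflexive hG) (ih K hK)

lemma TR.of_subsingleton (C Z : ModuleCat.{u} R) [Subsingleton Z] : TR C Z := by
  have h1 : Subsingleton (Z →ₗ[R] C) := inferInstance
  have h2 : Module.Projective R Z := inferInstance
  have h3 : Module.Projective R (Z →ₗ[R] C) := inferInstance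
  refine ⟨inferInstance, ⟨fun _ _ _ => Subsingleton.elim _ _, fun Φ => ⟨0, ?_⟩⟩,
    fun i => projective_ext_zero i,
    fun i => projective_ext_zero (X := ModuleCat.of R (Z →ₗ[R] C)) i⟩
  ext φ
  rw [Subsingleton.elim φ 0]
  simp

lemma GC.of_TR {C M : ModuleCat.{u} R} (hM : TR C M) (n : ℕ) : GC C n M := by
  have hz : ∀ n, GC C n (ModuleCat.of R PUnit.{u + 1}) := by
    intro n
    have hP : TR C (ModuleCat.of R PUnit.{u + 1}) := TR.of_subsingleton C _
    induction n with
    | zero => exact .base hP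
    | succ n ih =>
      obtain ⟨w, hw⟩ := shortExact_of (R := R) (LinearMap.id : PUnit.{u + 1} →ₗ[R] PUnit.{u + 1})
        (LinearMap.id : PUnit.{u + 1} →ₗ[R] PUnit.{u + 1}) Function.injective_id
        Function.surjective_id (Subsingleton.elim _ _)
      exact .step hw hP ih
  cases n with
  | zero => exact .base hM
  | succ n =>
    obtain ⟨w, hw⟩ := shortExact_of (0 : PUnit.{u + 1} →ₗ[R] M) (LinearMap.id : M →ₗ[R] M)
      (fun _ _ _ => Subsingleton.elim _ _) Function.surjective_id (by simp)
    exact .step hw hM (hz n)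

variable [IsNoetherianRing R] [IsLocalRing R]

omit [IsNoetherianRing R] in
lemma exists_ext_hom_ne_zero {C : ModuleCat.{u} R} {t : ℕ}
    (ht : Nontrivial (Abelian.Ext (kk R) C t)) (N : Type u) [AddCommGroup N] [Module R N]
    [Module.Finite R N] [Nontrivial N] : ∃ h : N →ₗ[R] Abelian.Ext (kk R) C t, h ≠ 0 :=
  exists_hom_ne_zero N _ fun _ hr α => ext_smul_eq_zero (maximalIdeal_smul_kk hr) α

/-- If `0 → K → G → Q → 0` is exact with `K`, `G` totally reflexive and `Q` has no
`Ext^{t-1}(k, -)`, where `t` is the depth of `C`, then `Q` is totally reflexive: a nonzero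
`Ext^1(Q, C)` would give a nonzero class in the kernel of `Ext^t(k, K) → Ext^t(k, G)`. -/
lemma TR.of_depth {C : ModuleCat.{u} R} (hC : SD C) {t : ℕ}
    (hlt : ∀ i < t, Subsingleton (Abelian.Ext (kk R) C i))
    (ht : Nontrivial (Abelian.Ext (kk R) C t))
    {S : ShortComplex (ModuleCat.{u} R)} (hS : S.ShortExact) (h1 : TR C S.X₁) (h2 : TR C S.X₂)
    (h3 : ∀ i < t, Subsingleton (Abelian.Ext (kk R) S.X₃ i)) : TR C S.X₃ := by
  refine TR.quotient hS h1 h2 (exists_extension hS ?_)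
  by_contra hne
  rw [not_subsingleton_iff_nontrivial] at hne
  have := h2.fin
  have := hC.fin
  have : Module.Finite R S.X₃ := Module.Finite.of_surjective S.g.hom hS.moduleCat_surjective_g
  have : Module.Finite R (Abelian.Ext S.X₃ C 1) := ModuleCat.finite_ext _ _ _ _
  obtain ⟨q, hq⟩ := exists_ext_hom_ne_zero ht (Abelian.Ext S.X₃ C 1)
  obtain ⟨α, hα'⟩ := (h1.kap_bijective hC hlt).2
    (q ∘ₗ Abelian.Ext.precompOfLinear hS.extClass R C (add_zero 1))
  have hα : ∀ γ, α.comp γ (add_zero t) = q (hS.extClass.comp γ (add_zero 1)) :=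
    fun γ => congr($hα' γ)
  have h0 : α.comp (Abelian.Ext.mk₀ S.f) (add_zero t) = 0 := by
    apply (h2.kap_bijective hC hlt).1
    rw [map_zero]
    ext γ
    rw [kap_apply, Abelian.Ext.comp_assoc_of_second_deg_zero, hα,
      ← Abelian.Ext.comp_assoc_of_second_deg_zero, hS.extClass_comp]
    simp
  have hα0 := cov_inj' hS (kk R) h3 α h0
  refine hq (LinearMap.ext fun x => ?_)
  have := h2.ext_zero 0
  obtain ⟨γ, rfl⟩ := Abelian.Ext.contravariant_sequence_exact₃ hS C x (Subsingleton.elim _ _)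
    (add_zero 1)
  rw [← hα, hα0]
  simp

omit [IsNoetherianRing R] [IsLocalRing R] in
lemma syzygy_vanish {S : ShortComplex (ModuleCat.{u} R)} (hS : S.ShortExact) (X : ModuleCat.{u} R)
    {s : ℕ} (h2 : ∀ i < s + 1, Subsingleton (Abelian.Ext X S.X₂ i))
    (h3 : ∀ i < s, Subsingleton (Abelian.Ext X S.X₃ i)) :
    ∀ i < s + 1, Subsingleton (Abelian.Ext X S.X₁ i) := by
  rintro (_ | i) hi
  · exact cov1_zero hS X (h2 0 hi)
  · exact cov1 hS X (h3 i (by lia)) (h2 (i + 1) hi)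

lemma GC.TR_of_depth {C : ModuleCat.{u} R} (hC : SD C) {t : ℕ}
    (hlt : ∀ i < t, Subsingleton (Abelian.Ext (kk R) C i))
    (ht : Nontrivial (Abelian.Ext (kk R) C t)) {m : ℕ} {M : ModuleCat.{u} R} (hM : GC C m M)
    (h : ∀ i < t, Subsingleton (Abelian.Ext (kk R) M i)) : TR C M := by
  induction hM with
  | base hM => exact hM
  | step hS hG _ ih =>
    refine TR.of_depth hC hlt ht hS (ih fun i hi => ?_) hG h
    exact syzygy_vanish hS (kk R) (s := i) (fun j hj => hG.ext_zero_of_lt hC hlt j (by lia))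
      (fun j hj => h j (by lia)) i i.lt_succ_self

/-- The half of the Auslander-Buchsbaum equality that bounds the `G_C`-dimension of `M` by
`depth C - depth M`. -/
lemma GC.of_depth {C : ModuleCat.{u} R} (hC : SD C) {t : ℕ}
    (hlt : ∀ i < t, Subsingleton (Abelian.Ext (kk R) C i))
    (ht : Nontrivial (Abelian.Ext (kk R) C t)) (n : ℕ) (hn : n ≤ t) {m : ℕ}
    {M : ModuleCat.{u} R} (hM : GC C m M)
    (h : ∀ i < t - n, Subsingleton (Abelian.Ext (kk R) M i)) : GC C n M := by
  induction n generalizing m M with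
  | zero => exact .base (hM.TR_of_depth hC hlt ht h)
  | succ n ih =>
    cases hM with
    | base hM => exact .of_TR hM _
    | step hS hG hK =>
      refine .step hS hG (ih (by lia) hK ?_)
      have := syzygy_vanish hS (kk R) (s := t - (n + 1))
        (fun j hj => hG.ext_zero_of_lt hC hlt j (by lia)) h
      exact fun i hi => this i (by lia)

lemma exists_depth {C : ModuleCat.{u} R} (hC : SD C) {m : ℕ} {M : ModuleCat.{u} R}
    (hM : GC C m M) {d : ℕ} (hd : Nontrivial (Abelian.Ext (kk R) M d)) :
    ∃ t, (∀ i < t, Subsingleton (Abelian.Ext (kk R) C i)) ∧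
      Nontrivial (Abelian.Ext (kk R) C t) := by
  classical
  by_cases h : ∃ t, Nontrivial (Abelian.Ext (kk R) C t)
  · exact ⟨Nat.find h, fun i hi => not_nontrivial_iff_subsingleton.mp (Nat.find_min h hi),
      Nat.find_spec h⟩
  · exfalso
    have h' : ∀ t, Subsingleton (Abelian.Ext (kk R) C t) := fun t =>
      not_nontrivial_iff_subsingleton.mp fun ht => h ⟨t, ht⟩
    have hTR : ∀ {G}, TR C G → ∀ i, Subsingleton (Abelian.Ext (kk R) G i) := fun hG i =>
      hG.ext_zero_of_lt hC (fun j _ => h' j) i i.lt_succ_self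
    have : ∀ i, Subsingleton (Abelian.Ext (kk R) M i) := by
      clear hd
      induction hM with
      | base hM => exact hTR hM
      | step hS hG _ ih => exact fun i => cov3 hS (kk R) (hTR hG i) (ih (i + 1))
    exact not_subsingleton _ (this d)

lemma depth_le_of_GC {C : ModuleCat.{u} R} (hC : SD C) {t : ℕ}
    (hlt : ∀ i < t, Subsingleton (Abelian.Ext (kk R) C i))
    (ht : Nontrivial (Abelian.Ext (kk R) C t)) {m : ℕ} {M : ModuleCat.{u} R} (hM : GC C m M)
    [Nontrivial M] {d : ℕ} (hd : ∀ i < d, Subsingleton (Abelian.Ext (kk R) M i)) : d ≤ t := by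
  by_contra hdt
  have hTR : TR C M := hM.TR_of_depth hC hlt ht fun i hi => hd i (by lia)
  have hMfin := hTR.fin
  have := hC.fin
  have : Module.Finite R (Abelian.Ext M C 0) := ModuleCat.finite_ext _ _ _ _
  have h0 : Subsingleton (Abelian.Ext M C 0) := by
    by_contra hne
    rw [not_subsingleton_iff_nontrivial] at hne
    obtain ⟨q, hq⟩ := exists_ext_hom_ne_zero ht (Abelian.Ext M C 0)
    obtain ⟨α, rfl⟩ := (hTR.kap_bijective hC hlt).2 q
    have := hd t (by lia)
    rw [Subsingleton.elim α 0, map_zero] at hq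
    exact hq rfl
  obtain ⟨x, hx⟩ := exists_ne (0 : M)
  apply hx
  apply hTR.bidual.1
  ext φ
  have := (Abelian.Ext.mk₀_bijective M C).1
    (Subsingleton.elim (Abelian.Ext.mk₀ (ModuleCat.ofHom φ)) (Abelian.Ext.mk₀ 0))
  have h2 : φ = 0 := congr(($this).hom)
  rw [h2]
  simp

/-- The vanishing and duality properties of a module of depth `d` and `G_C`-dimension `n`, where
`d + n = t` is the depth of `C`. They are inherited by quotients by regular elements, although
the `G_C`-dimension itself is not tracked. -/
structure Good (C M : ModuleCat.{u} R) (t n d : ℕ) : Prop where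
  fin : Module.Finite R M
  add_eq : d + n = t
  ext_zero : ∀ i, n < i → Subsingleton (Abelian.Ext M C i)
  vanish : ∀ L : ModuleCat.{u} R, IsFiniteLength R L → ∀ i < d, Subsingleton (Abelian.Ext L M i)
  bij : ∀ L : ModuleCat.{u} R, IsFiniteLength R L → Function.Bijective (kap C L M add_eq)

/-- The duality climbs the resolution of `M` by dimension shifting, from totally reflexive modules,
where it is `TR.kap_bijective`. -/
lemma GC.good {C : ModuleCat.{u} R} (hC : SD C) {t : ℕ}
    (hlt : ∀ i < t, Subsingleton (Abelian.Ext (kk R) C i)) {n : ℕ} {M : ModuleCat.{u} R}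
    (hM : GC C n M) : ∀ {d : ℕ}, d + n = t → Good C M t n d := by
  have hL (L : ModuleCat.{u} R) (hL : IsFiniteLength R L) (i : ℕ) (hi : i < t) :=
    ext_zero_of_finiteLength (hlt i hi) L hL
  induction hM with
  | base hM =>
    rintro d rfl
    refine ⟨hM.fin, rfl, ?_, ?_, ?_⟩
    · intro i hi
      obtain ⟨j, rfl⟩ : ∃ j, i = j + 1 := ⟨i - 1, by lia⟩
      exact hM.ext_zero j
    · exact fun L h i hi => hM.ext_zero_of_lt hC (hL L h) i hi
    · exact fun L h => hM.kap_bijective hC (hL L h)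
  | @step n S hS hG hK ih =>
    intro d hd
    have hd' : d + 1 + n = t := by lia
    have hK' := ih hd'
    have hfin := hG.fin
    refine ⟨Module.Finite.of_surjective S.g.hom hS.moduleCat_surjective_g, hd, ?_, ?_, ?_⟩
    · intro i hi
      obtain ⟨j, rfl⟩ : ∃ j, i = j + 1 := ⟨i - 1, by lia⟩
      exact con3 hS C (hK'.ext_zero j (by lia)) (hG.ext_zero j)
    · intro L h i hi
      exact cov3 hS L (hG.ext_zero_of_lt hC (hL L h) i (by lia)) (hK'.vanish L h (i + 1) (by lia))
    · intro L h
      refine kap_step hS hd hd' (hK'.bij L h) ?_ (hG.ext_zero n)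
        (hG.ext_zero_of_lt hC (hL L h) d (by lia))
      cases n with
      | zero =>
        subst hd'
        exact (hG.kap_bijective hC (hL L h)).1
      | succ n =>
        have := hG.ext_zero_of_lt hC (hL L h) (d + 1) (by lia)
        exact Function.injective_of_subsingleton _

omit [IsNoetherianRing R] [IsLocalRing R] in
lemma Good.quotient {C M : ModuleCat.{u} R} {t n d : ℕ} (h : Good C M t n (d + 1)) {y : R}
    (hy : IsSMulRegular M y) : Good C (ModuleCat.of R (QuotSMulTop y M)) t (n + 1) d := by
  have hS := hy.smulShortComplex_shortExact
  have hd : d + (n + 1) = t := by have := h.add_eq; lia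
  have hfin := h.fin
  refine ⟨inferInstanceAs (Module.Finite R (QuotSMulTop y M)), hd, ?_, ?_, ?_⟩
  · intro i hi
    obtain ⟨j, rfl⟩ : ∃ j, i = j + 1 := ⟨i - 1, by lia⟩
    exact con3 hS C (h.ext_zero j (by lia)) (h.ext_zero (j + 1) (by lia))
  · intro L hL i hi
    exact cov3 hS L (h.vanish L hL i (by lia)) (h.vanish L hL (i + 1) (by lia))
  · intro L hL
    exact kap_step hS hd h.add_eq (h.bij L hL) (h.bij L hL).1 (h.ext_zero (n + 1) (by lia))
      (h.vanish L hL d (by lia))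

/-- Reduction modulo a maximal `M`-regular sequence: it turns a Cohen-Macaulay module of type `1`
into one of dimension zero, and keeps the duality. -/
lemma Good.reduce {C : ModuleCat.{u} R} {t : ℕ} (d : ℕ) :
    ∀ (n : ℕ) (M : ModuleCat.{u} R), Good C M t n d → Module.supportDim R M = d →
      Module.length R (Abelian.Ext (kk R) M d) = 1 →
      ∃ M' : ModuleCat.{u} R, Good C M' t t 0 ∧ Module.supportDim R M' = 0 ∧
        Module.length R (Abelian.Ext (kk R) M' 0) = 1 := by
  induction d with
  | zero =>
    intro n M h h1 h2
    obtain rfl : n = t := by have := h.add_eq; lia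
    exact ⟨M, h, by simpa using h1, h2⟩
  | succ d ih =>
    intro n M h h1 h2
    have hfin := h.fin
    obtain ⟨y, hym, hy⟩ := exists_regular M (h.vanish _ isFiniteLength_kk 0 d.succ_pos)
    obtain ⟨e⟩ := nonempty_reg_shift (L := kk R) hy (maximalIdeal_smul_kk hym)
      (h.vanish _ isFiniteLength_kk d (by lia))
    refine ih (n + 1) _ (h.quotient hy) ?_ (e.length_eq.trans h2)
    have := Module.supportDim_quotSMulTop_succ_eq_supportDim hy hym
    rw [h1] at this
    generalize Module.supportDim R (QuotSMulTop y M) = a at this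
    change a = _
    exact withBot_succ_inj this

end GDim

end TypeOneCM

namespace TypeOneCM

open IsLocalRing

/-! ### Lengths of Ext modules -/

section Length

variable {R : Type u} [CommRing R]

lemma length_le_add_of_exact {A B D : Type*} [AddCommGroup A] [Module R A] [AddCommGroup B]
    [Module R B] [AddCommGroup D] [Module R D] (f : A →ₗ[R] B) (g : B →ₗ[R] D)
    (h : ∀ b, g b = 0 → b ∈ LinearMap.range f) :
    Module.length R B ≤ Module.length R A + Module.length R D := by
  rw [Module.length_eq_add_of_exact (LinearMap.ker g).subtype g.rangeRestrict
    (Submodule.subtype_injective _) g.surjective_rangeRestrict (by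
      rw [LinearMap.exact_iff, LinearMap.ker_rangeRestrict, Submodule.range_subtype])]
  refine add_le_add ?_ (Module.length_le_of_injective _ (LinearMap.range g).injective_subtype)
  refine (Module.length_le_of_injective
    (Submodule.inclusion (p := LinearMap.ker g) (p' := LinearMap.range f) h)
    (Submodule.inclusion_injective _)).trans ?_
  exact Module.length_le_of_surjective _ f.surjective_rangeRestrict

section

variable {S : ShortComplex (ModuleCat.{u} R)} (hS : S.ShortExact) (D : ModuleCat.{u} R)

include hS

lemma length_eq_of_shortExact :
    Module.length R S.X₂ = Module.length R S.X₁ + Module.length R S.X₃ :=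
  Module.length_eq_add_of_exact S.f.hom S.g.hom hS.moduleCat_injective_f
    hS.moduleCat_surjective_g
    (by rw [LinearMap.exact_iff]; exact hS.exact.moduleCat_range_eq_ker.symm)

lemma length_ext_le_add (n : ℕ) : Module.length R (Abelian.Ext S.X₂ D n) ≤
    Module.length R (Abelian.Ext S.X₃ D n) + Module.length R (Abelian.Ext S.X₁ D n) := by
  refine length_le_add_of_exact
    (Abelian.Ext.precompOfLinear (Abelian.Ext.mk₀ S.g) R D (zero_add n))
    (Abelian.Ext.precompOfLinear (Abelian.Ext.mk₀ S.f) R D (zero_add n)) fun b hb => ?_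
  obtain ⟨y, hy⟩ := Abelian.Ext.contravariant_sequence_exact₂ hS D b hb
  exact ⟨y, hy⟩

lemma ext_g_injective (n : ℕ) (h : ∀ i < n, Subsingleton (Abelian.Ext S.X₁ D i)) :
    Function.Injective
      (Abelian.Ext.precompOfLinear (Abelian.Ext.mk₀ S.g) R D (zero_add n)) := by
  refine (injective_iff_map_eq_zero _).mpr fun α hα => ?_
  cases n with
  | zero =>
    have := hS.epi_g
    apply Abelian.Ext.precomp_mk₀_injective_of_epi D S.g
    refine Eq.trans hα ?_
    simp
  | succ n =>
    obtain ⟨y, rfl⟩ := Abelian.Ext.contravariant_sequence_exact₃ hS D α hα (add_comm 1 n)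
    have := h n n.lt_succ_self
    rw [Subsingleton.elim y 0, Abelian.Ext.comp_zero]

lemma length_ext_eq_add (n : ℕ) (h : ∀ i < n, Subsingleton (Abelian.Ext S.X₁ D i))
    (h3 : Subsingleton (Abelian.Ext S.X₃ D (n + 1))) :
    Module.length R (Abelian.Ext S.X₂ D n) =
      Module.length R (Abelian.Ext S.X₃ D n) + Module.length R (Abelian.Ext S.X₁ D n) := by
  refine Module.length_eq_add_of_exact
    (Abelian.Ext.precompOfLinear (Abelian.Ext.mk₀ S.g) R D (zero_add n))
    (Abelian.Ext.precompOfLinear (Abelian.Ext.mk₀ S.f) R D (zero_add n))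
    (ext_g_injective hS D n h) (fun x => ?_) (fun b => ⟨fun hb => ?_, ?_⟩)
  · obtain ⟨y, hy⟩ := Abelian.Ext.contravariant_sequence_exact₁ hS D x (add_comm 1 n)
      (Subsingleton.elim _ _)
    exact ⟨y, hy⟩
  · obtain ⟨y, hy⟩ := Abelian.Ext.contravariant_sequence_exact₂ hS D b hb
    exact ⟨y, hy⟩
  · rintro ⟨y, rfl⟩
    change (Abelian.Ext.mk₀ S.f).comp ((Abelian.Ext.mk₀ S.g).comp y (zero_add n)) (zero_add n) = 0
    rw [← Abelian.Ext.comp_assoc_of_second_deg_zero, Abelian.Ext.mk₀_comp_mk₀, S.zero]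
    simp

end

lemma ext_subsingleton_of_subsingleton {L D : ModuleCat.{u} R} [Subsingleton L] (n : ℕ) :
    Subsingleton (Abelian.Ext L D n) := by
  refine subsingleton_of_forall_eq 0 fun α => ?_
  have : 𝟙 L = 0 := by ext x; exact Subsingleton.elim _ _
  rw [← Abelian.Ext.mk₀_id_comp α, this, Abelian.Ext.mk₀_zero, Abelian.Ext.zero_comp]

variable [IsLocalRing R]

lemma length_kk : Module.length R (kk R) = 1 :=
  Module.length_eq_one_iff.mpr (inferInstanceAs (IsSimpleModule R (ResidueField R)))

lemma length_ext_le {D : ModuleCat.{u} R} {s : ℕ}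
    (h : Module.length R (Abelian.Ext (kk R) D s) ≤ 1) (L : ModuleCat.{u} R)
    (hL : IsFiniteLength R L) : Module.length R (Abelian.Ext L D s) ≤ Module.length R L := by
  refine finiteLength_induction
    (P := fun L => Module.length R (Abelian.Ext L D s) ≤ Module.length R L) ?_ ?_ L hL
  · intro L hL
    have := ext_subsingleton_of_subsingleton (L := L) (D := D) s
    rw [Module.length_eq_zero_iff.mpr this]
    exact bot_le
  · intro A B f g w hw _ _ hA
    refine (length_ext_le_add hw D s).trans ?_
    rw [length_eq_of_shortExact hw, add_comm]
    exact add_le_add hA (h.trans length_kk.ge)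

/-- If `s` is the depth of `D`, `Ext^s(k, D)` is simple and `Ext^{s+1}(k, D) = 0`, then `Ext^s(-, D)`
is exact on modules of finite length and preserves their lengths. -/
lemma length_ext_eq {D : ModuleCat.{u} R} {s : ℕ}
    (hlt : ∀ i < s, Subsingleton (Abelian.Ext (kk R) D i))
    (h : Module.length R (Abelian.Ext (kk R) D s) = 1)
    (h1 : Subsingleton (Abelian.Ext (kk R) D (s + 1))) (L : ModuleCat.{u} R)
    (hL : IsFiniteLength R L) : Module.length R (Abelian.Ext L D s) = Module.length R L := by
  refine finiteLength_induction
    (P := fun L => Module.length R (Abelian.Ext L D s) = Module.length R L) ?_ ?_ L hL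
  · intro L hL
    have := ext_subsingleton_of_subsingleton (L := L) (D := D) s
    rw [Module.length_eq_zero_iff.mpr this, Module.length_eq_zero_iff.mpr hL]
  · intro A B f g w hw hAfl _ hA
    refine (length_ext_eq_add hw D s (fun i hi => ext_zero_of_finiteLength (hlt i hi) A hAfl)
      h1).trans ?_
    rw [length_eq_of_shortExact hw, add_comm]
    exact congr_arg₂ _ hA (h.trans length_kk.symm)

omit [IsLocalRing R] in
lemma isFiniteLength_of_supportDim_eq_zero [IsNoetherianRing R] (M : Type u) [AddCommGroup M]
    [Module R M] [Module.Finite R M] (h : Module.supportDim R M = 0) : IsFiniteLength R M := by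
  rw [Module.supportDim_eq_ringKrullDim_quotient_annihilator] at h
  have : Ring.KrullDimLE 0 (R ⧸ Module.annihilator R M) := by
    rw [Ring.krullDimLE_iff]; simp [h]
  have : IsArtinianRing (R ⧸ Module.annihilator R M) :=
    IsNoetherianRing.isArtinianRing_of_krullDimLE_zero
  let := Module.quotientAnnihilator (R := R) (M := M)
  have : IsScalarTower R (R ⧸ Module.annihilator R M) M :=
    ⟨fun x y z => by
      obtain ⟨y, rfl⟩ := Ideal.Quotient.mk_surjective y
      change (x * y) • z = x • y • z
      exact mul_smul _ _ _⟩
  have : Module.Finite (R ⧸ Module.annihilator R M) M :=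
    Module.Finite.of_restrictScalars_finite R _ M
  have : IsFiniteLength (R ⧸ Module.annihilator R M) M :=
    isFiniteLength_iff_isNoetherian_isArtinian.mpr ⟨inferInstance, inferInstance⟩
  rw [← Module.length_ne_top_iff] at this ⊢
  rwa [Module.length_eq_of_surjective (S := R) (R := R ⧸ Module.annihilator R M)
    Ideal.Quotient.mk_surjective]

end Length

end TypeOneCM

namespace TypeOneCM

open IsLocalRing

/-! ### Counting lengths against a module of finite length and type one -/

section Counting

variable {R : Type u} [CommRing R]

lemma length_hom_eq (A B : ModuleCat.{u} R) :
    Module.length R (Abelian.Ext A B 0) = Module.length R (A →ₗ[R] B) :=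
  ((Abelian.Ext.linearEquiv₀ (R := R) (X := A) (Y := B)).trans
    (ModuleCat.homLinearEquiv (S := R))).length_eq

/-- A cyclic module surjects onto any cyclic submodule of a module with larger annihilator. -/
lemma exists_hom_apply_eq {N M : Type*} [AddCommGroup N] [Module R N] [AddCommGroup M]
    [Module R M] {g : N} (hg : Submodule.span R {g} = ⊤)
    (h : ∀ r : R, (∀ n : N, r • n = 0) → ∀ m : M, r • m = 0) (m : M) :
    ∃ f : N →ₗ[R] M, f g = m := by
  let f := LinearMap.toSpanSingleton R N g
  have hf : Function.Surjective f := by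
    rw [← LinearMap.range_eq_top, ← hg, LinearMap.span_singleton_eq_range]
  have hk : LinearMap.ker f ≤ LinearMap.ker (LinearMap.toSpanSingleton R M m) := by
    intro r hr
    have hr : r • g = 0 := hr
    refine h r (fun n => ?_) m
    obtain ⟨a, rfl⟩ := hf n
    change r • a • g = 0
    rw [smul_comm, hr, smul_zero]
  refine ⟨(LinearMap.ker f).liftQ _ hk ∘ₗ (f.quotKerEquivOfSurjective hf).symm.toLinearMap, ?_⟩
  have : (f.quotKerEquivOfSurjective hf).symm g = (LinearMap.ker f).mkQ 1 := by
    rw [LinearEquiv.symm_apply_eq]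
    change g = (1 : R) • g
    rw [one_smul]
  change (LinearMap.ker f).liftQ _ hk ((f.quotKerEquivOfSurjective hf).symm g) = m
  rw [this]
  change (1 : R) • m = m
  rw [one_smul]

lemma ext_succ_zero_of_length_le {S : ShortComplex (ModuleCat.{u} R)} (hS : S.ShortExact)
    {C : ModuleCat.{u} R} {t : ℕ} (h1 : IsFiniteLength R S.X₁) (h3 : Module.length R S.X₃ = 1)
    (hT3 : Module.length R (Abelian.Ext S.X₃ C t) ≤ 1)
    (hT2 : Module.length R S.X₂ ≤ Module.length R (Abelian.Ext S.X₂ C t))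
    (hT1 : Module.length R (Abelian.Ext S.X₁ C t) ≤ Module.length R S.X₁)
    (h0 : Subsingleton (Abelian.Ext S.X₂ C (t + 1))) :
    Subsingleton (Abelian.Ext S.X₃ C (t + 1)) := by
  let F := Abelian.Ext.precompOfLinear (Abelian.Ext.mk₀ S.f) R C (zero_add t)
  have hfin : Module.length R S.X₁ ≠ ⊤ := Module.length_ne_top_iff.mpr h1
  have hle : Module.length R (Abelian.Ext S.X₂ C t) ≤
      1 + Module.length R (LinearMap.range F) := by
    refine (length_le_add_of_exact
      (Abelian.Ext.precompOfLinear (Abelian.Ext.mk₀ S.g) R C (zero_add t))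
      F.rangeRestrict fun b hb => ?_).trans (add_le_add_left hT3 _)
    obtain ⟨y, hy⟩ := Abelian.Ext.contravariant_sequence_exact₂ hS C b congr(($hb).1)
    exact ⟨y, hy⟩
  rw [length_eq_of_shortExact hS, h3, add_comm] at hT2
  have hrange : Module.length R S.X₁ ≤ Module.length R (LinearMap.range F) :=
    (ENat.add_le_add_iff_left ENat.one_ne_top).mp (hT2.trans hle)
  have htop : LinearMap.range F = ⊤ := by
    by_contra hne
    have hT1' : IsFiniteLength R (Abelian.Ext S.X₁ C t) :=
      Module.length_ne_top_iff.mp (ne_top_of_le_ne_top hfin hT1)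
    obtain ⟨_, _⟩ := isFiniteLength_iff_isNoetherian_isArtinian.mp hT1'
    exact absurd (hT1.trans hrange) (not_le_of_gt (Submodule.length_lt hne))
  refine subsingleton_of_forall_eq 0 fun x => ?_
  obtain ⟨y, rfl⟩ := Abelian.Ext.contravariant_sequence_exact₃ hS C x
    (Subsingleton.elim _ _) (add_comm 1 t)
  obtain ⟨z, rfl⟩ := LinearMap.range_eq_top.mp htop y
  change hS.extClass.comp ((Abelian.Ext.mk₀ S.f).comp z (zero_add t)) _ = 0
  rw [← Abelian.Ext.comp_assoc_of_second_deg_zero, hS.extClass_comp]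
  simp

variable [IsLocalRing R]

/-- If `m` kills `E ≠ 0` and `Hom(N, E)` is simple, then `E` is simple and `N` is cyclic. -/
lemma cyclic_of_length_hom_eq_one {N E : Type u} [AddCommGroup N] [Module R N] [AddCommGroup E]
    [Module R E] [Module.Finite R N] (hE : ∀ r ∈ maximalIdeal R, ∀ e : E, r • e = 0)
    (h : Module.length R (N →ₗ[R] E) = 1) :
    Module.length R E = 1 ∧ ∃ g : N, Submodule.span R {g} = ⊤ := by
  have hsimple : IsSimpleModule R (N →ₗ[R] E) := Module.length_eq_one_iff.mp h
  have := hsimple.nontrivial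
  have hNn : Nontrivial N := by
    by_contra hN
    rw [not_nontrivial_iff_subsingleton] at hN
    exact not_subsingleton (N →ₗ[R] E) inferInstance
  have hEn : Nontrivial E := by
    by_contra hN
    rw [not_nontrivial_iff_subsingleton] at hN
    exact not_subsingleton (N →ₗ[R] E) inferInstance
  obtain ⟨p, hp⟩ := exists_surjective_residueField (R := R) N
  obtain ⟨g, hg⟩ := hp 1
  have hev : ∀ e : E, ∃ f : N →ₗ[R] E, f g = e := fun e => by
    let q : (R ⧸ maximalIdeal R) →ₗ[R] E :=
      (maximalIdeal R).liftQ (LinearMap.toSpanSingleton R E e) fun r hr => hE r hr e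
    refine ⟨q ∘ₗ (p : N →ₗ[R] (R ⧸ maximalIdeal R)), ?_⟩
    change q (p g) = e
    rw [show p g = (1 : R ⧸ maximalIdeal R) from hg]
    change (1 : R) • e = e
    exact one_smul R e
  constructor
  · refine le_antisymm ?_ (Order.one_le_iff_pos.mpr (Module.length_pos_iff.mpr hEn))
    rw [← h]
    exact Module.length_le_of_surjective (LinearMap.applyₗ g : (N →ₗ[R] E) →ₗ[R] E) hev
  · refine ⟨g, ?_⟩
    by_contra hne
    have : Nontrivial (N ⧸ Submodule.span R {g}) := Submodule.Quotient.nontrivial_iff.mpr hne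
    obtain ⟨φ, hφ⟩ := exists_hom_ne_zero (N ⧸ Submodule.span R {g}) E hE
    obtain ⟨e, he⟩ := exists_ne (0 : E)
    obtain ⟨ψ, hψ⟩ := hev e
    have hφ' : φ ∘ₗ (Submodule.span R {g}).mkQ ≠ 0 := fun h0 => hφ (by
      refine LinearMap.ext fun x => ?_
      obtain ⟨y, rfl⟩ := Submodule.mkQ_surjective _ x
      exact congr($h0 y))
    obtain ⟨r, hr⟩ := IsSimpleModule.toSpanSingleton_surjective R hφ' ψ
    apply he
    rw [← hψ, ← hr]
    change r • φ ((Submodule.span R {g}).mkQ g) = 0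
    have : (Submodule.span R {g}).mkQ g = 0 := by
      rw [Submodule.mkQ_apply, Submodule.Quotient.mk_eq_zero]
      exact Submodule.mem_span_singleton_self g
    rw [this, map_zero, smul_zero]

variable [IsNoetherianRing R]

/-- With `T(L) = Ext^t(L, C)` one has `Hom(L, M) = Hom(T(M), T(L))` for `L` of finite length. Taking
`L = k` shows that `T(k)` is simple and `T(M)` cyclic, and `L = M` that `T(M)` is faithful over
`R / ann M`. Comparing lengths, `T(M)` and `M` have the same length, which forces
`Ext^{t+1}(k, C) = 0` in the long exact sequence of `0 → J → M → k → 0`. -/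
lemma Good.count {C M : ModuleCat.{u} R} {t : ℕ} (hC : Module.Finite R C) (hM : Good C M t t 0)
    (hdim : Module.supportDim R M = 0) (htype : Module.length R (Abelian.Ext (kk R) M 0) = 1) :
    Module.length R (Abelian.Ext (kk R) C t) = 1 ∧
      Subsingleton (Abelian.Ext (kk R) C (t + 1)) := by
  have hMf := hM.fin
  have hMfl : IsFiniteLength R M := isFiniteLength_of_supportDim_eq_zero M hdim
  have hNf : Module.Finite R (Abelian.Ext M C t) := ModuleCat.finite_ext _ _ _ _
  have h1 : Module.length R (Abelian.Ext M C t →ₗ[R] Abelian.Ext (kk R) C t) = 1 :=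
    (LinearEquiv.ofBijective _ (hM.bij _ isFiniteLength_kk)).length_eq.symm.trans htype
  obtain ⟨hE, g, hg⟩ := cyclic_of_length_hom_eq_one
    (fun r hr α => ext_smul_eq_zero (maximalIdeal_smul_kk hr) α) h1
  refine ⟨hE, ?_⟩
  have hann : ∀ r : R, (∀ n : Abelian.Ext M C t, r • n = 0) → ∀ m : M, r • m = 0 := by
    intro r hr m
    have h0 : r • Abelian.Ext.mk₀ (𝟙 M) = 0 := by
      apply (hM.bij M hMfl).1
      ext β
      rw [map_smul, map_zero, LinearMap.smul_apply, kap_apply, Abelian.Ext.mk₀_id_comp, hr]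
      rfl
    rw [← Abelian.Ext.mk₀_smul, ← Abelian.Ext.mk₀_zero] at h0
    have := (Abelian.Ext.mk₀_bijective _ _).1 h0
    exact congr(($this).hom m)
  have hle := length_ext_le hE.le
  have hNfl : IsFiniteLength R (Abelian.Ext M C t) := by
    rw [← Module.length_ne_top_iff] at hMfl ⊢
    exact ne_top_of_le_ne_top hMfl (hle M (Module.length_ne_top_iff.mp hMfl))
  have hMN : Module.length R M ≤ Module.length R (Abelian.Ext M C t) := by
    refine le_trans ?_ (length_ext_le htype.le (ModuleCat.of R (Abelian.Ext M C t)) hNfl)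
    rw [length_hom_eq]
    exact Module.length_le_of_surjective
      (LinearMap.applyₗ g : (Abelian.Ext M C t →ₗ[R] M) →ₗ[R] M) (exists_hom_apply_eq hg hann)
  have hMn : Nontrivial M := by
    by_contra hne
    rw [not_nontrivial_iff_subsingleton] at hne
    rw [Module.supportDim_eq_bot_of_subsingleton] at hdim
    exact absurd hdim (by simp)
  obtain ⟨p, hp⟩ := exists_surjective_residueField (R := R) M
  obtain ⟨w, hw⟩ := shortExact_of (LinearMap.ker p).subtype p (Submodule.subtype_injective _) hp
    (by simp)
  have hJ : IsFiniteLength R (LinearMap.ker p) := by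
    rw [← Module.length_ne_top_iff] at hMfl ⊢
    exact ne_top_of_le_ne_top hMfl (Module.length_le_of_injective _
      (Submodule.subtype_injective (LinearMap.ker p)))
  exact ext_succ_zero_of_length_le hw hJ length_kk hE.le hMN
    (hle (ModuleCat.of R (LinearMap.ker p)) hJ) (hM.ext_zero (t + 1) t.lt_succ_self)

end Counting

end TypeOneCM

namespace TypeOneCM

open IsLocalRing

/-! ### Detecting Cohen-Macaulayness by length-preserving Ext modules -/

section Detect

open scoped Pointwise

variable {R : Type u} [CommRing R] [IsLocalRing R]

lemma supportDim_eq_zero_of_pow {M : Type u} [AddCommGroup M] [Module R M] [Nontrivial M] {j : ℕ}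
    (h : maximalIdeal R ^ j ≤ Module.annihilator R M) : Module.supportDim R M = 0 := by
  have hs : ∀ p ∈ Module.support R M, p = closedPoint R := fun p hp => by
    ext1
    have h1 := h.trans (Module.annihilator_le_of_mem_support hp)
    exact le_antisymm (le_maximalIdeal p.isPrime.ne_top) (Ideal.IsPrime.le_of_pow_le h1)
  have : Subsingleton (Module.support R M) :=
    ⟨fun a b => Subtype.ext ((hs a a.2).trans (hs b b.2).symm)⟩
  have : Nonempty (Module.support R M) := Module.nonempty_support_of_nontrivial.to_subtype
  exact Order.krullDim_eq_zero

variable [IsNoetherianRing R]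

lemma isFiniteLength_of_pow {M : Type u} [AddCommGroup M] [Module R M] [Module.Finite R M] {j : ℕ}
    (h : maximalIdeal R ^ j ≤ Module.annihilator R M) : IsFiniteLength R M := by
  rcases subsingleton_or_nontrivial M with _ | _
  · exact .of_subsingleton
  · exact isFiniteLength_of_supportDim_eq_zero M (supportDim_eq_zero_of_pow h)

omit [IsNoetherianRing R] in
lemma pow_le_annihilator_quotient (A : Type u) [AddCommGroup A] [Module R A] (j : ℕ) :
    maximalIdeal R ^ j ≤ Module.annihilator R (A ⧸ (maximalIdeal R ^ j • (⊤ : Submodule R A))) := by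
  intro r hr
  rw [Module.mem_annihilator]
  intro q
  obtain ⟨a, rfl⟩ := Submodule.mkQ_surjective _ q
  rw [← map_smul, Submodule.mkQ_apply, Submodule.Quotient.mk_eq_zero]
  exact Submodule.smul_mem_smul hr trivial

/-- If `Hom(-, D)` preserves lengths on the quotients `A / m^j A` then `A` has finite length: the
submodules `Hom(A / m^j A, D)` of the Noetherian module `Hom(A, D)` stabilize, hence so does the
length of `A / m^j A`. -/
lemma exists_pow_le_annihilator (A D : Type u) [AddCommGroup A] [Module R A] [AddCommGroup D]
    [Module R D] [Module.Finite R A] (hfin : IsNoetherian R (A →ₗ[R] D))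
    (h : ∀ j, Module.length R ((A ⧸ (maximalIdeal R ^ j • (⊤ : Submodule R A))) →ₗ[R] D) =
      Module.length R (A ⧸ (maximalIdeal R ^ j • (⊤ : Submodule R A)))) :
    ∃ j, maximalIdeal R ^ j ≤ Module.annihilator R A := by
  let P (j : ℕ) : Submodule R A := maximalIdeal R ^ j • ⊤
  have hP {i j : ℕ} (hij : i ≤ j) : P j ≤ P i :=
    Submodule.smul_mono_left (Ideal.pow_le_pow_right hij)
  let F (j : ℕ) : ((A ⧸ P j) →ₗ[R] D) →ₗ[R] (A →ₗ[R] D) := LinearMap.lcomp R D (P j).mkQ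
  have hF (j : ℕ) : Function.Injective (F j) := fun a b hab => by
    refine LinearMap.ext fun x => ?_
    obtain ⟨y, rfl⟩ := (P j).mkQ_surjective x
    exact congr($hab y)
  let S : ℕ →o Submodule R (A →ₗ[R] D) :=
    ⟨fun j => LinearMap.range (F j), fun i j hij => by
      rintro _ ⟨φ, rfl⟩
      exact ⟨φ ∘ₗ Submodule.factor (hP hij), rfl⟩⟩
  obtain ⟨j, hj⟩ := monotone_stabilizes_iff_noetherian.mpr hfin S
  have hS (i : ℕ) : Module.length R (S i) = Module.length R (A ⧸ P i) :=
    (LinearEquiv.ofInjective (F i) (hF i)).length_eq.symm.trans (h i)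
  have hlen : Module.length R (A ⧸ P (j + 1)) = Module.length R (A ⧸ P j) := by
    rw [← hS, ← hS, hj (j + 1) j.le_succ]
  have hfl : IsFiniteLength R (A ⧸ P (j + 1)) :=
    isFiniteLength_of_pow (pow_le_annihilator_quotient A (j + 1))
  have hle : P j ≤ P (j + 1) := by
    obtain ⟨_, _⟩ := isFiniteLength_iff_isNoetherian_isArtinian.mp hfl
    have hker : LinearMap.ker (Submodule.factor (hP j.le_succ)) = ⊥ := by
      by_contra hne
      have h1 := Submodule.length_quotient_lt _ hne
      rw [((Submodule.factor (hP j.le_succ)).quotKerEquivOfSurjective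
        (Submodule.factor_surjective _)).length_eq, hlen] at h1
      exact lt_irrefl _ h1
    intro a ha
    have : (P (j + 1)).mkQ a ∈ LinearMap.ker (Submodule.factor (hP j.le_succ)) := by
      rw [LinearMap.mem_ker]
      change (P j).mkQ a = 0
      rwa [Submodule.mkQ_apply, Submodule.Quotient.mk_eq_zero]
    rw [hker, Submodule.mem_bot] at this
    rwa [Submodule.mkQ_apply, Submodule.Quotient.mk_eq_zero] at this
  refine ⟨j, fun r hr => ?_⟩
  have hbot : P j = ⊥ := by
    refine Submodule.eq_bot_of_le_smul_of_le_jacobson_bot (maximalIdeal R) _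
      (IsNoetherian.noetherian _) ?_ (maximalIdeal_le_jacobson _)
    rw [← Submodule.mul_smul, ← pow_succ']
    exact hle
  rw [Module.mem_annihilator]
  intro a
  rw [← Submodule.mem_bot R, ← hbot]
  exact Submodule.smul_mem_smul hr trivial

omit [IsLocalRing R] [IsNoetherianRing R] in
lemma exists_hom_lift {S : ShortComplex (ModuleCat.{u} R)} (hS : S.ShortExact)
    {C : ModuleCat.{u} R} (h : Subsingleton (Abelian.Ext C S.X₁ 1)) (φ : C ⟶ S.X₃) :
    ∃ y : C ⟶ S.X₂, y ≫ S.g = φ := by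
  obtain ⟨y, hy⟩ := Abelian.Ext.covariant_sequence_exact₃ C hS (Abelian.Ext.mk₀ φ)
    (zero_add 1) (Subsingleton.elim _ _)
  obtain ⟨y, rfl⟩ := (Abelian.Ext.mk₀_bijective _ _).2 y
  rw [Abelian.Ext.mk₀_comp_mk₀] at hy
  exact ⟨y, (Abelian.Ext.mk₀_bijective _ _).1 hy⟩

omit [IsLocalRing R] [IsNoetherianRing R] in
lemma exists_hom_factor {S : ShortComplex (ModuleCat.{u} R)} (hS : S.ShortExact)
    {C : ModuleCat.{u} R} (φ : C ⟶ S.X₂) (hφ : φ ≫ S.g = 0) :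
    ∃ y : C ⟶ S.X₁, y ≫ S.f = φ := by
  have := hS.mono_f
  exact ⟨hS.exact.lift φ hφ, hS.exact.lift_f φ hφ⟩

omit [IsLocalRing R] [IsNoetherianRing R] in
/-- `Hom(C, D) / x Hom(C, D)` is `Hom(C, D / x D)` if `x` is regular on `D` and
`Ext^1(C, D) = 0`. -/
lemma nonempty_quotient_hom {A C D : ModuleCat.{u} R} (e : A ≃ₗ[R] (C →ₗ[R] D)) {x : R}
    (hx : IsSMulRegular D x) (h : Subsingleton (Abelian.Ext C D 1)) :
    Nonempty (QuotSMulTop x A ≃ₗ[R] (C →ₗ[R] QuotSMulTop x D)) := by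
  have hS := hx.smulShortComplex_shortExact
  let q : D →ₗ[R] QuotSMulTop x D := (x • (⊤ : Submodule R D)).mkQ
  let F : A →ₗ[R] (C →ₗ[R] QuotSMulTop x D) := LinearMap.compRight R q ∘ₗ e.toLinearMap
  have hFs : Function.Surjective F := by
    intro φ
    obtain ⟨(y : C ⟶ D), hy⟩ := exists_hom_lift hS h (ModuleCat.ofHom φ)
    refine ⟨e.symm y.hom, ?_⟩
    refine LinearMap.ext fun c => ?_
    change q (e (e.symm y.hom) c) = φ c
    rw [e.apply_symm_apply]
    exact congr(($hy).hom c)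
  have hFk : x • (⊤ : Submodule R A) = LinearMap.ker F := by
    ext a
    rw [Submodule.mem_smul_pointwise_iff_exists, LinearMap.mem_ker]
    constructor
    · rintro ⟨b, -, rfl⟩
      refine LinearMap.ext fun c => ?_
      change q (e (x • b) c) = 0
      rw [map_smul, LinearMap.smul_apply, Submodule.mkQ_apply, Submodule.Quotient.mk_eq_zero]
      exact Submodule.smul_mem_pointwise_smul _ _ _ trivial
    · intro ha
      obtain ⟨(y : C ⟶ D), hy⟩ := exists_hom_factor hS (C := C) (ModuleCat.ofHom (e a)) (by
        ext c
        exact congr($ha c))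
      refine ⟨e.symm y.hom, trivial, ?_⟩
      apply e.injective
      rw [map_smul, e.apply_symm_apply]
      refine LinearMap.ext fun c => ?_
      exact congr(($hy).hom c)
  exact ⟨(Submodule.quotEquivOfEq _ _ hFk).trans (F.quotKerEquivOfSurjective hFs)⟩

omit [IsNoetherianRing R] in
/-- Depth goes up by one when passing from `A / x A` to `A`. -/
lemma depth_succ {A : ModuleCat.{u} R} {x : R} (hx : IsSMulRegular A x) (hxm : x ∈ maximalIdeal R)
    {s : ℕ}
    (h : ∀ i < s, Subsingleton (Abelian.Ext (kk R) (ModuleCat.of R (QuotSMulTop x A)) i))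
    (h' : Nontrivial (Abelian.Ext (kk R) (ModuleCat.of R (QuotSMulTop x A)) s)) :
    (∀ i < s + 1, Subsingleton (Abelian.Ext (kk R) A i)) ∧
      Nontrivial (Abelian.Ext (kk R) A (s + 1)) := by
  have hS := hx.smulShortComplex_shortExact
  have hz {i : ℕ} (α : Abelian.Ext (kk R) A i) : x • α = 0 :=
    ext_smul_eq_zero (maximalIdeal_smul_kk hxm) α
  have key : ∀ i < s + 1, Subsingleton (Abelian.Ext (kk R) A i) := by
    rintro (_ | i) hi
    · refine subsingleton_of_forall_eq 0 fun α => ?_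
      exact cov_inj_zero hS (kk R) α
        ((Abelian.Ext.smul_eq_comp_mk₀ (X := kk R) (Y := A) α x).symm.trans (hz α))
    · refine subsingleton_of_forall_eq 0 fun α => ?_
      exact cov_inj hS (kk R) (h i (by lia)) α
        ((Abelian.Ext.smul_eq_comp_mk₀ (X := kk R) (Y := A) α x).symm.trans (hz α))
  refine ⟨key, ?_⟩
  obtain ⟨e⟩ := nonempty_reg_shift (L := kk R) hx (maximalIdeal_smul_kk hxm)
    (key s s.lt_succ_self)
  exact e.symm.toEquiv.nontrivial

/-- If `A = Hom(C, D)` with `Ext^i(C, D) = 0` for `i > 0`, `D` has depth at least `s`, and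
`Ext^s(-, D)` preserves lengths of `A / ann A`-modules, then `A` is Cohen-Macaulay of dimension
`s`. Regular elements on `D` are regular on `A`, which reduces to `s = 0`. -/
lemma cohenMacaulay_of_length {C : ModuleCat.{u} R} [Module.Finite R C] (s : ℕ) :
    ∀ (A D : ModuleCat.{u} R) [Module.Finite R A] [Module.Finite R D] [Nontrivial A]
      (_ : A ≃ₗ[R] (C →ₗ[R] D)),
      (∀ i, Subsingleton (Abelian.Ext C D (i + 1))) →
      (∀ i < s, Subsingleton (Abelian.Ext (kk R) D i)) →
      (∀ L : ModuleCat.{u} R, IsFiniteLength R L →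
        (∀ r : R, (∀ a : A, r • a = 0) → ∀ l : L, r • l = 0) →
        Module.length R (Abelian.Ext L D s) = Module.length R L) →
      Module.supportDim R A = s ∧ (∀ i < s, Subsingleton (Abelian.Ext (kk R) A i)) ∧
        Nontrivial (Abelian.Ext (kk R) A s) := by
  induction s with
  | zero =>
    intro A D _ _ _ e _ _ hlen
    have hN : IsNoetherian R (A →ₗ[R] D) := by
      have : Module.Finite R (Abelian.Ext A D 0) := ModuleCat.finite_ext _ _ _ _
      exact isNoetherian_of_linearEquiv
        ((Abelian.Ext.linearEquiv₀ (R := R) (X := A) (Y := D)).trans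
          (ModuleCat.homLinearEquiv (S := R)))
    obtain ⟨j, hj⟩ := exists_pow_le_annihilator A D hN fun j => by
      rw [← length_hom_eq (ModuleCat.of R (A ⧸ (maximalIdeal R ^ j • (⊤ : Submodule R A)))) D]
      refine hlen _ (isFiniteLength_of_pow (pow_le_annihilator_quotient A j)) fun r hr l => ?_
      obtain ⟨a, rfl⟩ := Submodule.mkQ_surjective _ l
      rw [← map_smul, hr, map_zero]
    refine ⟨by simpa using supportDim_eq_zero_of_pow hj, fun i hi => absurd hi (by lia), ?_⟩
    by_contra hne
    rw [not_nontrivial_iff_subsingleton] at hne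
    obtain ⟨x, hxm, hx⟩ := exists_regular A hne
    obtain ⟨a, ha⟩ := exists_ne (0 : A)
    apply ha
    apply (hx.pow j)
    change x ^ j • a = x ^ j • (0 : A)
    rw [smul_zero]
    exact Module.mem_annihilator.mp (hj (Ideal.pow_mem_pow hxm j)) a
  | succ s ih =>
    intro A D _ _ _ e hext hvan hlen
    obtain ⟨x, hxm, hx⟩ := exists_regular D (hvan 0 s.succ_pos)
    have hxA : IsSMulRegular A x := fun a b hab => by
      apply e.injective
      refine LinearMap.ext fun c => hx ?_
      have : e (x • a) = e (x • b) := congr_arg e hab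
      rw [map_smul, map_smul] at this
      exact congr($this c)
    obtain ⟨e'⟩ := nonempty_quotient_hom e hx (hext 0)
    have hS := hx.smulShortComplex_shortExact
    have : Module.Finite R (ModuleCat.of R (QuotSMulTop x A)) :=
      inferInstanceAs (Module.Finite R (QuotSMulTop x A))
    have : Module.Finite R (ModuleCat.of R (QuotSMulTop x D)) :=
      inferInstanceAs (Module.Finite R (QuotSMulTop x D))
    have : Nontrivial (ModuleCat.of R (QuotSMulTop x A)) :=
      nontrivial_quotSMulTop_of_mem_maximalIdeal A hxm
    obtain ⟨h1, h2, h3⟩ := ih (ModuleCat.of R (QuotSMulTop x A))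
      (ModuleCat.of R (QuotSMulTop x D)) e'
      (fun i => cov3 hS C (hext i) (hext (i + 1)))
      (fun i hi => cov3 hS (kk R) (hvan i (by lia)) (hvan (i + 1) (by lia))) (by
        intro L hL hann
        have hannx : ∀ l : L, x • l = 0 := hann x fun a => by
          obtain ⟨a, rfl⟩ := Submodule.mkQ_surjective _ a
          rw [← map_smul]
          exact (Submodule.Quotient.mk_eq_zero _).mpr
            (Submodule.smul_mem_pointwise_smul _ _ _ trivial)
        obtain ⟨e₁⟩ := nonempty_reg_shift hx hannx
          (ext_zero_of_finiteLength (hvan s s.lt_succ_self) L hL)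
        refine e₁.length_eq.trans (hlen L hL fun r hr => hann r fun a => ?_)
        obtain ⟨a, rfl⟩ := Submodule.mkQ_surjective _ a
        rw [← map_smul, hr, map_zero])
    refine ⟨?_, depth_succ hxA hxm h2 h3⟩
    have := Module.supportDim_quotSMulTop_succ_eq_supportDim hxA hxm
    rw [← this]
    change Module.supportDim R (QuotSMulTop x A) = s at h1
    rw [h1]
    rfl

end Detect

end TypeOneCM

namespace TypeOneCM

open IsLocalRing

/-! ### Conclusion -/

section Conclusion

variable {R : Type u} [CommRing R] [IsLocalRing R]

lemma depth_eq_of {M : Type u} [AddCommGroup M] [Module R M] {d : ℕ}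
    (hlt : ∀ i < d, Subsingleton (Abelian.Ext (kk R) (ModuleCat.of R M) i))
    (h : Nontrivial (Abelian.Ext (kk R) (ModuleCat.of R M) d)) : depth R M = d := by
  apply le_antisymm
  · refine sInf_le ⟨d, rfl, ?_⟩
    obtain ⟨e⟩ := nonempty_extM_equiv (R := R) (ResidueField R) M d
    exact e.toEquiv.nontrivial
  · refine le_sInf ?_
    rintro _ ⟨i, rfl, hi⟩
    by_contra hid
    have hid' : i < d := by simpa using hid
    exact not_subsingleton _ ((subsingleton_extM_iff (R := R) (ResidueField R) M i).mpr
      (hlt i hid'))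

lemma ext_zero_of_lt_depthNat {M : Type u} [AddCommGroup M] [Module R M] (i : ℕ)
    (hi : i < depthNat R M) : Subsingleton (Abelian.Ext (kk R) (ModuleCat.of R M) i) := by
  rw [← subsingleton_extM_iff, ← not_nontrivial_iff_subsingleton]
  exact Nat.notMem_of_lt_sInf hi

lemma length_ext_of_rtype {M : Type u} [AddCommGroup M] [Module R M] (h : rtype R M = 1) :
    Module.length R (Abelian.Ext (kk R) (ModuleCat.of R M) (depthNat R M)) = 1 := by
  obtain ⟨e⟩ := nonempty_extM_equiv (R := R) (ResidueField R) M (depthNat R M)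
  rw [← e.length_eq, Module.length_eq_height]
  exact h

lemma depth_eq_ringKrullDim (R : Type u) [CommRing R] [IsNoetherianRing R]
    [IsLocalRing R] (C : Type u) [AddCommGroup C] [Module R C] (hC : IsSemidualizing R C)
    (M : Type u) [AddCommGroup M] [Module R M] [Nontrivial M]
    (hCM : IsCohenMacaulayModule R M) (hr : rtype R M = 1) (hG : HasFiniteGCDim R C M) :
    (depth R R : WithBot ℕ∞) = ringKrullDim R := by
  obtain ⟨m, hm⟩ := hG
  have hSD := SD.of_isSemidualizing hC
  have hCf : Module.Finite R C := hC.1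
  have hMG := GC.of_gcDimLE m M hm
  have hlow := ext_zero_of_lt_depthNat (R := R) (M := M)
  have hlen := length_ext_of_rtype hr
  have hnt : Nontrivial (Abelian.Ext (kk R) (ModuleCat.of R M) (depthNat R M)) := by
    rw [← Module.length_pos_iff (R := R), hlen]
    exact one_pos
  have hdim : Module.supportDim R M = depthNat R M := by
    have h := hCM.2
    rw [depth_eq_of hlow hnt] at h
    exact h.symm
  generalize depthNat R M = d at hlow hlen hnt hdim
  obtain ⟨t, hlt, ht⟩ := exists_depth hSD hMG hnt
  have hdt : d ≤ t := depth_le_of_GC hSD hlt ht hMG hlow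
  have hMG' := GC.of_depth hSD hlt ht (t - d) (t.sub_le d) hMG fun i hi => hlow i (by lia)
  obtain ⟨M', hM', hdim', hlen'⟩ := Good.reduce d (t - d) _
    (hMG'.good hSD hlt (by lia)) hdim hlen
  obtain ⟨h1, h2⟩ := hM'.count hC.1 hdim' hlen'
  obtain ⟨h3, h4, h5⟩ := cohenMacaulay_of_length (C := ModuleCat.of R C) t (ModuleCat.of R R)
    (ModuleCat.of R C) (LinearEquiv.ofBijective
      (LinearMap.toSpanSingleton R (C →ₗ[R] C) LinearMap.id) hC.2.1)
    hSD.ext_zero hlt (fun L hL _ => length_ext_eq hlt h1 h2 L hL)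
  rw [depth_eq_of h4 h5, ← Module.supportDim_self_eq_ringKrullDim]
  exact h3.symm

end Conclusion

end TypeOneCM


/-- If there exists a nonzero Cohen-Macaulay module of type `1` and finite
`G_C`-dimension over the Noetherian local ring `R`, then `R` is Cohen-Macaulay. -/
theorem cohenMacaulay_of_type_one_finite_gcdim (R : Type u) [CommRing R] [IsNoetherianRing R]
    [IsLocalRing R] (C : Type u) [AddCommGroup C] [Module R C] (hC : IsSemidualizing R C)
    (M : Type u) [AddCommGroup M] [Module R M] [Nontrivial M]
    (hCM : IsCohenMacaulayModule R M) (hr : rtype R M = 1) (hG : HasFiniteGCDim R C M) :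
    (depth R R : WithBot ℕ∞) = ringKrullDim R := by
  exact TypeOneCM.depth_eq_ringKrullDim R C hC M hCM hr hG
end

section
/- Let R be a commutative Noetherian ring and let C be a semidualizing R-module. The following are equivalent: (i) C is pointwise dualizing; (ii) fd_R(Hom_R(C, E(R/m))) = ht(m) for every maximal ideal m of R; (iii) fd_R(Hom_R(C, E(R/m))) < ∞ for every maximal ideal m of R; (iv) fd_R(Hom_R(C, E(R/p))) = ht(p) for every prime ideal p of R; (v) fd_R(Hom_R(C, E(R/p))) < ∞ for every prime ideal p of R. -/
/-!
Let `E = E(R ⧸ p)`. For finitely generated `N` the evaluation map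
`Hom(C, E) ⊗ N → Hom(Hom(N, C), E)` is an isomorphism (`homEval_bijective_of_finite`), and deriving it
gives `Tor_i(N, Hom(C, E)) = Hom(Ext^i(N, C), E)`. A module `Y` satisfies `Hom(Y, E) = 0` exactly when
`Y_p = 0`, so `fd Hom(C, E) ≤ n` if and only if `Ext^{n+1}(R ⧸ I, C)_p = 0` for all ideals `I`
(`flatDim_hom_le_iff`). Since `Ext` commutes with localization, Baer's criterion says that this is
the condition `injdim C_p ≤ n` (`injDim_localizedModule_le_iff`). As semidualizing modules localize,
`C` is pointwise dualizing if and only if the flat dimensions at the maximal ideals are finite, and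
the vanishing condition at a maximal ideal implies the one at every smaller prime.

A finite value `n = fd Hom(C, E)` equals `ht p` (`flatDim_eq_primeHeight`); only the faithfulness of
`C` is needed here. Filtering by prime cyclic modules shows that `n` is the largest degree with
`Ext^n(R ⧸ p, C)_p ≠ 0`.

* `ht p ≤ n`: by Nakayama's lemma, if `q' < q` are primes and `Ext^i(R ⧸ q', C)_{q'} ≠ 0`, then
  `Ext^j(R ⧸ q, C)_q ≠ 0` for some `j ≥ i + 1`. The induction starts from `Hom(R, C)_q = C_q ≠ 0`
  (`exists_not_extVanish_of_le_height`).
* `n ≤ ht p`: if `J ⊆ p` is generated by a regular sequence of length `t < n` in `R_p`, then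
  `Ext^i(R ⧸ J, C)_p = 0` for `i > t`. Were `p` associated to `R ⧸ J`, an embedding `R ⧸ p → R ⧸ J`
  would give `Ext^n(R ⧸ p, C)_p = 0`; so the regular sequence can be prolonged to length `n`, which
  forces `ht p ≥ n` (`exists_regular_ideal`).

All `Tor` groups are handled through their character modules, `Tor_i(N, X)⁺ = Ext^i(X, N⁺)`, and
localized `Ext` groups through the torsion condition `ExtVanish`.
-/

open CategoryTheory

universe u

/-! ### Derived functors via projective resolutions -/

/-- `Ext^{n+1}(X, Y)` computed from a projective resolution of `X`: it vanishes when every cocycle is a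
coboundary. -/
lemma ext_succ_subsingleton_iff {A : Type u} [CommRing A] {X : ModuleCat.{u} A}
    (P : ProjectiveResolution X) (Y : ModuleCat.{u} A) (n : ℕ) :
    Subsingleton (Abelian.Ext X Y (n + 1)) ↔
      ∀ f : P.complex.X (n + 1) ⟶ Y, P.complex.d (n + 2) (n + 1) ≫ f = 0 →
        ∃ g : P.complex.X n ⟶ Y, P.complex.d (n + 1) n ≫ g = f := by
  constructor
  · intro h f hf
    exact (P.extMk_eq_zero_iff f (n + 2) rfl hf n rfl).1 (Subsingleton.elim _ _)
  · intro h
    refine subsingleton_of_forall_eq 0 fun α => ?_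
    obtain ⟨f, hf, rfl⟩ := P.extMk_surjective α (n + 2) rfl
    exact (P.extMk_eq_zero_iff f (n + 2) rfl hf n rfl).2 (h f hf)

/-- The derived-functor `Ext` of the statement and Mathlib's `Abelian.Ext` vanish simultaneously. -/
lemma extM_succ_subsingleton_iff {A : Type u} [CommRing A] (M N : Type u) [AddCommGroup M]
    [Module A M] [AddCommGroup N] [Module A N] (n : ℕ) :
    Subsingleton (extM A M N (n + 1)) ↔
      Subsingleton (Abelian.Ext (ModuleCat.of A M) (ModuleCat.of A N) (n + 1)) := by
  let P := (HasProjectiveResolutions.out (Z := ModuleCat.of A M)).out.some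
  rw [ext_succ_subsingleton_iff P, extM, ← ModuleCat.isZero_iff_subsingleton,
    (P.isoExt (R := A) (n + 1) (ModuleCat.of A N)).isZero_iff,
    ← HomologicalComplex.exactAt_iff_isZero_homology,
    HomologicalComplex.exactAt_iff' _ n (n + 1) (n + 2) (by simp) (by simp),
    ShortComplex.moduleCat_exact_iff]
  exact Iff.rfl

/-- Character modules preserve and detect exactness in the middle. -/
lemma exact_iff_dual_exact {A B C : Type u} [AddCommGroup A] [AddCommGroup B] [AddCommGroup C]
    {R : Type u} [CommRing R] [Module R A] [Module R B] [Module R C]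
    (f : A →ₗ[R] B) (g : B →ₗ[R] C) :
    (∀ b, g b = 0 → ∃ a, f a = b) ↔
      ∀ c : CharacterModule B, CharacterModule.dual f c = 0 →
        ∃ d : CharacterModule C, CharacterModule.dual g d = c := by
  constructor
  · intro h c hc
    have hk : ∀ b ∈ LinearMap.ker g, c b = 0 := by
      intro b hb
      obtain ⟨a, rfl⟩ := h b hb
      exact DFunLike.congr_fun hc a
    let g' := (LinearMap.ker g).liftQ g le_rfl
    have hg' : Function.Injective g' := by
      rw [← LinearMap.ker_eq_bot]; exact Submodule.ker_liftQ_eq_bot _ _ _ le_rfl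
    obtain ⟨d, hd⟩ := CharacterModule.dual_surjective_of_injective g' hg'
      (QuotientAddGroup.lift (LinearMap.ker g).toAddSubgroup c hk)
    refine ⟨d, ?_⟩
    ext b
    exact DFunLike.congr_fun hd (Submodule.Quotient.mk b)
  · intro h b hb
    by_contra hc
    have : (LinearMap.range f).mkQ b ≠ 0 := by
      simpa using hc
    obtain ⟨c, hc⟩ := CharacterModule.exists_character_apply_ne_zero_of_ne_zero this
    obtain ⟨d, hd⟩ := h (CharacterModule.dual (LinearMap.range f).mkQ c) (by
      ext a
      change c ((LinearMap.range f).mkQ (f a)) = 0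
      rw [show (LinearMap.range f).mkQ (f a) = 0 from
        (Submodule.Quotient.mk_eq_zero _).2 ⟨a, rfl⟩, map_zero])
    have hdb : d (g b) = c ((LinearMap.range f).mkQ b) := DFunLike.congr_fun hd b
    rw [hb, map_zero] at hdb
    exact hc hdb.symm

open MonoidalCategory in
/-- `Tor_{n+1}(N, X)` vanishes if and only if `Ext^{n+1}(X, N⁺)` does, the latter being the character
module of the former by the tensor-hom adjunction. -/
lemma torM_succ_subsingleton_iff {A : Type u} [CommRing A] (N X : Type u) [AddCommGroup N]
    [Module A N] [AddCommGroup X] [Module A X] (n : ℕ) :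
    Subsingleton (torM A N X (n + 1)) ↔
      Subsingleton (Abelian.Ext (ModuleCat.of A X) (ModuleCat.of A (CharacterModule N))
        (n + 1)) := by
  let P := (HasProjectiveResolutions.out (Z := ModuleCat.of A X)).out.some
  rw [ext_succ_subsingleton_iff P, torM, ← ModuleCat.isZero_iff_subsingleton]
  change Limits.IsZero ((Functor.leftDerived ((tensoringLeft _).obj (ModuleCat.of A N)) (n+1)).obj _) ↔ _
  rw [(P.isoLeftDerivedObj ((tensoringLeft _).obj (ModuleCat.of A N)) (n + 1)).isZero_iff]
  change Limits.IsZero (HomologicalComplex.homology _ _) ↔ _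
  rw [← HomologicalComplex.exactAt_iff_isZero_homology,
    HomologicalComplex.exactAt_iff' _ (n + 2) (n + 1) n (by simp) (by simp),
    ShortComplex.moduleCat_exact_iff]
  set f := (P.complex.d (n + 2) (n + 1)).hom
  set g := (P.complex.d (n + 1) n).hom
  have h1 : ∀ x, f.rTensor N (TensorProduct.comm A N _ x) =
      TensorProduct.comm A N _ (f.lTensor N x) :=
    fun x => LinearMap.congr_fun (f := f.rTensor N ∘ₗ (TensorProduct.comm A N _).toLinearMap)
      (g := (TensorProduct.comm A N _).toLinearMap ∘ₗ f.lTensor N) (TensorProduct.ext' fun _ _ => rfl) x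
  have h2 : ∀ x, g.rTensor N (TensorProduct.comm A N _ x) =
      TensorProduct.comm A N _ (g.lTensor N x) :=
    fun x => LinearMap.congr_fun (f := g.rTensor N ∘ₗ (TensorProduct.comm A N _).toLinearMap)
      (g := (TensorProduct.comm A N _).toLinearMap ∘ₗ g.lTensor N) (TensorProduct.ext' fun _ _ => rfl) x
  have h3 : (∀ b, g.lTensor N b = 0 → ∃ a, f.lTensor N a = b) ↔
      ∀ b, g.rTensor N b = 0 → ∃ a, f.rTensor N a = b := by
    constructor
    · intro h b hb
      obtain ⟨b, rfl⟩ := (TensorProduct.comm A N _).surjective b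
      obtain ⟨a, rfl⟩ := h b (by simpa [h2] using hb)
      exact ⟨_, h1 a⟩
    · intro h b hb
      obtain ⟨a, ha⟩ := h (TensorProduct.comm A N _ b) (by rw [h2, hb, map_zero])
      obtain ⟨a, rfl⟩ := (TensorProduct.comm A N _).surjective a
      exact ⟨a, (TensorProduct.comm A N _).injective (by rw [← h1, ha])⟩
  refine (h3.trans (exact_iff_dual_exact _ _)).trans ?_
  constructor
  · intro h φ hφ
    obtain ⟨d, hd⟩ := h (CharacterModule.homEquiv φ.hom) (by
      apply CharacterModule.homEquiv.symm.injective
      rw [map_zero]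
      exact congrArg ModuleCat.Hom.hom hφ)
    refine ⟨ModuleCat.ofHom (CharacterModule.homEquiv.symm d), ModuleCat.hom_ext ?_⟩
    have h4 := congrArg CharacterModule.homEquiv.symm hd
    rw [LinearEquiv.symm_apply_apply] at h4
    exact h4
  · intro h c hc
    obtain ⟨d, hd⟩ := h (ModuleCat.ofHom (CharacterModule.homEquiv.symm c)) (by
      refine ModuleCat.hom_ext (congrArg CharacterModule.homEquiv.symm hc))
    refine ⟨CharacterModule.homEquiv d.hom, ?_⟩
    apply CharacterModule.homEquiv.symm.injective
    exact congrArg ModuleCat.Hom.hom hd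

/-! ### Torsion in `Ext` and long exact sequences -/

/-- `S⁻¹ Ext^i_A(N, M) = 0`, phrased elementwise: every class is killed by an element of `S`.
With `S = ⊥` this says `Ext^i_A(N, M) = 0`, and with `S = p.primeCompl` that
`p` is not in the support of `Ext^i_A(N, M)`. -/
def ExtVanish {A : Type u} [CommRing A] (S : Submonoid A) (N M : Type u) [AddCommGroup N]
    [Module A N] [AddCommGroup M] [Module A M] (i : ℕ) : Prop :=
  ∀ e : Abelian.Ext (ModuleCat.of A N) (ModuleCat.of A M) i, ∃ s ∈ S, s • e = 0

section ExtVanish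

variable {A : Type u} [CommRing A] {S : Submonoid A} {N₁ N₂ N₃ M : Type u}
  [AddCommGroup N₁] [Module A N₁] [AddCommGroup N₂] [Module A N₂] [AddCommGroup N₃] [Module A N₃]
  [AddCommGroup M] [Module A M]

lemma extVanish_bot_iff {i : ℕ} : ExtVanish (⊥ : Submonoid A) N₁ M i ↔
    Subsingleton (Abelian.Ext (ModuleCat.of A N₁) (ModuleCat.of A M) i) := by
  constructor
  · intro h
    refine subsingleton_of_forall_eq 0 fun e => ?_
    obtain ⟨s, hs, he⟩ := h e
    rw [Submonoid.mem_bot] at hs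
    rwa [hs, one_smul] at he
  · intro h e
    exact ⟨1, one_mem _, Subsingleton.elim _ _⟩

lemma ExtVanish.of_subsingleton {i : ℕ}
    (h : Subsingleton (Abelian.Ext (ModuleCat.of A N₁) (ModuleCat.of A M) i)) :
    ExtVanish S N₁ M i := fun _ => ⟨1, one_mem _, Subsingleton.elim _ _⟩

lemma ExtVanish.mono {T : Submonoid A} (hST : S ≤ T) {i : ℕ} (h : ExtVanish S N₁ M i) :
    ExtVanish T N₁ M i := fun e => by
  obtain ⟨s, hs, he⟩ := h e
  exact ⟨s, hST hs, he⟩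

/-- Multiplication by `s` on `N₁` induces multiplication by `s` on `Ext^i(N₁, M)`. -/
lemma ExtVanish.of_smul {s : A} (hs : s ∈ S) (h : ∀ x : N₁, s • x = 0) (i : ℕ) :
    ExtVanish S N₁ M i := fun e => by
  refine ⟨s, hs, ?_⟩
  have h1 : s • 𝟙 (ModuleCat.of A N₁) = 0 := by
    ext x
    exact h x
  rw [← Abelian.Ext.mk₀_id_comp (s • e), Abelian.Ext.comp_smul, ← Abelian.Ext.smul_comp,
    ← Abelian.Ext.mk₀_smul, h1, Abelian.Ext.mk₀_zero, Abelian.Ext.zero_comp]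

lemma ExtVanish.congr (f : N₁ ≃ₗ[A] N₂) {i : ℕ} (h : ExtVanish S N₁ M i) :
    ExtVanish S N₂ M i := fun e => by
  obtain ⟨s, hs, he⟩ := h ((Abelian.Ext.mk₀ (ModuleCat.ofHom f.toLinearMap)).comp e (zero_add i))
  refine ⟨s, hs, ?_⟩
  have h1 : ModuleCat.ofHom f.symm.toLinearMap ≫ ModuleCat.ofHom f.toLinearMap =
      𝟙 (ModuleCat.of A N₂) := by
    ext x
    simp
  have h2 := congrArg (fun z => (Abelian.Ext.mk₀ (ModuleCat.ofHom f.symm.toLinearMap)).comp z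
    (zero_add i)) he
  simpa only [Abelian.Ext.comp_smul, Abelian.Ext.mk₀_comp_mk₀_assoc, h1, Abelian.Ext.mk₀_id_comp,
    Abelian.Ext.comp_zero] using h2

/-- An unbundled short exact sequence as a short complex. -/
lemma shortExact_of {f : N₁ →ₗ[A] N₂} {g : N₂ →ₗ[A] N₃} (hf : Function.Injective f)
    (hg : Function.Surjective g) (hfg : Function.Exact f g) :
    (ShortComplex.moduleCatMk f g hfg.linearMap_comp_eq_zero).ShortExact :=
  ModuleCat.shortComplex_shortExact _ hfg hf hg

/-- In the long exact sequence of `Ext(-, Y)` the middle term of three consecutive ones is `S`-torsion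
if its neighbours are; the next two lemmas are the same at the other positions. -/
lemma ext_torsion_mid {T : ShortComplex (ModuleCat.{u} A)} (hT : T.ShortExact)
    {Y : ModuleCat.{u} A} {i : ℕ}
    (h₁ : ∀ e : Abelian.Ext T.X₁ Y i, ∃ s ∈ S, s • e = 0)
    (h₃ : ∀ e : Abelian.Ext T.X₃ Y i, ∃ s ∈ S, s • e = 0) (e : Abelian.Ext T.X₂ Y i) :
    ∃ s ∈ S, s • e = 0 := by
  obtain ⟨s, hs, he⟩ := h₁ ((Abelian.Ext.mk₀ T.f).comp e (zero_add i))
  rw [← Abelian.Ext.comp_smul] at he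
  obtain ⟨e', he'⟩ := Abelian.Ext.contravariant_sequence_exact₂ hT _ _ he
  obtain ⟨t, ht, hte⟩ := h₃ e'
  exact ⟨t * s, mul_mem ht hs, by
    rw [mul_smul, ← he', ← Abelian.Ext.comp_smul, hte, Abelian.Ext.comp_zero]⟩

lemma ext_torsion_left {T : ShortComplex (ModuleCat.{u} A)} (hT : T.ShortExact)
    {Y : ModuleCat.{u} A} {i : ℕ}
    (h₂ : ∀ e : Abelian.Ext T.X₂ Y i, ∃ s ∈ S, s • e = 0)
    (h₃ : ∀ e : Abelian.Ext T.X₃ Y (i + 1), ∃ s ∈ S, s • e = 0) (e : Abelian.Ext T.X₁ Y i) :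
    ∃ s ∈ S, s • e = 0 := by
  obtain ⟨s, hs, he⟩ := h₃ (hT.extClass.comp e (add_comm 1 i))
  rw [← Abelian.Ext.comp_smul] at he
  obtain ⟨e', he'⟩ := Abelian.Ext.contravariant_sequence_exact₁ hT _ _ _ he
  obtain ⟨t, ht, hte⟩ := h₂ e'
  exact ⟨t * s, mul_mem ht hs, by
    rw [mul_smul, ← he', ← Abelian.Ext.comp_smul, hte, Abelian.Ext.comp_zero]⟩

lemma ext_torsion_right {T : ShortComplex (ModuleCat.{u} A)} (hT : T.ShortExact)
    {Y : ModuleCat.{u} A} {i : ℕ}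
    (h₁ : ∀ e : Abelian.Ext T.X₁ Y i, ∃ s ∈ S, s • e = 0)
    (h₂ : ∀ e : Abelian.Ext T.X₂ Y (i + 1), ∃ s ∈ S, s • e = 0)
    (e : Abelian.Ext T.X₃ Y (i + 1)) : ∃ s ∈ S, s • e = 0 := by
  obtain ⟨s, hs, he⟩ := h₂ ((Abelian.Ext.mk₀ T.g).comp e (zero_add (i + 1)))
  rw [← Abelian.Ext.comp_smul] at he
  obtain ⟨e', he'⟩ := Abelian.Ext.contravariant_sequence_exact₃ hT _ _ he (add_comm 1 i)
  obtain ⟨t, ht, hte⟩ := h₁ e'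
  exact ⟨t * s, mul_mem ht hs, by
    rw [mul_smul, ← he', ← Abelian.Ext.comp_smul, hte, Abelian.Ext.comp_zero]⟩

lemma ExtVanish.mid {f : N₁ →ₗ[A] N₂} {g : N₂ →ₗ[A] N₃} (hf : Function.Injective f)
    (hg : Function.Surjective g) (hfg : Function.Exact f g) {i : ℕ}
    (h₁ : ExtVanish S N₁ M i) (h₃ : ExtVanish S N₃ M i) : ExtVanish S N₂ M i :=
  ext_torsion_mid (shortExact_of hf hg hfg) h₁ h₃

lemma ExtVanish.left {f : N₁ →ₗ[A] N₂} {g : N₂ →ₗ[A] N₃} (hf : Function.Injective f)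
    (hg : Function.Surjective g) (hfg : Function.Exact f g) {i : ℕ}
    (h₂ : ExtVanish S N₂ M i) (h₃ : ExtVanish S N₃ M (i + 1)) : ExtVanish S N₁ M i :=
  ext_torsion_left (shortExact_of hf hg hfg) h₂ h₃

lemma ExtVanish.right {f : N₁ →ₗ[A] N₂} {g : N₂ →ₗ[A] N₃} (hf : Function.Injective f)
    (hg : Function.Surjective g) (hfg : Function.Exact f g) {i : ℕ}
    (h₁ : ExtVanish S N₁ M i) (h₂ : ExtVanish S N₂ M (i + 1)) : ExtVanish S N₃ M (i + 1) :=
  ext_torsion_right (shortExact_of hf hg hfg) h₁ h₂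

lemma ExtVanish.of_projective [Module.Projective A N₁] (i : ℕ) :
    ExtVanish S N₁ M (i + 1) := by
  have : Projective (ModuleCat.of A N₁) := (IsProjective.iff_projective _).1 ‹_›
  exact .of_subsingleton (Abelian.Ext.subsingleton_of_projective _ _ _)

/-- Dimension shifting in the first variable. -/
lemma extVanish_succ_iff_of_projective [Module.Projective A N₂] {f : N₁ →ₗ[A] N₂}
    {g : N₂ →ₗ[A] N₃} (hf : Function.Injective f) (hg : Function.Surjective g)
    (hfg : Function.Exact f g) (i : ℕ) :
    ExtVanish S N₃ M (i + 2) ↔ ExtVanish S N₁ M (i + 1) :=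
  ⟨fun h => .left hf hg hfg (.of_projective i) h,
    fun h => .right hf hg hfg h (.of_projective (i + 1))⟩

/-- Dimension shifting in the second variable. -/
lemma extVanish_bot_succ_iff_of_injective [Module.Injective A N₂] {f : N₁ →ₗ[A] N₂}
    {g : N₂ →ₗ[A] N₃} (hf : Function.Injective f) (hg : Function.Surjective g)
    (hfg : Function.Exact f g) (i : ℕ) :
    ExtVanish (⊥ : Submonoid A) M N₁ (i + 2) ↔ ExtVanish (⊥ : Submonoid A) M N₃ (i + 1) := by
  have hS := shortExact_of hf hg hfg
  have hI : Injective (ModuleCat.of A N₂) := (Module.injective_iff_injective_object A N₂).1 ‹_›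
  rw [extVanish_bot_iff, extVanish_bot_iff]
  constructor
  · intro h
    refine subsingleton_of_forall_eq 0 fun e => ?_
    obtain ⟨e', rfl⟩ := Abelian.Ext.covariant_sequence_exact₃ (ModuleCat.of A M) hS e rfl
      (Subsingleton.elim (α := Abelian.Ext (ModuleCat.of A M) (ModuleCat.of A N₁) (i + 2)) _ _)
    rw [show e' = 0 from @Abelian.Ext.eq_zero_of_injective _ _ _ _ _ (ModuleCat.of A N₂) i hI e']
    exact Abelian.Ext.zero_comp ..
  · intro h
    refine subsingleton_of_forall_eq 0 fun e => ?_
    obtain ⟨e', rfl⟩ := Abelian.Ext.covariant_sequence_exact₁ (ModuleCat.of A M) hS e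
      (@Abelian.Ext.eq_zero_of_injective _ _ _ _ _ (ModuleCat.of A N₂) (i + 1) hI _)
      (n₀ := i + 1) rfl
    rw [show e' = 0 from
      Subsingleton.elim (α := Abelian.Ext (ModuleCat.of A M) (ModuleCat.of A N₃) (i + 1)) _ _]
    exact Abelian.Ext.zero_comp ..

end ExtVanish

/-! ### Character modules and flat dimension -/

section

variable {A : Type u} [CommRing A] {S : Submonoid A} {N₁ N₂ N₃ M : Type u}
  [AddCommGroup N₁] [Module A N₁] [AddCommGroup N₂] [Module A N₂] [AddCommGroup N₃] [Module A N₃]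
  [AddCommGroup M] [Module A M]

lemma ext_one_torsion_iff {T : ShortComplex (ModuleCat.{u} A)} (hT : T.ShortExact)
    [Projective T.X₂] {Y : ModuleCat.{u} A} :
    (∀ e : Abelian.Ext T.X₃ Y 1, ∃ s ∈ S, s • e = 0) ↔
      ∀ φ : T.X₁ ⟶ Y, ∃ s ∈ S, ∃ ψ : T.X₂ ⟶ Y, T.f ≫ ψ = s • φ := by
  constructor
  · intro h φ
    obtain ⟨s, hs, he⟩ := h (hT.extClass.comp (Abelian.Ext.mk₀ φ) (add_comm 1 0))
    refine ⟨s, hs, ?_⟩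
    rw [← Abelian.Ext.comp_smul, ← Abelian.Ext.mk₀_smul] at he
    obtain ⟨x, hx⟩ := Abelian.Ext.contravariant_sequence_exact₁ hT _ _ _ he
    obtain ⟨ψ, rfl⟩ := (Abelian.Ext.mk₀_bijective _ _).2 x
    rw [Abelian.Ext.mk₀_comp_mk₀] at hx
    exact ⟨ψ, (Abelian.Ext.mk₀_bijective _ _).1 hx⟩
  · intro h e
    obtain ⟨x, rfl⟩ := Abelian.Ext.contravariant_sequence_exact₃ hT _ e
      (Abelian.Ext.eq_zero_of_projective _) (n₀ := 0) rfl
    obtain ⟨φ, rfl⟩ := (Abelian.Ext.mk₀_bijective _ _).2 x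
    obtain ⟨s, hs, ψ, hψ⟩ := h φ
    refine ⟨s, hs, ?_⟩
    rw [← Abelian.Ext.comp_smul, ← Abelian.Ext.mk₀_smul, ← hψ, ← Abelian.Ext.mk₀_comp_mk₀]
    exact hT.extClass_comp_assoc _

lemma ext_one_subsingleton_iff_of_injective {T : ShortComplex (ModuleCat.{u} A)}
    (hT : T.ShortExact) [Injective T.X₂] {Y : ModuleCat.{u} A} :
    Subsingleton (Abelian.Ext Y T.X₁ 1) ↔ ∀ φ : Y ⟶ T.X₃, ∃ ψ : Y ⟶ T.X₂, ψ ≫ T.g = φ := by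
  constructor
  · intro h φ
    obtain ⟨x, hx⟩ := Abelian.Ext.covariant_sequence_exact₃ Y hT
      (Abelian.Ext.mk₀ φ) (n₁ := 1) rfl (Subsingleton.elim _ _)
    obtain ⟨ψ, rfl⟩ := (Abelian.Ext.mk₀_bijective _ _).2 x
    rw [Abelian.Ext.mk₀_comp_mk₀] at hx
    exact ⟨ψ, (Abelian.Ext.mk₀_bijective _ _).1 hx⟩
  · intro h
    refine subsingleton_of_forall_eq 0 fun e => ?_
    obtain ⟨x, rfl⟩ := Abelian.Ext.covariant_sequence_exact₁ Y hT e
      (Abelian.Ext.eq_zero_of_injective _) (n₀ := 0) rfl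
    obtain ⟨φ, rfl⟩ := (Abelian.Ext.mk₀_bijective _ _).2 x
    obtain ⟨ψ, rfl⟩ := h φ
    rw [← Abelian.Ext.mk₀_comp_mk₀, Abelian.Ext.comp_assoc _ _ _ _ (zero_add 1) rfl,
      hT.comp_extClass, Abelian.Ext.comp_zero]

/-- Elements of `Ext¹(N₃, M)` are homomorphisms `N₁ → M` modulo those extending to the projective
module `N₂`. -/
lemma extVanish_one_iff_of_projective [Module.Projective A N₂] {f : N₁ →ₗ[A] N₂}
    {g : N₂ →ₗ[A] N₃} (hf : Function.Injective f) (hg : Function.Surjective g)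
    (hfg : Function.Exact f g) :
    ExtVanish S N₃ M 1 ↔ ∀ φ : N₁ →ₗ[A] M, ∃ s ∈ S, ∃ ψ : N₂ →ₗ[A] M, ψ ∘ₗ f = s • φ := by
  have hP : Projective (ModuleCat.of A N₂) := (IsProjective.iff_projective _).1 ‹_›
  refine (@ext_one_torsion_iff A _ S _ (shortExact_of hf hg hfg) hP (ModuleCat.of A M)).trans ?_
  constructor
  · intro h φ
    obtain ⟨s, hs, ψ, hψ⟩ := h (ModuleCat.ofHom φ)
    exact ⟨s, hs, ψ.hom, congrArg ModuleCat.Hom.hom hψ⟩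
  · intro h φ
    obtain ⟨s, hs, ψ, hψ⟩ := h φ.hom
    exact ⟨s, hs, ModuleCat.ofHom ψ, ModuleCat.hom_ext hψ⟩

/-- Elements of `Ext¹(M, N₁)` are homomorphisms `M → N₃` modulo those lifting to the injective
module `N₂`. -/
lemma extVanish_bot_one_iff_of_injective [Module.Injective A N₂] {f : N₁ →ₗ[A] N₂}
    {g : N₂ →ₗ[A] N₃} (hf : Function.Injective f) (hg : Function.Surjective g)
    (hfg : Function.Exact f g) :
    ExtVanish (⊥ : Submonoid A) M N₁ 1 ↔ ∀ φ : M →ₗ[A] N₃, ∃ ψ : M →ₗ[A] N₂, g ∘ₗ ψ = φ := by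
  have hI : Injective (ModuleCat.of A N₂) := (Module.injective_iff_injective_object A N₂).1 ‹_›
  rw [extVanish_bot_iff]
  refine (@ext_one_subsingleton_iff_of_injective A _ _ (shortExact_of hf hg hfg) hI
    (ModuleCat.of A M)).trans ?_
  constructor
  · intro h φ
    obtain ⟨ψ, hψ⟩ := h (ModuleCat.ofHom φ)
    exact ⟨ψ.hom, congrArg ModuleCat.Hom.hom hψ⟩
  · intro h φ
    obtain ⟨ψ, hψ⟩ := h φ.hom
    exact ⟨ModuleCat.ofHom ψ, ModuleCat.hom_ext hψ⟩

lemma dual_exact {f : N₁ →ₗ[A] N₂} {g : N₂ →ₗ[A] N₃} (hfg : Function.Exact f g) :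
    Function.Exact (CharacterModule.dual g) (CharacterModule.dual f) := by
  intro c
  constructor
  · exact (exact_iff_dual_exact f g).1 (fun b hb => (hfg b).1 hb) c
  · rintro ⟨d, rfl⟩
    ext x
    change d (g (f x)) = 0
    rw [hfg.apply_apply_eq_zero, map_zero]

/-- `Tor₁(M, N₃) = 0` tested on a presentation of `N₃` by a flat module `N₂`, with `Tor₁(M, N₃)`
replaced by its character module `Ext¹(M, N₃⁺)`. -/
lemma extVanish_characterModule_one_iff [Module.Flat A N₂] {f : N₁ →ₗ[A] N₂}
    {g : N₂ →ₗ[A] N₃} (hf : Function.Injective f) (hg : Function.Surjective g)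
    (hfg : Function.Exact f g) :
    ExtVanish (⊥ : Submonoid A) M (CharacterModule N₃) 1 ↔ Function.Injective (f.lTensor M) := by
  have : Module.Injective A (CharacterModule N₂) :=
    Module.Flat.iff_characterModule_injective.1 ‹_›
  rw [extVanish_bot_one_iff_of_injective (CharacterModule.dual_injective_of_surjective g hg)
    (CharacterModule.dual_surjective_of_injective f hf) (dual_exact hfg),
    ← CharacterModule.dual_surjective_iff_injective]
  constructor
  · intro h c
    obtain ⟨ψ, hψ⟩ := h (CharacterModule.homEquiv.symm c)
    refine ⟨CharacterModule.homEquiv ψ, CharacterModule.homEquiv.symm.injective ?_⟩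
    rw [← hψ]
    rfl
  · intro h φ
    obtain ⟨d, hd⟩ := h (CharacterModule.homEquiv φ)
    refine ⟨CharacterModule.homEquiv.symm d, ?_⟩
    have h4 := congrArg CharacterModule.homEquiv.symm hd
    rw [LinearEquiv.symm_apply_apply] at h4
    exact h4

lemma extVanish_characterModule_succ_iff [Module.Flat A N₂] {f : N₁ →ₗ[A] N₂}
    {g : N₂ →ₗ[A] N₃} (hf : Function.Injective f) (hg : Function.Surjective g)
    (hfg : Function.Exact f g) (i : ℕ) :
    ExtVanish (⊥ : Submonoid A) M (CharacterModule N₃) (i + 2) ↔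
      ExtVanish (⊥ : Submonoid A) M (CharacterModule N₁) (i + 1) := by
  have : Module.Injective A (CharacterModule N₂) :=
    Module.Flat.iff_characterModule_injective.1 ‹_›
  exact extVanish_bot_succ_iff_of_injective (CharacterModule.dual_injective_of_surjective g hg)
    (CharacterModule.dual_surjective_of_injective f hf) (dual_exact hfg) i

lemma exists_free_presentation (N : Type u) [AddCommGroup N] [Module A N] :
    ∃ (F : Type u) (_ : AddCommGroup F) (_ : Module A F) (_ : Module.Free A F)
      (g : F →ₗ[A] N), Function.Surjective g :=
  ⟨N →₀ A, inferInstance, inferInstance, inferInstance, Finsupp.linearCombination A id,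
    Finsupp.linearCombination_id_surjective A N⟩

lemma extVanish_characterModule_of_flat (X : Type u) [AddCommGroup X] [Module A X]
    [Module.Flat A X] (i : ℕ) : ∀ (N : Type u) [AddCommGroup N] [Module A N],
    ExtVanish (⊥ : Submonoid A) X (CharacterModule N) (i + 1) := by
  induction i with
  | zero =>
    intro N _ _
    obtain ⟨F, _, _, _, g, hg⟩ := exists_free_presentation (A := A) N
    exact (extVanish_characterModule_one_iff (Submodule.injective_subtype _) hg
      (LinearMap.exact_subtype_ker_map g)).2
        (Module.Flat.lTensor_preserves_injective_linearMap _ (Submodule.injective_subtype _))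
  | succ i ih =>
    intro N _ _
    obtain ⟨F, _, _, _, g, hg⟩ := exists_free_presentation (A := A) N
    exact (extVanish_characterModule_succ_iff (Submodule.injective_subtype _) hg
      (LinearMap.exact_subtype_ker_map g) i).2 (ih _)

/-- The flat dimension is detected by a single degree and by cyclic modules. -/
lemma extVanish_characterModule_of_ideal (n : ℕ) :
    ∀ (X : Type u) [AddCommGroup X] [Module A X],
      (∀ I : Ideal A, ExtVanish (⊥ : Submonoid A) X (CharacterModule (A ⧸ I)) (n + 1)) →
      ∀ (i : ℕ), n ≤ i → ∀ (N : Type u) [AddCommGroup N] [Module A N],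
        ExtVanish (⊥ : Submonoid A) X (CharacterModule N) (i + 1) := by
  induction n with
  | zero =>
    intro X _ _ h i _
    have : Module.Flat A X := by
      rw [Module.Flat.iff_lTensor_injective']
      intro I
      exact (extVanish_characterModule_one_iff (g := I.mkQ) (Submodule.injective_subtype _)
        (Submodule.mkQ_surjective _) (LinearMap.exact_subtype_mkQ I)).1 (h I)
    exact extVanish_characterModule_of_flat X i
  | succ n ih =>
    intro X _ _ h i hi N _ _
    obtain ⟨F, _, _, _, g, hg⟩ := exists_free_presentation (A := A) X
    obtain ⟨i, rfl⟩ := Nat.exists_eq_succ_of_ne_zero (by omega : i ≠ 0)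
    refine (extVanish_succ_iff_of_projective (Submodule.injective_subtype _) hg
      (LinearMap.exact_subtype_ker_map g) i).2 (ih _ (fun I => ?_) i (by omega) N)
    exact (extVanish_succ_iff_of_projective (Submodule.injective_subtype _) hg
      (LinearMap.exact_subtype_ker_map g) n).1 (h I)

/-- The flat dimension in terms of `Ext^{n+1}(X, (A ⧸ I)⁺)`, the character module of
`Tor_{n+1}(A ⧸ I, X)`. -/
lemma flatDim_le_iff (X : Type u) [AddCommGroup X] [Module A X] (n : ℕ) :
    flatDim A X ≤ n ↔
      ∀ I : Ideal A, ExtVanish (⊥ : Submonoid A) X (CharacterModule (A ⧸ I)) (n + 1) := by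
  constructor
  · intro h I
    rw [extVanish_bot_iff, ← torM_succ_subsingleton_iff]
    have hne : {n : ℕ∞ | ∀ (N : Type u) (_ : AddCommGroup N) (_ : Module A N) (i : ℕ),
        n < i → Subsingleton (torM A N X i)}.Nonempty := ⟨⊤, fun _ _ _ i hi => by simp at hi⟩
    refine csInf_mem hne _ _ _ _ (lt_of_le_of_lt h ?_)
    exact_mod_cast Nat.lt_succ_self n
  · intro h
    refine sInf_le ?_
    intro N _ _ i hi
    obtain ⟨i, rfl⟩ := Nat.exists_eq_succ_of_ne_zero (n := i) (by rintro rfl; simp at hi)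
    rw [Nat.succ_eq_add_one, torM_succ_subsingleton_iff, ← extVanish_bot_iff]
    exact extVanish_characterModule_of_ideal n X h i
      (Nat.lt_succ_iff.1 (by exact_mod_cast hi)) N

end

/-! ### The duality between `Tor(N, Hom(C, E))` and `Ext(N, C)` -/

section

variable {A : Type u} [CommRing A]

/-- A map into an injective module factors through any map with smaller kernel. -/
lemma Module.Injective.exists_comp_eq {B D E : Type u} [AddCommGroup B] [Module A B]
    [AddCommGroup D] [Module A D] [AddCommGroup E] [Module A E] [Module.Injective A E]
    (b : B →ₗ[A] D) (φ : B →ₗ[A] E) (h : LinearMap.ker b ≤ LinearMap.ker φ) :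
    ∃ ψ : D →ₗ[A] E, ψ ∘ₗ b = φ := by
  have hinj : Function.Injective ((LinearMap.ker b).liftQ b le_rfl) := by
    rw [← LinearMap.ker_eq_bot]
    exact Submodule.ker_liftQ_eq_bot _ _ _ le_rfl
  obtain ⟨ψ, hψ⟩ := Module.Injective.out _ hinj ((LinearMap.ker b).liftQ φ h)
  exact ⟨ψ, LinearMap.ext fun x => hψ (Submodule.Quotient.mk x)⟩

/-- Every homomorphism from `Y` to the injective hull of `A ⧸ p` vanishes exactly when `Y_p = 0`. -/
lemma hom_injectiveHull_eq_zero_iff (p : Ideal A) [p.IsPrime] {E : Type u} [AddCommGroup E]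
    [Module A E] (hE : IsInjectiveHull A (A ⧸ p) E) (Y : Type u) [AddCommGroup Y] [Module A Y] :
    (∀ g : Y →ₗ[A] E, g = 0) ↔ ∀ y : Y, ∃ s ∈ p.primeCompl, s • y = 0 := by
  obtain ⟨hinj, ι, hι, hess⟩ := hE
  constructor
  · intro h y
    by_contra! hy
    obtain ⟨ψ, hψ⟩ := Module.Injective.exists_comp_eq (LinearMap.toSpanSingleton A Y y)
      (ι ∘ₗ p.mkQ) (fun s hs => by
        have hsp : s ∈ p := by
          by_contra hsp
          exact hy s hsp (by simpa using hs)
        rw [LinearMap.mem_ker, LinearMap.comp_apply, Submodule.mkQ_apply,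
          (Submodule.Quotient.mk_eq_zero p).2 hsp, map_zero])
    have h1 := LinearMap.congr_fun hψ 1
    rw [h ψ] at h1
    have h2 : (Submodule.Quotient.mk 1 : A ⧸ p) = 0 := hι (by simpa using h1.symm)
    exact (Ideal.ne_top_iff_one p).1 (Ideal.IsPrime.ne_top ‹_›)
      ((Submodule.Quotient.mk_eq_zero p).1 h2)
  · intro h g
    ext y
    obtain ⟨s, hs, hsy⟩ := h y
    -- essentiality of `A ⧸ p` in `E` makes `s ∉ p` act injectively on `E`
    have hker : LinearMap.ker (LinearMap.lsmul A E s) = ⊥ := by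
      by_contra hne
      apply hess _ hne
      rw [eq_bot_iff]
      rintro _ ⟨hz, r, rfl⟩
      obtain ⟨r, rfl⟩ := Submodule.Quotient.mk_surjective _ r
      have h1 : ι (Submodule.Quotient.mk (s * r)) = 0 := by
        have : s • ι (Submodule.Quotient.mk r) = 0 := hz
        rwa [← map_smul] at this
      have h2 := (Submodule.Quotient.mk_eq_zero p).1 (hι (h1.trans (map_zero ι).symm))
      have h3 := (Ideal.IsPrime.mem_or_mem ‹p.IsPrime› h2).resolve_left hs
      rw [Submodule.mem_bot, (Submodule.Quotient.mk_eq_zero p).2 h3, map_zero]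
    have : g y ∈ LinearMap.ker (LinearMap.lsmul A E s) := by
      rw [LinearMap.mem_ker, LinearMap.lsmul_apply, ← map_smul, hsy, map_zero]
    rw [hker] at this
    simpa using this

variable (A) (C E : Type u) [AddCommGroup C] [Module A C] [AddCommGroup E] [Module A E]

/-- The evaluation map `Hom(C, E) ⊗ N → Hom(Hom(N, C), E)`. -/
noncomputable def homEval (N : Type u) [AddCommGroup N] [Module A N] :
    TensorProduct A (C →ₗ[A] E) N →ₗ[A] ((N →ₗ[A] C) →ₗ[A] E) :=
  TensorProduct.lift
    (LinearMap.mk₂ A (fun (x : C →ₗ[A] E) (n : N) => x ∘ₗ LinearMap.applyₗ n)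
      (fun _ _ _ => rfl) (fun _ _ _ => rfl)
      (fun x n n' => by ext φ; simp) (fun a x n => by ext φ; simp))

lemma homEval_tmul {N : Type u} [AddCommGroup N] [Module A N] (x : C →ₗ[A] E) (n : N)
    (φ : N →ₗ[A] C) : homEval A C E N (x ⊗ₜ n) φ = x (φ n) := rfl

lemma homEval_natural {N N' : Type u} [AddCommGroup N] [Module A N] [AddCommGroup N']
    [Module A N'] (f : N →ₗ[A] N') (z : TensorProduct A (C →ₗ[A] E) N) :
    homEval A C E N' (f.lTensor _ z) = (homEval A C E N z) ∘ₗ LinearMap.lcomp A C f := by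
  induction z with
  | zero => simp
  | tmul x n => rfl
  | add x y hx hy => rw [map_add, map_add, hx, hy, map_add]; rfl

/-- The evaluation map is an isomorphism for finite free modules. -/
lemma homEval_bijective_pi (k : ℕ) : Function.Bijective (homEval A C E (Fin k → A)) := by
  classical
  -- an explicit inverse, in the standard basis
  let inv : (((Fin k → A) →ₗ[A] C) →ₗ[A] E) →ₗ[A] TensorProduct A (C →ₗ[A] E) (Fin k → A) :=
    ∑ i, (TensorProduct.mk A (C →ₗ[A] E) (Fin k → A)).flip (Pi.single i 1) ∘ₗ
      LinearMap.lcomp A E (LinearMap.smulRightₗ (LinearMap.proj i : (Fin k → A) →ₗ[A] A))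
  have hinv : ∀ y, inv y = ∑ i, (y ∘ₗ LinearMap.smulRightₗ (LinearMap.proj i : (Fin k → A) →ₗ[A] A)) ⊗ₜ[A] (Pi.single i (1 : A)) := by
    intro y
    simp only [inv, LinearMap.sum_apply]
    rfl
  have h1 : inv ∘ₗ homEval A C E (Fin k → A) = LinearMap.id := by
    apply TensorProduct.ext'
    intro x n
    rw [LinearMap.comp_apply, hinv, LinearMap.id_apply]
    conv_rhs => rw [pi_eq_sum_univ' n, TensorProduct.tmul_sum]
    refine Finset.sum_congr rfl fun i _ => ?_
    rw [TensorProduct.tmul_smul, TensorProduct.smul_tmul']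
    congr 1
    ext c
    simp [homEval_tmul]
  have h2 : homEval A C E (Fin k → A) ∘ₗ inv = LinearMap.id := by
    ext y φ
    rw [LinearMap.comp_apply, hinv, LinearMap.id_apply, map_sum, LinearMap.sum_apply]
    simp only [homEval_tmul, LinearMap.comp_apply]
    rw [← map_sum]
    congr 1
    apply LinearMap.pi_ext'
    intro i
    ext
    simp [Pi.single_apply, eq_comm]
  exact ⟨Function.LeftInverse.injective (LinearMap.congr_fun h1),
    Function.RightInverse.surjective (LinearMap.congr_fun h2)⟩

variable {A C E}

/-- Five lemma for the evaluation maps along a presentation `P₁ → P₀ → N → 0`: both sides are right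
exact in `N`, as `E` is injective. -/
lemma homEval_bijective [Module.Injective A E] {P₁ P₀ N : Type u} [AddCommGroup P₁] [Module A P₁]
    [AddCommGroup P₀] [Module A P₀] [AddCommGroup N] [Module A N]
    {f : P₁ →ₗ[A] P₀} {g : P₀ →ₗ[A] N} (hg : Function.Surjective g) (hfg : Function.Exact f g)
    (h₁ : Function.Bijective (homEval A C E P₁)) (h₀ : Function.Bijective (homEval A C E P₀)) :
    Function.Bijective (homEval A C E N) := by
  constructor
  · rw [injective_iff_map_eq_zero]
    intro z hz
    obtain ⟨w, rfl⟩ := LinearMap.lTensor_surjective (C →ₗ[A] E) hg z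
    rw [homEval_natural] at hz
    obtain ⟨ψ, hψ⟩ := Module.Injective.exists_comp_eq (LinearMap.lcomp A C f) (homEval A C E P₀ w)
      (fun φ hφ => by
        have h2 : LinearMap.ker g ≤ LinearMap.ker φ := by
          intro x hx
          obtain ⟨y, rfl⟩ := (hfg x).1 hx
          exact LinearMap.congr_fun hφ y
        let e := g.quotKerEquivOfSurjective hg
        have h3 := LinearMap.congr_fun hz (((LinearMap.ker g).liftQ φ h2) ∘ₗ e.symm.toLinearMap)
        have h4 : LinearMap.lcomp A C g (((LinearMap.ker g).liftQ φ h2) ∘ₗ e.symm.toLinearMap)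
            = φ := by
          ext x
          have : e.symm (g x) = Submodule.Quotient.mk x := by
            rw [LinearEquiv.symm_apply_eq]; rfl
          simp [this]
        rw [LinearMap.comp_apply, h4] at h3
        exact h3)
    obtain ⟨v, rfl⟩ := h₁.2 ψ
    rw [← homEval_natural] at hψ
    rw [← h₀.1 hψ]
    exact (lTensor_exact (C →ₗ[A] E) hfg hg).apply_apply_eq_zero v
  · intro y
    obtain ⟨ψ, hψ⟩ := Module.Injective.exists_comp_eq (LinearMap.lcomp A C g) y
      (fun φ hφ => by
        have : φ = 0 := by
          ext x
          obtain ⟨x, rfl⟩ := hg x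
          exact LinearMap.congr_fun hφ x
        rw [this]
        exact zero_mem _)
    obtain ⟨w, rfl⟩ := h₀.2 ψ
    exact ⟨g.lTensor _ w, by rw [homEval_natural, hψ]⟩

variable [IsNoetherianRing A]

lemma homEval_bijective_of_finite [Module.Injective A E] (N : Type u) [AddCommGroup N]
    [Module A N] [Module.Finite A N] : Function.Bijective (homEval A C E N) := by
  obtain ⟨k, g, hg⟩ := Module.Finite.exists_fin' A N
  obtain ⟨l, f, hf⟩ := Module.Finite.exists_fin' A (LinearMap.ker g)
  refine homEval_bijective (f := (LinearMap.ker g).subtype ∘ₗ f) hg ?_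
    (homEval_bijective_pi A C E l) (homEval_bijective_pi A C E k)
  rw [LinearMap.exact_iff, LinearMap.range_comp, LinearMap.range_eq_top.2 hf, Submodule.map_top,
    Submodule.range_subtype]

/-- The duality `Tor_i(N, Hom(C, E)) = Hom(Ext^i(N, C), E)` for `E = E(A ⧸ p)` and `i ≥ 1`, at the
level of vanishing: the left side is replaced by its character module `Ext^i(Hom(C, E), N⁺)`, and
`Hom(-, E)` detects the support at `p`. -/
lemma extVanish_characterModule_iff (p : Ideal A) [p.IsPrime]
    (hE : IsInjectiveHull A (A ⧸ p) E) (i : ℕ) :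
    ∀ (N : Type u) [AddCommGroup N] [Module A N] [Module.Finite A N],
      ExtVanish (⊥ : Submonoid A) (C →ₗ[A] E) (CharacterModule N) (i + 1) ↔
        ExtVanish p.primeCompl N C (i + 1) := by
  have := hE.1
  induction i with
  | zero =>
    intro N _ _ _
    obtain ⟨k, g, hg⟩ := Module.Finite.exists_fin' A N
    have hfg := LinearMap.exact_subtype_ker_map g
    have hf := Submodule.injective_subtype (LinearMap.ker g)
    rw [extVanish_characterModule_one_iff hf hg hfg, extVanish_one_iff_of_projective hf hg hfg]
    set f := (LinearMap.ker g).subtype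
    have hY := hom_injectiveHull_eq_zero_iff p hE
      ((LinearMap.ker g →ₗ[A] C) ⧸ LinearMap.range (LinearMap.lcomp A C f))
    have hR : (∀ φ : LinearMap.ker g →ₗ[A] C, ∃ s ∈ p.primeCompl,
        ∃ ψ : (Fin k → A) →ₗ[A] C, ψ ∘ₗ f = s • φ) ↔
        ∀ y : (LinearMap.ker g →ₗ[A] C) ⧸ LinearMap.range (LinearMap.lcomp A C f),
          ∃ s ∈ p.primeCompl, s • y = 0 := by
      rw [(Submodule.Quotient.mk_surjective _).forall]
      simp_rw [← Submodule.Quotient.mk_smul, Submodule.Quotient.mk_eq_zero]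
      rfl
    rw [hR, ← hY, injective_iff_map_eq_zero]
    have hk := homEval_bijective_of_finite (A := A) (C := C) (E := E) (LinearMap.ker g)
    have hF := homEval_bijective_of_finite (A := A) (C := C) (E := E) (Fin k → A)
    constructor
    · intro h y
      obtain ⟨z, hz⟩ := hk.2 (y ∘ₗ Submodule.mkQ _)
      have hz0 : z = 0 := by
        apply h
        apply hF.1
        rw [homEval_natural, hz, map_zero]
        ext ψ
        have : Submodule.Quotient.mk (p := LinearMap.range (LinearMap.lcomp A C f))
          (LinearMap.lcomp A C f ψ) = 0 := (Submodule.Quotient.mk_eq_zero _).2 ⟨ψ, rfl⟩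
        change y (Submodule.Quotient.mk (LinearMap.lcomp A C f ψ)) = 0
        rw [this, map_zero]
      rw [hz0, map_zero] at hz
      ext x
      exact (LinearMap.congr_fun hz x).symm
    · intro h z hz
      have h1 := homEval_natural A C E f z
      rw [hz, map_zero] at h1
      apply hk.1
      rw [map_zero]
      have h2 := h (Submodule.liftQ _ (homEval A C E _ z) (by
        rintro _ ⟨ψ, rfl⟩
        exact (LinearMap.congr_fun h1 ψ).symm))
      ext φ
      exact LinearMap.congr_fun h2 (Submodule.Quotient.mk φ)
  | succ i ih =>
    intro N _ _ _
    obtain ⟨k, g, hg⟩ := Module.Finite.exists_fin' A N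
    have hfg := LinearMap.exact_subtype_ker_map g
    have hf := Submodule.injective_subtype (LinearMap.ker g)
    rw [extVanish_characterModule_succ_iff hf hg hfg, extVanish_succ_iff_of_projective hf hg hfg]
    exact ih _

/-- For `E = E(A ⧸ p)` the flat dimension of `Hom(C, E)` is read off from the vanishing of
`Ext(A ⧸ I, C)_p`. -/
lemma flatDim_hom_le_iff (p : Ideal A) [p.IsPrime] (hE : IsInjectiveHull A (A ⧸ p) E) (n : ℕ) :
    flatDim A (C →ₗ[A] E) ≤ n ↔ ∀ I : Ideal A, ExtVanish p.primeCompl (A ⧸ I) C (n + 1) := by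
  rw [flatDim_le_iff]
  exact forall_congr' fun I => extVanish_characterModule_iff p hE n _

end

/-! ### Existence of injective hulls -/

section

variable {A : Type u} [CommRing A]

lemma exists_maximal_disjoint {J : Type u} [AddCommGroup J] [Module A J] (a b : Submodule A J)
    (hab : Disjoint a b) : ∃ m, a ≤ m ∧ Disjoint m b ∧ ∀ m', m ≤ m' → Disjoint m' b → m' ≤ m := by
  obtain ⟨m, ham, hm⟩ := zorn_le_nonempty₀ {x : Submodule A J | Disjoint x b} (by
    intro c hc hchain y hy
    refine ⟨sSup c, ?_, fun z hz => le_sSup hz⟩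
    exact (hchain.directedOn.disjoint_sSup_left).2 fun x hx => hc hx) a hab
  exact ⟨m, ham, hm.1, fun m' h1 h2 => hm.2 h2 h1⟩

/-- Existence of injective hulls: inside an injective module `J ⊇ N`, let `K` be a complement
of `N`, and let the hull be a complement of `K` containing `N`; it is a direct summand of `J`. -/
lemma exists_isInjectiveHull (N : Type u) [AddCommGroup N] [Module A N] :
    ∃ (E : Type u) (_ : AddCommGroup E) (_ : Module A E), IsInjectiveHull A N E := by
  obtain ⟨J', hJ', j', hj'⟩ := (EnoughInjectives.presentation (ModuleCat.of A N)).some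
  let J : Type u := J'
  let j : N →ₗ[A] J := j'.hom
  have hj : Function.Injective j := (ModuleCat.mono_iff_injective j').1 hj'
  have hJ : Module.Injective A J := (Module.injective_iff_injective_object A J).2 hJ'
  obtain ⟨K, -, hKN, hKmax⟩ := exists_maximal_disjoint (⊥ : Submodule A J) (LinearMap.range j)
    disjoint_bot_left
  obtain ⟨E, hNE, hEK, hEmax⟩ := exists_maximal_disjoint (LinearMap.range j) K hKN.symm
  have hess : ∀ L : Submodule A J, L ≤ E → Disjoint L (LinearMap.range j) → L = ⊥ := by
    intro L hL hLN
    have h1 : Disjoint (K ⊔ L) (LinearMap.range j) := by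
      rw [Submodule.disjoint_def]
      intro x hx hxN
      obtain ⟨k, hk, l, hl, rfl⟩ := Submodule.mem_sup.1 hx
      have hkE : k ∈ E := by
        have := E.sub_mem (hNE hxN) (hL hl)
        rwa [add_sub_cancel_right] at this
      have hk0 := Submodule.disjoint_def.1 hEK k hkE hk
      subst hk0
      rw [zero_add] at hxN ⊢
      exact Submodule.disjoint_def.1 hLN l hl hxN
    have h2 : L ≤ K := le_sup_right.trans (hKmax _ le_sup_left h1)
    exact le_bot_iff.1 (hEK hL h2)
  have hKmax' : ∀ m', K ≤ m' → Disjoint m' E → m' ≤ K := fun m' h1 h2 =>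
    hKmax m' h1 (h2.mono_right hNE)
  -- extend the inclusion of `E` to `J ⧸ K`
  obtain ⟨h, hh⟩ := Module.Injective.exists_comp_eq (K.mkQ ∘ₗ E.subtype) E.subtype (by
    rintro ⟨x, hx⟩ hxK
    have : x ∈ K := (Submodule.Quotient.mk_eq_zero K).1 hxK
    have hx0 := Submodule.disjoint_def.1 hEK x hx this
    subst hx0
    exact zero_mem _)
  have hhE : ∀ x ∈ E, h (K.mkQ x) = x := fun x hx => LinearMap.congr_fun hh ⟨x, hx⟩
  let H : J →ₗ[A] J := h ∘ₗ K.mkQ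
  have hkerH : LinearMap.ker H ≤ K := by
    refine hKmax' _ (fun x hx => ?_) ?_
    · rw [LinearMap.mem_ker, LinearMap.comp_apply, Submodule.mkQ_apply,
        (Submodule.Quotient.mk_eq_zero K).2 hx, map_zero]
    · rw [Submodule.disjoint_def]
      intro x hx hxE
      exact (hhE x hxE).symm.trans hx
  have hrange : LinearMap.range H ≤ E := by
    refine hEmax _ (fun x hx => ⟨x, hhE x hx⟩) ?_
    rw [Submodule.disjoint_def]
    rintro _ ⟨y, rfl⟩ hyK
    have h3 : (Submodule.comap H K) ≤ K := by
      refine hKmax' _ (fun x hx => ?_) ?_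
      · rw [Submodule.mem_comap, LinearMap.comp_apply, Submodule.mkQ_apply,
          (Submodule.Quotient.mk_eq_zero K).2 hx, map_zero]
        exact zero_mem _
      · rw [Submodule.disjoint_def]
        intro x hx hxE
        have hx' : H x ∈ K := hx
        rw [show H x = x from hhE x hxE] at hx'
        exact Submodule.disjoint_def.1 hEK x hxE hx'
    rw [LinearMap.comp_apply, Submodule.mkQ_apply,
      (Submodule.Quotient.mk_eq_zero K).2 (h3 hyK), map_zero]
  let r : J →ₗ[A] E := H.codRestrict E fun x => hrange ⟨x, rfl⟩
  have hr : ∀ x : E, r x = x := fun x => Subtype.ext (hhE x x.2)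
  refine ⟨E, inferInstance, inferInstance, ⟨fun X Y _ _ _ _ f hf g => ?_⟩,
    j.codRestrict E fun x => hNE ⟨x, rfl⟩, fun x y hxy => hj (congrArg Subtype.val hxy), ?_⟩
  · obtain ⟨g', hg'⟩ := Module.Injective.out f hf (E.subtype ∘ₗ g)
    exact ⟨r ∘ₗ g', fun x => by rw [LinearMap.comp_apply, hg']; exact hr _⟩
  · intro L hL hL'
    apply hL
    refine Submodule.map_injective_of_injective (Submodule.injective_subtype E)
      ((hess _ (Submodule.map_subtype_le E L) ?_).trans (Submodule.map_bot _).symm)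
    rw [Submodule.disjoint_def]
    rintro _ ⟨x, hx, rfl⟩ ⟨y, hy⟩
    have : x ∈ L ⊓ LinearMap.range (j.codRestrict E fun x => hNE ⟨x, rfl⟩) :=
      ⟨hx, y, Subtype.ext hy⟩
    rw [hL'] at this
    rw [(Submodule.mem_bot A).1 this]
    rfl

end

/-! ### Heights of primes and the vanishing range of `Ext` -/

section Heights

variable {R : Type u} [CommRing R]

/-- Nakayama's lemma at the prime `q`. -/
lemma torsion_of_forall_smul_eq {W : Type*} [AddCommGroup W] [Module R W] [Module.Finite R W]
    (q : Ideal R) [hq : q.IsPrime] {x : R} (hx : x ∈ q)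
    (h : ∀ w : W, ∃ s ∈ q.primeCompl, ∃ w' : W, s • w = x • w') (w : W) :
    ∃ s ∈ q.primeCompl, s • w = 0 := by
  have h1 : (⟨q, hq⟩ : PrimeSpectrum R) ∉ Module.support R (QuotSMulTop x W) := by
    rw [Module.notMem_support_iff']
    intro m
    obtain ⟨w, rfl⟩ := Submodule.Quotient.mk_surjective _ m
    obtain ⟨s, hs, w', hw'⟩ := h w
    refine ⟨s, hs, ?_⟩
    rw [← Submodule.Quotient.mk_smul, hw', Submodule.Quotient.mk_eq_zero]
    exact Submodule.smul_mem_pointwise_smul _ _ _ trivial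
  rw [Module.support_quotSMulTop, Set.mem_inter_iff, not_and] at h1
  have h2 : (⟨q, hq⟩ : PrimeSpectrum R) ∉ Module.support R W := fun hW =>
    h1 hW (by simpa [PrimeSpectrum.mem_zeroLocus] using hx)
  exact Module.notMem_support_iff'.1 h2 w

lemma ext_torsion_of_nonZeroDivisor {T : ShortComplex (ModuleCat.{u} R)} (hT : T.ShortExact)
    {Y : ModuleCat.{u} R} {i : ℕ} {x : R} (f : T.X₁ ≅ T.X₂) (hf : T.f = x • f.hom)
    {S : Submonoid R} (h₃ : ∀ e : Abelian.Ext T.X₃ Y (i + 1), ∃ s ∈ S, s • e = 0)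
    (e : Abelian.Ext T.X₁ Y i) : ∃ s ∈ S, ∃ e' : Abelian.Ext T.X₁ Y i, s • e = x • e' := by
  obtain ⟨s, hs, he⟩ := h₃ (hT.extClass.comp e (add_comm 1 i))
  rw [← Abelian.Ext.comp_smul] at he
  obtain ⟨e', he'⟩ := Abelian.Ext.contravariant_sequence_exact₁ hT _ _ _ he
  refine ⟨s, hs, (Abelian.Ext.mk₀ f.hom).comp e' (zero_add i), ?_⟩
  rw [← he', hf, Abelian.Ext.mk₀_smul, Abelian.Ext.smul_comp]

section

variable {C : Type u} [AddCommGroup C] [Module R C]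

/-- The exact sequence `0 → R ⧸ (J : x) → R ⧸ J → R ⧸ (J + xR) → 0`. -/
lemma colon_sequence (J : Ideal R) (x : R) :
    ∃ (f : (R ⧸ J.colon {x}) →ₗ[R] R ⧸ J) (g : (R ⧸ J) →ₗ[R] R ⧸ (J ⊔ Ideal.span {x})),
      Function.Injective f ∧ Function.Surjective g ∧ Function.Exact f g := by
  have hK : J.colon {x} = Submodule.comap (LinearMap.mulRight R x) J := by
    ext r
    simp [Submodule.mem_colon_singleton]
  refine ⟨Submodule.mapQ _ _ (LinearMap.mulRight R x) hK.le,
    Submodule.factor (le_sup_left : J ≤ J ⊔ Ideal.span {x}), ?_, ?_, ?_⟩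
  · rw [← LinearMap.ker_eq_bot, Submodule.ker_mapQ, ← hK, Submodule.mkQ_map_self]
  · exact Submodule.factor_surjective _
  · intro y
    obtain ⟨y, rfl⟩ := Submodule.Quotient.mk_surjective _ y
    change Submodule.Quotient.mk y = 0 ↔ _
    rw [Submodule.Quotient.mk_eq_zero, Submodule.mem_sup]
    constructor
    · rintro ⟨j, hj, z, hz, rfl⟩
      obtain ⟨a, rfl⟩ := Ideal.mem_span_singleton'.1 hz
      refine ⟨Submodule.Quotient.mk a, ?_⟩
      change Submodule.Quotient.mk (a * x) = _
      rw [Submodule.Quotient.eq]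
      simpa using hj
    · rintro ⟨a, ha⟩
      obtain ⟨a, rfl⟩ := Submodule.Quotient.mk_surjective _ a
      change Submodule.Quotient.mk (a * x) = _ at ha
      rw [eq_comm, Submodule.Quotient.eq] at ha
      exact ⟨_, ha, a * x, Ideal.mem_span_singleton'.2 ⟨a, rfl⟩, by ring⟩

variable [IsNoetherianRing R] [Module.Finite R C]

/-- For a prime `P ⊆ q` and `x ∈ q \ P`, nonvanishing of `Ext^i(R ⧸ P, C)_q` forces that of
`Ext^{i+1}(R ⧸ (P + xR), C)_q`. -/
lemma ExtVanish.of_sup_span (q : Ideal R) [q.IsPrime] (P : Ideal R) [hP : P.IsPrime] {x : R}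
    (hx : x ∈ q) (hxP : x ∉ P) {i : ℕ}
    (h : ExtVanish q.primeCompl (R ⧸ (P ⊔ Ideal.span {x})) C (i + 1)) :
    ExtVanish q.primeCompl (R ⧸ P) C i := by
  have hf : Function.Injective (LinearMap.lsmul R (R ⧸ P) x) := by
    rw [injective_iff_map_eq_zero]
    intro y hy
    obtain ⟨y, rfl⟩ := Ideal.Quotient.mk_surjective y
    have : x * y ∈ P := Ideal.Quotient.eq_zero_iff_mem.1 hy
    exact Ideal.Quotient.eq_zero_iff_mem.2 ((hP.mem_or_mem this).resolve_left hxP)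
  have hfg : Function.Exact (LinearMap.lsmul R (R ⧸ P) x)
      (Submodule.factor (le_sup_left : P ≤ P ⊔ Ideal.span {x})) := by
    intro y
    obtain ⟨y, rfl⟩ := Submodule.Quotient.mk_surjective _ y
    change Submodule.Quotient.mk y = 0 ↔ _
    rw [Submodule.Quotient.mk_eq_zero, Submodule.mem_sup]
    constructor
    · rintro ⟨j, hj, z, hz, rfl⟩
      obtain ⟨a, rfl⟩ := Ideal.mem_span_singleton'.1 hz
      refine ⟨Submodule.Quotient.mk a, ?_⟩
      change Submodule.Quotient.mk (x * a) = _
      rw [Submodule.Quotient.eq, mul_comm]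
      simpa using hj
    · rintro ⟨a, ha⟩
      obtain ⟨a, rfl⟩ := Submodule.Quotient.mk_surjective _ a
      change Submodule.Quotient.mk (x * a) = _ at ha
      rw [eq_comm, Submodule.Quotient.eq] at ha
      exact ⟨_, ha, x * a, Ideal.mem_span_singleton'.2 ⟨a, mul_comm _ _⟩, by ring⟩
  have h1 := ext_torsion_of_nonZeroDivisor (x := x)
    (shortExact_of hf (Submodule.factor_surjective _) hfg) (Iso.refl _) rfl h
  have := ModuleCat.finite_ext R (ModuleCat.of R (R ⧸ P)) (ModuleCat.of R C) i
  exact torsion_of_forall_smul_eq q hx h1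

/-- Filtering `R ⧸ I` by quotients `R ⧸ P` with `P` prime, nonvanishing of `Ext^i(R ⧸ I, C)_q`
propagates to `Ext^j(R ⧸ q, C)_q` for some `j ≥ i`. -/
lemma exists_not_extVanish (q : Ideal R) [hq : q.IsPrime] (I : Ideal R) :
    ∀ i, ¬ ExtVanish q.primeCompl (R ⧸ I) C i →
      ∃ j, i ≤ j ∧ ¬ ExtVanish q.primeCompl (R ⧸ q) C j := by
  induction I using WellFoundedGT.induction with
  | _ I ih =>
    intro i hi
    by_cases hIq : I ≤ q
    swap
    · obtain ⟨s, hsI, hsq⟩ := SetLike.not_le_iff_exists.1 hIq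
      refine (hi (.of_smul (s := s) hsq (fun y => ?_) i)).elim
      obtain ⟨y, rfl⟩ := Ideal.Quotient.mk_surjective y
      exact Ideal.Quotient.eq_zero_iff_mem.2 (I.mul_mem_right y hsI)
    by_cases hI : I.IsPrime
    · rcases eq_or_lt_of_le hIq with rfl | hlt
      · exact ⟨i, le_rfl, hi⟩
      · obtain ⟨x, hxq, hxI⟩ := SetLike.exists_of_lt hlt
        have h1 : ¬ ExtVanish q.primeCompl (R ⧸ (I ⊔ Ideal.span {x})) C (i + 1) :=
          fun h => hi (.of_sup_span q I hxq hxI h)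
        obtain ⟨j, hj, h2⟩ := ih (I ⊔ Ideal.span {x}) (by
          refine lt_of_le_of_ne le_sup_left fun h => hxI ?_
          rw [h]
          exact Ideal.mem_sup_right (Ideal.mem_span_singleton_self x)) (i + 1) h1
        exact ⟨j, by omega, h2⟩
    · have hne : I ≠ ⊤ := fun h => hq.ne_top (top_le_iff.1 (h ▸ hIq))
      rw [Ideal.isPrime_iff] at hI
      push Not at hI
      obtain ⟨y, x, hyx, hy, hx⟩ := hI hne
      obtain ⟨f, g, hf, hg, hfg⟩ := colon_sequence I x
      by_cases h1 : ExtVanish q.primeCompl (R ⧸ I.colon {x}) C i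
      · refine ih (I ⊔ Ideal.span {x}) ?_ i fun h3 => hi (.mid hf hg hfg h1 h3)
        refine lt_of_le_of_ne le_sup_left fun h => hx ?_
        rw [h]
        exact Ideal.mem_sup_right (Ideal.mem_span_singleton_self x)
      · refine ih (I.colon {x}) (lt_of_le_of_ne (fun r hr => ?_) fun h => hy ?_) i h1
        · exact Submodule.mem_colon_singleton.2 (I.mul_mem_right x hr)
        · rw [h]
          exact Submodule.mem_colon_singleton.2 hyx

omit [IsNoetherianRing R] in
/-- `Hom(R, C)_q = C_q` is nonzero as soon as `C` is faithful. -/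
lemma not_extVanish_zero (hC : Function.Injective (fun r : R => r • (LinearMap.id : C →ₗ[R] C)))
    (q : Ideal R) [hq : q.IsPrime] : ¬ ExtVanish q.primeCompl (R ⧸ (⊥ : Ideal R)) C 0 := by
  intro h
  have h1 : (⟨q, hq⟩ : PrimeSpectrum R) ∉ Module.support R C := by
    rw [Module.notMem_support_iff']
    intro c
    let φ : (R ⧸ (⊥ : Ideal R)) →ₗ[R] C :=
      Submodule.liftQ _ (LinearMap.toSpanSingleton R C c) bot_le
    obtain ⟨s, hs, he⟩ := h (Abelian.Ext.mk₀ (ModuleCat.ofHom φ))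
    refine ⟨s, hs, ?_⟩
    rw [← Abelian.Ext.mk₀_smul, Abelian.Ext.mk₀_eq_zero_iff] at he
    have h2 := congrArg (fun f => f.hom (Submodule.Quotient.mk (1 : R))) he
    change s • ((1 : R) • c) = 0 at h2
    rwa [one_smul] at h2
  rw [Module.mem_support_iff_of_finite] at h1
  obtain ⟨s, hs, hsq⟩ := SetLike.not_le_iff_exists.1 h1
  refine hsq ?_
  have : s = 0 := hC (by
    ext c
    simpa using Module.mem_annihilator.1 hs c)
  rw [this]
  exact q.zero_mem

/-- The vanishing range of `Ext(-, C)_q` is bounded below by the height of `q`. -/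
lemma exists_not_extVanish_of_le_height
    (hC : Function.Injective (fun r : R => r • (LinearMap.id : C →ₗ[R] C))) (k : ℕ) :
    ∀ (q : Ideal R) [q.IsPrime], (k : ℕ∞) ≤ primeHeight R q →
      ∃ j, k ≤ j ∧ ¬ ExtVanish q.primeCompl (R ⧸ q) C j := by
  induction k with
  | zero => exact fun q _ _ => exists_not_extVanish q ⊥ 0 (not_extVanish_zero hC q)
  | succ k ih =>
    intro q hq hk
    have h1 : ¬ Order.height (⟨q, hq⟩ : PrimeSpectrum R) ≤ k := by
      intro h
      have := hk.trans h
      norm_cast at this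
      omega
    rw [Order.height_le_coe_iff] at h1
    push Not at h1
    obtain ⟨⟨q', hq'⟩, hlt, hle⟩ := h1
    replace hlt : q' < q := hlt
    obtain ⟨j, hj, hn⟩ := ih q' hle
    obtain ⟨x, hxq, hx⟩ := SetLike.exists_of_lt hlt
    have h2 : ¬ ExtVanish q.primeCompl (R ⧸ (q' ⊔ Ideal.span {x})) C (j + 1) := fun h =>
      hn (ExtVanish.mono (S := q.primeCompl)
        (fun s (hs : s ∉ q) => show s ∉ q' from fun hs' => hs (hlt.le hs'))
        (.of_sup_span q q' hxq hx h))
    obtain ⟨j', hj', hn'⟩ := exists_not_extVanish q _ _ h2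
    exact ⟨j', by omega, hn'⟩

/-- An element of `p` avoiding the associated primes of `R ⧸ J` inside `p` is a nonzerodivisor on
`(R ⧸ J)_p`. -/
lemma exists_smul_mem_of_notMem_associatedPrimes (p J : Ideal R) [hp : p.IsPrime] {x : R}
    (hx : ∀ P ∈ associatedPrimes R (R ⧸ J), P ≤ p → x ∉ P) {r : R} (hr : r ∈ J.colon {x}) :
    ∃ s ∈ p.primeCompl, s * r ∈ J := by
  by_contra! hcon
  have hann : (J.colon {r} : Ideal R) ≤ p := by
    intro s hs
    by_contra hsp
    exact hcon s hsp (Submodule.mem_colon_singleton.1 hs)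
  obtain ⟨f, g, hf, -, -⟩ := colon_sequence J r
  obtain ⟨P, hP, hPp⟩ := Ideal.exists_minimalPrimes_le hann
  have h1 : P ∈ associatedPrimes R (R ⧸ (J.colon {r} : Ideal R)) := by
    apply Module.associatedPrimes.minimalPrimes_annihilator_subset_associatedPrimes
    rwa [Ideal.annihilator_quotient]
  refine hx P (associatedPrimes.subset_of_injective hf h1) hPp (hP.1.2 ?_)
  rw [Submodule.mem_colon_singleton] at hr ⊢
  simpa [mul_comm] using hr

omit [Module.Finite R C] in
/-- The construction of an ideal whose generators form a regular sequence of length `t` in `R_p`;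
a prime of `R_p` over it has height at least `t`. -/
lemma exists_regular_ideal (p : Ideal R) [hp : p.IsPrime] (d : ℕ)
    (hV : ∀ i, d < i → ∀ I : Ideal R, ExtVanish p.primeCompl (R ⧸ I) C i)
    (hd : ¬ ExtVanish p.primeCompl (R ⧸ p) C d) (t : ℕ) (ht : t ≤ d) :
    ∃ J : Ideal R, J ≤ p ∧ (∀ i, t < i → ExtVanish p.primeCompl (R ⧸ J) C i) ∧
      ∀ (P : Ideal R) [P.IsPrime], J ≤ P → P ≤ p → (t : ℕ∞) ≤ primeHeight R P := by
  induction t with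
  | zero =>
    refine ⟨⊥, bot_le, fun i hi => ?_, fun P _ _ _ => by simp⟩
    obtain ⟨i, rfl⟩ := Nat.exists_eq_succ_of_ne_zero hi.ne'
    exact (ExtVanish.of_projective (N₁ := R) i).congr (Submodule.quotEquivOfEqBot ⊥ rfl).symm
  | succ t ih =>
    obtain ⟨J, hJp, hJ, hht⟩ := ih (by omega)
    have hpass : p ∉ associatedPrimes R (R ⧸ J) := by
      intro h
      rw [AssociatedPrimes.mem_iff, isAssociatedPrime_iff] at h
      obtain ⟨-, y, hy⟩ := h
      obtain ⟨y, rfl⟩ := Ideal.Quotient.mk_surjective y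
      have hpy : J.colon {y} = p := by
        rw [hy]
        ext r
        rw [Submodule.mem_colon_singleton, Submodule.mem_colon_singleton, Submodule.mem_bot]
        exact Ideal.Quotient.eq_zero_iff_mem.symm
      have hseq := colon_sequence J y
      rw [hpy] at hseq
      obtain ⟨f, g, hf, hg, hfg⟩ := hseq
      exact hd (.left hf hg hfg (hJ d (by omega)) (hV (d + 1) (by omega) _))
    obtain ⟨x, hxp, hx⟩ : ∃ x ∈ p, ∀ P ∈ associatedPrimes R (R ⧸ J), P ≤ p → x ∉ P := by
      by_contra! hcon
      have hfin := (associatedPrimes.finite R (R ⧸ J)).subset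
        (Set.sep_subset _ (fun P => P ≤ p))
      have h1 := (Ideal.subset_union_prime (s := hfin.toFinset) (f := id) (I := p) ⊥ ⊥
        (fun P hP _ _ => (hfin.mem_toFinset.1 hP).1.isPrime)).1 (by
          intro x hx
          obtain ⟨P, hP, hPp, hxP⟩ := hcon x hx
          simp only [Set.mem_iUnion]
          exact ⟨P, hfin.mem_toFinset.2 ⟨hP, hPp⟩, hxP⟩)
      obtain ⟨P, hP, hpP⟩ := h1
      obtain ⟨hP, hPp⟩ := hfin.mem_toFinset.1 hP
      exact hpass (le_antisymm hpP hPp ▸ hP)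
    have hJle : J ≤ J.colon {x} := fun r hr =>
      Submodule.mem_colon_singleton.2 (J.mul_mem_right x hr)
    refine ⟨J ⊔ Ideal.span {x}, sup_le hJp ((Ideal.span_singleton_le_iff_mem _).2 hxp),
      fun i hi => ?_, fun P hP hJP hPp => ?_⟩
    · obtain ⟨i, rfl⟩ := Nat.exists_eq_succ_of_ne_zero (by omega : i ≠ 0)
      obtain ⟨f, g, hf, hg, hfg⟩ := colon_sequence J x
      refine .right hf hg hfg ?_ (hJ _ (by omega))
      -- `R ⧸ J` and `R ⧸ (J : x)` agree at `p`.
      have hq := Submodule.factor_surjective hJle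
      have hK : ∃ s ∈ p.primeCompl, ∀ k : LinearMap.ker (Submodule.factor hJle), s • k = 0 := by
        have hsup : (⟨p, hp⟩ : PrimeSpectrum R) ∉
            Module.support R (LinearMap.ker (Submodule.factor hJle)) := by
          rw [Module.notMem_support_iff']
          rintro ⟨k, hk⟩
          obtain ⟨k, rfl⟩ := Submodule.Quotient.mk_surjective _ k
          obtain ⟨s, hs, hsk⟩ := exists_smul_mem_of_notMem_associatedPrimes p J hx
            ((Submodule.Quotient.mk_eq_zero _).1 hk)
          exact ⟨s, hs, Subtype.ext ((Submodule.Quotient.mk_eq_zero _).2 hsk)⟩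
        rw [Module.mem_support_iff_of_finite] at hsup
        obtain ⟨s, hs, hsq⟩ := SetLike.not_le_iff_exists.1 hsup
        exact ⟨s, hsq, fun k => Module.mem_annihilator.1 hs k⟩
      obtain ⟨s, hs, hsk⟩ := hK
      obtain ⟨i, rfl⟩ := Nat.exists_eq_succ_of_ne_zero (by omega : i ≠ 0)
      exact .right (Submodule.injective_subtype _) hq (LinearMap.exact_subtype_ker_map _)
        (.of_smul hs hsk i) (hJ _ (by omega))
    · obtain ⟨P', hP', hPP⟩ := Ideal.exists_minimalPrimes_le (le_sup_left.trans hJP)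
      have hP'prime := hP'.1.1
      have hass : P' ∈ associatedPrimes R (R ⧸ J) := by
        apply Module.associatedPrimes.minimalPrimes_annihilator_subset_associatedPrimes
        rwa [Ideal.annihilator_quotient]
      have hlt : P' < P := by
        refine lt_of_le_of_ne hPP ?_
        rintro rfl
        exact hx _ hass hPp (hJP (Ideal.mem_sup_right (Ideal.mem_span_singleton_self x)))
      have h1 : (⟨P', hP'prime⟩ : PrimeSpectrum R) < ⟨P, hP⟩ := hlt
      have h2 := Order.height_add_one_le h1
      refine le_trans ?_ h2
      push_cast
      gcongr
      exact hht P' hP'.1.2 (hPP.trans hPp)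

/-- A finite flat dimension `n` of `Hom(C, E(R ⧸ p))` is the largest degree with `Ext^n(R ⧸ p, C)_p ≠ 0`.
It is at most `ht p` because `R_p` then has a regular sequence of length `n`, and at least `ht p`
because nonvanishing propagates up a chain of primes. -/
lemma flatDim_eq_primeHeight
    (hC : Function.Injective (fun r : R => r • (LinearMap.id : C →ₗ[R] C)))
    (p : Ideal R) [p.IsPrime] {E : Type u} [AddCommGroup E] [Module R E]
    (hE : IsInjectiveHull R (R ⧸ p) E) (h : flatDim R (C →ₗ[R] E) < ⊤) :
    flatDim R (C →ₗ[R] E) = primeHeight R p := by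
  obtain ⟨n, hn⟩ := ENat.ne_top_iff_exists.1 h.ne
  have key := flatDim_hom_le_iff (C := C) p hE
  have hV : ∀ i, n < i → ∀ I : Ideal R, ExtVanish p.primeCompl (R ⧸ I) C i := by
    intro i hi
    obtain ⟨i, rfl⟩ := Nat.exists_eq_succ_of_ne_zero (by omega : i ≠ 0)
    refine (key i).1 ?_
    rw [← hn]
    exact_mod_cast (by omega : n ≤ i)
  have hd : ¬ ExtVanish p.primeCompl (R ⧸ p) C n := by
    rcases Nat.eq_zero_or_pos n with rfl | hpos
    · obtain ⟨j, hj, h1⟩ := exists_not_extVanish p ⊥ 0 (not_extVanish_zero hC p)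
      rcases Nat.eq_zero_or_pos j with rfl | hj
      · exact h1
      · exact (h1 (hV j hj p)).elim
    · obtain ⟨k, rfl⟩ := Nat.exists_eq_succ_of_ne_zero hpos.ne'
      have h1 : ¬ ∀ I : Ideal R, ExtVanish p.primeCompl (R ⧸ I) C (k + 1) := by
        rw [← key k, ← hn]
        intro h
        norm_cast at h
        omega
      push Not at h1
      obtain ⟨I, hI⟩ := h1
      obtain ⟨j, hj, h1⟩ := exists_not_extVanish p I _ hI
      rcases Nat.eq_or_lt_of_le hj with rfl | hj
      · exact h1
      · exact (h1 (hV j hj p)).elim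
  rw [← hn]
  apply le_antisymm
  · obtain ⟨J, hJ, -, h1⟩ := exists_regular_ideal p n hV hd n le_rfl
    exact h1 p hJ le_rfl
  · by_contra! hlt
    obtain ⟨j, hj, h1⟩ := exists_not_extVanish_of_le_height hC (n + 1) p (by
      push_cast
      exact Order.add_one_le_of_lt hlt)
    exact h1 (hV j (by omega) p)

omit [Module.Finite R C] in
lemma primeHeight_lt_top (p : Ideal R) [p.IsPrime] : primeHeight R p < ⊤ := by
  have := Ideal.height_ne_top_of_isPrime (I := p)
  rw [PrimeSpectrum.height_eq_orderHeight ⟨p, _⟩] at this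
  exact this.lt_top

end

end Heights

/-! ### Injective dimension of localizations -/

section InjDim

variable {A : Type u} [CommRing A]

lemma exists_injective_embedding (X : Type u) [AddCommGroup X] [Module A X] :
    ∃ (J : Type u) (_ : AddCommGroup J) (_ : Module A J) (_ : Module.Injective A J)
      (j : X →ₗ[A] J), Function.Injective j := by
  obtain ⟨J', hJ', j', hj'⟩ := (EnoughInjectives.presentation (ModuleCat.of A X)).some
  exact ⟨J', inferInstance, inferInstance, (Module.injective_iff_injective_object A J').2 hJ',
    j'.hom, (ModuleCat.mono_iff_injective j').1 hj'⟩

/-- Baer's criterion in all degrees: the injective dimension is detected by a single degree and by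
cyclic modules. -/
lemma extVanish_of_ideal (n : ℕ) :
    ∀ (X : Type u) [AddCommGroup X] [Module A X],
      (∀ I : Ideal A, ExtVanish (⊥ : Submonoid A) (A ⧸ I) X (n + 1)) →
      ∀ (i : ℕ), n ≤ i → ∀ (N : Type u) [AddCommGroup N] [Module A N],
        ExtVanish (⊥ : Submonoid A) N X (i + 1) := by
  induction n with
  | zero =>
    intro X _ _ h i _ N _ _
    have hX : Module.Injective A X := by
      refine Module.Baer.injective fun I φ => ?_
      obtain ⟨s, hs, ψ, hψ⟩ := (extVanish_one_iff_of_projective (g := I.mkQ)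
        (Submodule.injective_subtype _) (Submodule.mkQ_surjective _)
        (LinearMap.exact_subtype_mkQ I)).1 (h I) φ
      rw [Submonoid.mem_bot] at hs
      rw [hs, one_smul] at hψ
      exact ⟨ψ, fun x hx => LinearMap.congr_fun hψ ⟨x, hx⟩⟩
    have : Injective (ModuleCat.of A X) := (Module.injective_iff_injective_object A X).1 hX
    rw [extVanish_bot_iff]
    exact subsingleton_of_forall_eq 0 fun e => Abelian.Ext.eq_zero_of_injective e
  | succ n ih =>
    intro X _ _ h i hi N _ _
    obtain ⟨J, _, _, _, j, hj⟩ := exists_injective_embedding (A := A) X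
    obtain ⟨i, rfl⟩ := Nat.exists_eq_succ_of_ne_zero (by omega : i ≠ 0)
    have hex : Function.Exact j (LinearMap.range j).mkQ := LinearMap.exact_map_mkQ_range j
    refine (extVanish_bot_succ_iff_of_injective hj (Submodule.mkQ_surjective _) hex i).2
      (ih _ (fun I => ?_) i (by omega) N)
    exact (extVanish_bot_succ_iff_of_injective hj (Submodule.mkQ_surjective _) hex n).1 (h I)

lemma injDim_le_iff (X : Type u) [AddCommGroup X] [Module A X] (n : ℕ) :
    injDim A X ≤ n ↔ ∀ I : Ideal A, ExtVanish (⊥ : Submonoid A) (A ⧸ I) X (n + 1) := by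
  constructor
  · intro h I
    rw [extVanish_bot_iff, ← extM_succ_subsingleton_iff]
    have hne : {n : ℕ∞ | ∀ (N : Type u) (_ : AddCommGroup N) (_ : Module A N) (i : ℕ),
        n < i → Subsingleton (extM A N X i)}.Nonempty := ⟨⊤, fun _ _ _ i hi => by simp at hi⟩
    refine csInf_mem hne _ _ _ _ (lt_of_le_of_lt h ?_)
    exact_mod_cast Nat.lt_succ_self n
  · intro h
    refine sInf_le ?_
    intro N _ _ i hi
    obtain ⟨i, rfl⟩ := Nat.exists_eq_succ_of_ne_zero (n := i) (by rintro rfl; simp at hi)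
    rw [Nat.succ_eq_add_one, extM_succ_subsingleton_iff, ← extVanish_bot_iff]
    exact extVanish_of_ideal n X h i (Nat.lt_succ_iff.1 (by exact_mod_cast hi)) N

end InjDim

section Localization

variable {R : Type u} [CommRing R] [IsNoetherianRing R] (S : Submonoid R)

/-- `Ext^i(N, C)` commutes with localization for finite `N`, at the level of vanishing. -/
lemma extVanish_localizedModule_iff {C : Type u} [AddCommGroup C] [Module R C] (i : ℕ) :
    ∀ (N : Type u) [AddCommGroup N] [Module R N] [Module.Finite R N],
      ExtVanish (⊥ : Submonoid (Localization S)) (LocalizedModule S N) (LocalizedModule S C)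
        (i + 1) ↔ ExtVanish S N C (i + 1) := by
  induction i with
  | zero =>
    intro N _ _ _
    obtain ⟨k, g, hg⟩ := Module.Finite.exists_fin' R N
    have hfg := LinearMap.exact_subtype_ker_map g
    have hf := Submodule.injective_subtype (LinearMap.ker g)
    set f := (LinearMap.ker g).subtype
    have hf' := LocalizedModule.map_injective S f hf
    have hg' := LocalizedModule.map_surjective S g hg
    have hex : Function.Exact (LocalizedModule.map S f) (LocalizedModule.map S g) :=
      LocalizedModule.map_exact S f g hfg
    have : Module.Projective (Localization S) (LocalizedModule S (Fin k → R)) := inferInstance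
    rw [extVanish_one_iff_of_projective hf hg hfg,
      extVanish_one_iff_of_projective (N₁ := LocalizedModule S (LinearMap.ker g)) hf' hg' hex]
    have hfpK : Module.FinitePresentation R (LinearMap.ker g) :=
      Module.finitePresentation_of_finite R _
    have hcomp : ∀ ψ : (Fin k → R) →ₗ[R] C,
        LocalizedModule.map S (ψ ∘ₗ f) = LocalizedModule.map S ψ ∘ₗ LocalizedModule.map S f := by
      intro ψ
      ext x
      induction x using LocalizedModule.induction_on with | _ x s =>
      simp [LocalizedModule.map_mk]
    constructor
    · intro h φ
      obtain ⟨s₀, hs₀, ψ', hψ'⟩ := h (LocalizedModule.map S φ)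
      rw [Submonoid.mem_bot] at hs₀
      rw [hs₀, one_smul] at hψ'
      obtain ⟨⟨ψ, s⟩, hs⟩ := IsLocalizedModule.surj S
        (LocalizedModule.map S (M := Fin k → R) (N := C)) ψ'
      have h1 : LocalizedModule.map S (ψ ∘ₗ f) = LocalizedModule.map S (s • φ) := by
        rw [hcomp, ← hs, LinearMap.smul_comp, hψ']
        exact (map_smul (LocalizedModule.map S) (s : R) φ).symm
      obtain ⟨c, hc⟩ := IsLocalizedModule.exists_of_eq (S := S) h1
      refine ⟨c * s, (c * s).2, c • ψ, ?_⟩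
      rw [LinearMap.smul_comp, hc, mul_smul]
      rfl
    · intro h φ'
      obtain ⟨⟨φ, s⟩, hs⟩ := IsLocalizedModule.surj S
        (LocalizedModule.map S (M := LinearMap.ker g) (N := C)) φ'
      obtain ⟨t, ht, ψ, hψ⟩ := h φ
      have h1 : (t * s) • φ' = LocalizedModule.map S ψ ∘ₗ LocalizedModule.map S f := by
        rw [← hcomp, hψ, map_smul, ← hs, mul_smul]
        rfl
      have hu := IsLocalization.map_units (Localization S) (⟨t, ht⟩ * s)
      obtain ⟨v, hv⟩ := hu.exists_left_inv
      refine ⟨1, one_mem _, v • LocalizedModule.map S ψ, ?_⟩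
      rw [LinearMap.smul_comp, ← h1, one_smul, ← algebraMap_smul (Localization S) (t * (s : R)),
        smul_smul]
      exact (congrArg (· • φ') hv).trans (one_smul _ _)
  | succ i ih =>
    intro N _ _ _
    obtain ⟨k, g, hg⟩ := Module.Finite.exists_fin' R N
    have hfg := LinearMap.exact_subtype_ker_map g
    have hf := Submodule.injective_subtype (LinearMap.ker g)
    set f := (LinearMap.ker g).subtype
    have hf' := LocalizedModule.map_injective S f hf
    have hg' := LocalizedModule.map_surjective S g hg
    have hex : Function.Exact (LocalizedModule.map S f) (LocalizedModule.map S g) :=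
      LocalizedModule.map_exact S f g hfg
    rw [extVanish_succ_iff_of_projective hf hg hfg,
      extVanish_succ_iff_of_projective (N₁ := LocalizedModule S (LinearMap.ker g)) hf' hg' hex]
    exact ih _

omit [IsNoetherianRing R] in
/-- Every cyclic module over `S⁻¹R` is the localization of one over `R`. -/
lemma nonempty_localizedModule_quotient_equiv (J : Ideal (Localization S)) :
    Nonempty (LocalizedModule S (R ⧸ J.comap (algebraMap R (Localization S)))
      ≃ₗ[Localization S] Localization S ⧸ J) := by
  set I := J.comap (algebraMap R (Localization S))
  have hJ : Submodule.localized' (Localization S) S (Algebra.linearMap R (Localization S)) I = J := by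
    rw [Ideal.localized'_eq_map]
    exact IsLocalization.map_under S _ J
  have h1 : Nonempty (LocalizedModule S (R ⧸ I) ≃ₗ[Localization S] Localization S ⧸
      Submodule.localized' (Localization S) S (Algebra.linearMap R (Localization S)) I) :=
    ⟨(IsLocalizedModule.linearEquiv S (LocalizedModule.mkLinearMap S (R ⧸ I))
      (Submodule.toLocalizedQuotient' (Localization S) S
        (Algebra.linearMap R (Localization S)) I)).extendScalarsOfIsLocalization S _⟩
  rwa [hJ] at h1

/-- The injective dimension of `S⁻¹C` is read off from the vanishing of `S⁻¹Ext(R ⧸ I, C)`. -/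
lemma injDim_localizedModule_le_iff {C : Type u} [AddCommGroup C] [Module R C] (n : ℕ) :
    injDim (Localization S) (LocalizedModule S C) ≤ n ↔
      ∀ I : Ideal R, ExtVanish S (R ⧸ I) C (n + 1) := by
  rw [injDim_le_iff]
  constructor
  · intro h I
    exact (extVanish_localizedModule_iff S n _).1 (extVanish_of_ideal n _ h n le_rfl _)
  · intro h J
    obtain ⟨e⟩ := nonempty_localizedModule_quotient_equiv S J
    exact ((extVanish_localizedModule_iff S n _).2 (h _)).congr e

lemma IsSemidualizing.localizedModule {C : Type u} [AddCommGroup C] [Module R C]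
    (hC : IsSemidualizing R C) :
    IsSemidualizing (Localization S) (LocalizedModule S C) := by
  obtain ⟨hfin, ⟨hinj, hsurj⟩, hext⟩ := hC
  have hfp : Module.FinitePresentation R C := Module.finitePresentation_of_finite R C
  have hmap : ∀ r : R, LocalizedModule.map S (r • (LinearMap.id : C →ₗ[R] C)) =
      algebraMap R (Localization S) r • LinearMap.id := by
    intro r
    rw [map_smul, LocalizedModule.map_id]
    ext x
    exact (algebraMap_smul (Localization S) r x).symm
  refine ⟨inferInstance, ⟨?_, fun φ => ?_⟩, fun i hi => ?_⟩
  · have h0 : ∀ a : Localization S,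
        a • (LinearMap.id : LocalizedModule S C →ₗ[Localization S] LocalizedModule S C) = 0 →
          a = 0 := by
      intro a ha
      obtain ⟨⟨r, s⟩, hs⟩ := IsLocalization.surj S a
      have h1 : LocalizedModule.map S (r • (LinearMap.id : C →ₗ[R] C)) =
          LocalizedModule.map S (0 : C →ₗ[R] C) := by
        rw [hmap, ← hs, mul_comm, mul_smul, ha, smul_zero, map_zero]
      obtain ⟨c, hc⟩ := IsLocalizedModule.exists_of_eq (S := S) h1
      have h2 : (c : R) * r = 0 := hinj (by
        change ((c : R) * r) • LinearMap.id = (0 : R) • LinearMap.id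
        rw [mul_smul, zero_smul]
        exact hc.trans (smul_zero c))
      have h3 : algebraMap R (Localization S) r = 0 :=
        (IsLocalization.map_eq_zero_iff S _ r).2 ⟨c, h2⟩
      exact ((IsLocalization.map_units (Localization S) s).mul_left_eq_zero).1 (hs.trans h3)
    intro a b hab
    refine sub_eq_zero.1 (h0 _ (LinearMap.ext fun x => ?_))
    exact (sub_smul a b x).trans (sub_eq_zero.2 (LinearMap.congr_fun hab x))
  · obtain ⟨⟨ψ, s⟩, hs⟩ := IsLocalizedModule.surj S (LocalizedModule.map S (M := C) (N := C)) φ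
    obtain ⟨r, hr⟩ := hsurj ψ
    change r • LinearMap.id = ψ at hr
    obtain ⟨v, hv⟩ := (IsLocalization.map_units (Localization S) s).exists_left_inv
    refine ⟨v * algebraMap R (Localization S) r, ?_⟩
    change (v * algebraMap R (Localization S) r) • LinearMap.id = φ
    rw [mul_smul, ← hmap, hr, ← hs]
    change v • ((s : R) • φ) = φ
    rw [← algebraMap_smul (Localization S) (s : R) φ, smul_smul, hv, one_smul]
  · obtain ⟨i, rfl⟩ := Nat.exists_eq_succ_of_ne_zero hi.ne'
    have h1 := (extM_succ_subsingleton_iff C C i).1 (hext (i + 1) hi)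
    exact (extM_succ_subsingleton_iff _ _ i).2 (extVanish_bot_iff.1
      ((extVanish_localizedModule_iff S i C).2 (.of_subsingleton h1)))

end Localization

/-! ### The equivalences -/

/-- Both sides say that `Ext^{n+1}(R ⧸ I, C)_m = 0` for some `n` and all ideals `I`. -/
lemma isDualizing_iff_flatDim_hom_lt_top {R : Type u} [CommRing R] [IsNoetherianRing R]
    {C : Type u} [AddCommGroup C] [Module R C] (hC : IsSemidualizing R C) (m : Ideal R) [m.IsPrime]
    {E : Type u} [AddCommGroup E] [Module R E] (hE : IsInjectiveHull R (R ⧸ m) E) :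
    IsDualizing (Localization.AtPrime m) (LocalizedModule m.primeCompl C) ↔
      flatDim R (C →ₗ[R] E) < ⊤ := by
  have := hC.1
  have hlt : ∀ a : ℕ∞, a < ⊤ ↔ ∃ n : ℕ, a ≤ n := fun a => by
    constructor
    · intro h
      obtain ⟨n, hn⟩ := ENat.ne_top_iff_exists.1 h.ne
      exact ⟨n, hn.ge⟩
    · rintro ⟨n, hn⟩
      exact hn.trans_lt (ENat.natCast_lt_top n)
  rw [IsDualizing, and_iff_right (hC.localizedModule m.primeCompl), hlt, hlt]
  exact exists_congr fun n => (injDim_localizedModule_le_iff m.primeCompl n).trans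
    (flatDim_hom_le_iff m hE n).symm

/-- Finiteness of the flat dimension at `m` passes to the primes below `m`. -/
lemma flatDim_hom_lt_top_of_le {R : Type u} [CommRing R] [IsNoetherianRing R]
    {C : Type u} [AddCommGroup C] [Module R C] [Module.Finite R C] {p m : Ideal R} [p.IsPrime]
    [m.IsPrime] (hpm : p ≤ m) {E E' : Type u} [AddCommGroup E] [Module R E] [AddCommGroup E']
    [Module R E'] (hE : IsInjectiveHull R (R ⧸ m) E) (hE' : IsInjectiveHull R (R ⧸ p) E')
    (h : flatDim R (C →ₗ[R] E) < ⊤) : flatDim R (C →ₗ[R] E') < ⊤ := by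
  obtain ⟨n, hn⟩ := ENat.ne_top_iff_exists.1 h.ne
  refine lt_of_le_of_lt ((flatDim_hom_le_iff p hE' n).2 fun I => ?_) (ENat.natCast_lt_top n)
  exact ((flatDim_hom_le_iff m hE n).1 hn.ge I).mono fun s (hs : s ∉ m) =>
    show s ∉ p from fun hs' => hs (hpm hs')

/-- For a semidualizing module `C` over a Noetherian ring `R`, TFAE:
(i) `C` is pointwise dualizing; (ii)/(iii) `fd_R(Hom_R(C, E(R/m)))` equals `ht(m)` /
is finite for every maximal ideal `m`; (iv)/(v) the same for every prime ideal `p`. -/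
theorem pointwiseDualizing_iff_flatDim_hom_injectiveHull (R : Type u) [CommRing R]
    [IsNoetherianRing R] (C : Type u) [AddCommGroup C] [Module R C]
    (hC : IsSemidualizing R C) :
    (IsPointwiseDualizing R C ↔ ∀ (m : Ideal R) [m.IsPrime], m.IsMaximal →
        ∀ (E : Type u) (_ : AddCommGroup E) (_ : Module R E), IsInjectiveHull R (R ⧸ m) E →
          flatDim R (C →ₗ[R] E) = primeHeight R m) ∧
    (IsPointwiseDualizing R C ↔ ∀ (m : Ideal R) [m.IsPrime], m.IsMaximal →
        ∀ (E : Type u) (_ : AddCommGroup E) (_ : Module R E), IsInjectiveHull R (R ⧸ m) E →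
          flatDim R (C →ₗ[R] E) < ⊤) ∧
    (IsPointwiseDualizing R C ↔ ∀ (p : Ideal R) [p.IsPrime],
        ∀ (E : Type u) (_ : AddCommGroup E) (_ : Module R E), IsInjectiveHull R (R ⧸ p) E →
          flatDim R (C →ₗ[R] E) = primeHeight R p) ∧
    (IsPointwiseDualizing R C ↔ ∀ (p : Ideal R) [p.IsPrime],
        ∀ (E : Type u) (_ : AddCommGroup E) (_ : Module R E), IsInjectiveHull R (R ⧸ p) E →
          flatDim R (C →ₗ[R] E) < ⊤) := by
  have := hC.1
  have hht {p : Ideal R} [p.IsPrime] {E : Type u} [AddCommGroup E] [Module R E]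
      (hE : IsInjectiveHull R (R ⧸ p) E) :
      flatDim R (C →ₗ[R] E) = primeHeight R p ↔ flatDim R (C →ₗ[R] E) < ⊤ :=
    ⟨fun h => h ▸ primeHeight_lt_top p, flatDim_eq_primeHeight hC.2.1.1 p hE⟩
  have h_iii : IsPointwiseDualizing R C ↔ ∀ (m : Ideal R) [m.IsPrime], m.IsMaximal →
      ∀ (E : Type u) (_ : AddCommGroup E) (_ : Module R E), IsInjectiveHull R (R ⧸ m) E →
        flatDim R (C →ₗ[R] E) < ⊤ := by
    constructor
    · intro h m _ hm E _ _ hE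
      exact (isDualizing_iff_flatDim_hom_lt_top hC m hE).1 (h.2 m hm)
    · intro h
      refine ⟨hC, fun m _ hm => ?_⟩
      obtain ⟨E, _, _, hE⟩ := exists_isInjectiveHull (A := R) (R ⧸ m)
      exact (isDualizing_iff_flatDim_hom_lt_top hC m hE).2 (h m hm E _ _ hE)
  have h_v : IsPointwiseDualizing R C ↔ ∀ (p : Ideal R) [p.IsPrime],
      ∀ (E : Type u) (_ : AddCommGroup E) (_ : Module R E), IsInjectiveHull R (R ⧸ p) E →
        flatDim R (C →ₗ[R] E) < ⊤ := by
    rw [h_iii]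
    constructor
    · intro h p hp E' _ _ hE'
      obtain ⟨m, hm, hpm⟩ := Ideal.exists_le_maximal p hp.ne_top
      have := hm.isPrime
      obtain ⟨E, _, _, hE⟩ := exists_isInjectiveHull (A := R) (R ⧸ m)
      exact flatDim_hom_lt_top_of_le hpm hE hE' (h m hm E _ _ hE)
    · exact fun h m _ _ => h m
  refine ⟨h_iii.trans ?_, h_iii, h_v.trans ?_, h_v⟩
  · constructor
    · exact fun h m _ hm E _ _ hE => (hht hE).2 (h m hm E _ _ hE)
    · exact fun h m _ hm E _ _ hE => (hht hE).1 (h m hm E _ _ hE)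
  · constructor
    · exact fun h p _ E _ _ hE => (hht hE).2 (h p E _ _ hE)
    · exact fun h p _ E _ _ hE => (hht hE).1 (h p E _ _ hE)
end
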